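/- arXiv:2204.13000 — 2 statements merged into one kernel-verified Lean document; each statement's English description precedes it below -/
import Mathlib

section
/- Let X be a tree and let f : X → X be a continuous map with zero topological entropy. Then for every chain recurrent point x of f that is not periodic, the ω-limit set ω_f(x) is infinite. -/
open Set Filter Topology Function
open scoped ENNReal

/-- A subset of a topological space is an *arc* if it is homeomorphic to `[0,1]`. -/
def IsArc {X : Type*} [TopologicalSpace X] (A : Set X) : Prop :=
  Nonempty (A ≃ₜ Set.Icc (0 : ℝ) 1)

/-- A point `p` is an *endpoint* of the arc `A` if `p ∈ A` and `A \ {p}` is connected. -/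
def IsArcEndpoint {X : Type*} [TopologicalSpace X] (A : Set X) (p : X) : Prop :=
  p ∈ A ∧ IsConnected (A \ {p})

/-- A subset is a *simple closed curve* if it is homeomorphic to the unit circle. -/
def IsSimpleClosedCurve {X : Type*} [TopologicalSpace X] (S : Set X) : Prop :=
  Nonempty (S ≃ₜ Metric.sphere (0 : ℂ) 1)

/-- A *tree* is a compact connected metric space which is a union of finitely many arcs,
any two of which are disjoint or intersect only in (one or both of) their endpoints,
and which contains no simple closed curve. -/
def IsTree (X : Type*) [MetricSpace X] : Prop :=
  CompactSpace X ∧ ConnectedSpace X ∧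
    (∃ 𝒜 : Finset (Set X), (∀ A ∈ 𝒜, IsArc A) ∧ ⋃₀ (𝒜 : Set (Set X)) = Set.univ ∧
      ∀ A ∈ 𝒜, ∀ B ∈ 𝒜, A ≠ B → ∀ p ∈ A ∩ B, IsArcEndpoint A p ∧ IsArcEndpoint B p) ∧
    ∀ S : Set X, ¬ IsSimpleClosedCurve S

/-- A *dendrite* is a locally connected continuum containing no simple closed curve. -/
def IsDendrite (X : Type*) [MetricSpace X] : Prop :=
  CompactSpace X ∧ ConnectedSpace X ∧ LocallyConnectedSpace X ∧
    ∀ S : Set X, ¬ IsSimpleClosedCurve S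

/-- `𝒰` is a finite open cover of the subset `Y`. -/
def IsOpenCoverOn {X : Type*} [TopologicalSpace X] (Y : Set X) (𝒰 : Finset (Set X)) : Prop :=
  (∀ U ∈ 𝒰, IsOpen U) ∧ Y ⊆ ⋃₀ (𝒰 : Set (Set X))

/-- `N(⋁_{i=1}^n f^{-a_i}(𝒰))`, relative to the subset `Y`: the minimal number `m` of elements
of the join cover `⋁_{i=1}^n f^{-a_i}(𝒰)` needed to cover `Y`. -/
noncomputable def seqCoverCountOn {X : Type*} (f : X → X) (Y : Set X) (a : ℕ → ℕ)
    (𝒰 : Finset (Set X)) (n : ℕ) : ℕ :=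
  sInf { m | ∃ c : Fin m → Fin n → Set X, (∀ j i, c j i ∈ 𝒰) ∧
    Y ⊆ ⋃ j, ⋂ i, f^[a i.1] ⁻¹' c j i }

/-- Topological sequence entropy of `f` restricted to the (invariant) subset `Y`,
with respect to the sequence `a`. -/
noncomputable def seqEntropyOn {X : Type*} [TopologicalSpace X] (f : X → X) (Y : Set X)
    (a : ℕ → ℕ) : ℝ≥0∞ :=
  ⨆ (𝒰 : Finset (Set X)) (_ : IsOpenCoverOn Y 𝒰),
    Filter.limsup
      (fun n : ℕ => ENNReal.ofReal (Real.log (seqCoverCountOn f Y a 𝒰 n) / n)) Filter.atTop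

/-- Topological sequence entropy of `f : X → X` with respect to the sequence `a`. -/
noncomputable def seqEntropy {X : Type*} [TopologicalSpace X] (f : X → X) (a : ℕ → ℕ) : ℝ≥0∞ :=
  seqEntropyOn f Set.univ a

/-- The ordinary topological entropy `h(f)`, i.e. the sequence entropy for `A = (0,1,2,…)`. -/
noncomputable def topEntropy {X : Type*} [TopologicalSpace X] (f : X → X) : ℝ≥0∞ :=
  seqEntropy f id

/-- `h_∞(f|_Y)`: the supremum over all strictly increasing sequences of positive integers of
the topological sequence entropies of `f` restricted to `Y`. -/
noncomputable def supSeqEntropyOn {X : Type*} [TopologicalSpace X] (f : X → X) (Y : Set X) :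
    ℝ≥0∞ :=
  ⨆ (a : ℕ → ℕ) (_ : StrictMono a) (_ : 1 ≤ a 0), seqEntropyOn f Y a

/-- `h_∞(f)`: the supremum of the topological sequence entropies of `f`. -/
noncomputable def supSeqEntropy {X : Type*} [TopologicalSpace X] (f : X → X) : ℝ≥0∞ :=
  supSeqEntropyOn f Set.univ

/-- The ω-limit set `ω_f(x) = ⋂_n closure {f^k(x) : k ≥ n}`. -/
def omegaLimitSet {X : Type*} [TopologicalSpace X] (f : X → X) (x : X) : Set X :=
  ⋂ n : ℕ, closure ((fun k => f^[k] x) '' Set.Ici n)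

/-- `ω(f) = ⋃_x ω_f(x)`. -/
def omegaSet {X : Type*} [TopologicalSpace X] (f : X → X) : Set X :=
  ⋃ x : X, omegaLimitSet f x

/-- The non-wandering set `Ω(f)`. -/
def nonWanderingSet {X : Type*} [TopologicalSpace X] (f : X → X) : Set X :=
  { x | ∀ U : Set X, IsOpen U → x ∈ U → ∃ n, 1 ≤ n ∧ (f^[n] ⁻¹' U ∩ U).Nonempty }

/-- There is an ε-chain from `x` to `y` under `f`. -/
def EpsChain {X : Type*} [MetricSpace X] (f : X → X) (ε : ℝ) (x y : X) : Prop :=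
  ∃ n, 1 ≤ n ∧ ∃ c : ℕ → X, c 0 = x ∧ c n = y ∧ ∀ i < n, dist (f (c i)) (c (i + 1)) < ε

/-- The chain recurrent set `CR(f)`. -/
def chainRecurrentSet {X : Type*} [MetricSpace X] (f : X → X) : Set X :=
  { x | ∀ ε > 0, EpsChain f ε x x }

/-- The chain recurrent set of the restriction `f|_Y`: chain recurrence witnessed by
ε-chains lying entirely inside `Y`. -/
def chainRecurrentSetOn {X : Type*} [MetricSpace X] (f : X → X) (Y : Set X) : Set X :=
  { x ∈ Y | ∀ ε > 0, ∃ n, 1 ≤ n ∧ ∃ c : ℕ → X, c 0 = x ∧ c n = x ∧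
      (∀ i ≤ n, c i ∈ Y) ∧ ∀ i < n, dist (f (c i)) (c (i + 1)) < ε }

/-- `I` is a periodic arc of `f` of period `s`: an arc with `f^s(I) ⊆ I` whose iterates
`I, f(I), …, f^{s-1}(I)` are pairwise disjoint. -/
def IsPeriodicArc {X : Type*} [TopologicalSpace X] (f : X → X) (I : Set X) (s : ℕ) : Prop :=
  IsArc I ∧ 1 ≤ s ∧ Set.MapsTo f^[s] I I ∧
    ∀ i j, i < j → j < s → Disjoint (f^[i] '' I) (f^[j] '' I)

/-- `Orb_f(I) = I ∪ f(I) ∪ … ∪ f^{s-1}(I)`. -/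
def arcOrbit {X : Type*} (f : X → X) (I : Set X) (s : ℕ) : Set X :=
  ⋃ i ∈ Finset.range s, f^[i] '' I

/-- `I` is an independence set for the pair `(U, V)` under `f`. -/
def IsIndepSetPair {X : Type*} (f : X → X) (U V : Set X) (I : Finset ℕ) : Prop :=
  ∀ J ⊆ I, J.Nonempty → ∀ s : ℕ → Bool,
    (⋂ j ∈ J, f^[j] ⁻¹' (if s j then U else V)).Nonempty

/-- `(x, y)` is an IN-pair of `(X, f)`. -/
def INPair {X : Type*} [TopologicalSpace X] (f : X → X) (x y : X) : Prop :=
  ∀ U ∈ nhds x, ∀ V ∈ nhds y, ∀ m : ℕ, ∃ I : Finset ℕ, m ≤ I.card ∧ IsIndepSetPair f U V I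

/-- The set `IN(X, f)` of IN-pairs of `(X, f)`. -/
def INPairs {X : Type*} [TopologicalSpace X] (f : X → X) : Set (X × X) :=
  { p | INPair f p.1 p.2 }

/-- `(x, y)` is an IN-pair of the restricted (sub)system `(Y, f|_Y)`, for `Y` invariant. -/
def INPairOn {X : Type*} [TopologicalSpace X] (f : X → X) (Y : Set X) (x y : X) : Prop :=
  x ∈ Y ∧ y ∈ Y ∧ ∀ U ∈ nhds x, ∀ V ∈ nhds y, ∀ m : ℕ, ∃ I : Finset ℕ, m ≤ I.card ∧
    ∀ J ⊆ I, J.Nonempty → ∀ s : ℕ → Bool,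
      (Y ∩ ⋂ j ∈ J, f^[j] ⁻¹' (if s j then U else V)).Nonempty

/-- `(x, y)` is a Li–Yorke pair for `f`. -/
def LiYorkePair {X : Type*} [MetricSpace X] (f : X → X) (x y : X) : Prop :=
  Filter.liminf (fun n : ℕ => dist (f^[n] x) (f^[n] y)) Filter.atTop = 0 ∧
    0 < Filter.limsup (fun n : ℕ => dist (f^[n] x) (f^[n] y)) Filter.atTop


namespace TreeCR

theorem seqCover_nonempty {X : Type*} (f : X → X) (a : ℕ → ℕ)
    (𝒰 : Finset (Set X)) (hU : (Set.univ : Set X) ⊆ ⋃₀ (𝒰 : Set (Set X))) (n : ℕ) :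
    { m | ∃ c : Fin m → Fin n → Set X, (∀ j i, c j i ∈ 𝒰) ∧
      (Set.univ : Set X) ⊆ ⋃ j, ⋂ i, f^[a i.1] ⁻¹' c j i }.Nonempty := by
  classical
  let e := Fintype.equivFin (Fin n → 𝒰)
  refine ⟨Fintype.card (Fin n → 𝒰), fun j i => ((e.symm j) i : Set X), fun j i => ((e.symm j) i).2, ?_⟩
  intro x _
  have : ∀ y : X, ∃ U : 𝒰, y ∈ (U : Set X) := by
    intro y
    obtain ⟨U, hU1, hU2⟩ := hU (mem_univ y)
    exact ⟨⟨U, hU1⟩, hU2⟩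
  choose U hU' using this
  refine mem_iUnion.2 ⟨e (fun i => U (f^[a i.1] x)), mem_iInter.2 fun i => ?_⟩
  simp [hU']

theorem words {X : Type*} (f : X → X) (A B c : Set X) (N : ℕ)
    (hA : A ⊆ c) (hB : B ⊆ c) (hc : c.Nonempty)
    (h1 : ∀ w ∈ c, ∃ s ∈ A, f^[N] s = w) (h2 : ∀ w ∈ c, ∃ s ∈ B, f^[N] s = w) (m : ℕ) :
    ∀ σ : ℕ → Bool, ∃ w ∈ c, ∀ i < m, f^[N * i] w ∈ (if σ i then A else B) := by
  induction m with
  | zero => intro σ; obtain ⟨w, hw⟩ := hc; exact ⟨w, hw, by simp⟩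
  | succ m ih =>
    intro σ
    obtain ⟨w, hw, hw'⟩ := ih (fun i => σ (i + 1))
    have : ∃ s ∈ (if σ 0 then A else B), f^[N] s = w := by
      cases σ 0
      · simpa using h2 w hw
      · simpa using h1 w hw
    obtain ⟨s, hs, hs'⟩ := this
    refine ⟨s, ?_, ?_⟩
    · revert hs; cases σ 0
      · simpa using @hB s
      · simpa using @hA s
    · intro i hi
      rcases i with _ | i
      · simpa using hs
      · have := hw' i (by omega)
        rw [Nat.mul_succ, Function.iterate_add_apply, hs']
        exact this

theorem horseshoe {X : Type*} [TopologicalSpace X] (f : X → X) (A B c : Set X) (N : ℕ)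
    (hN : 1 ≤ N) (hAc : IsClosed A) (hBc : IsClosed B) (hAB : Disjoint A B)
    (hA : A ⊆ c) (hB : B ⊆ c) (hc : c.Nonempty)
    (h1 : ∀ w ∈ c, ∃ s ∈ A, f^[N] s = w) (h2 : ∀ w ∈ c, ∃ s ∈ B, f^[N] s = w) :
    topEntropy f ≠ 0 := by
  classical
  let 𝒰 : Finset (Set X) := {Aᶜ, Bᶜ}
  have hcov : IsOpenCoverOn (Set.univ : Set X) 𝒰 := by
    constructor
    · intro U hU
      simp only [𝒰, Finset.mem_insert, Finset.mem_singleton] at hU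
      rcases hU with rfl | rfl
      · exact hAc.isOpen_compl
      · exact hBc.isOpen_compl
    · intro x _
      by_cases hx : x ∈ A
      · exact ⟨Bᶜ, by simp [𝒰], fun h => hAB.le_bot ⟨hx, h⟩⟩
      · exact ⟨Aᶜ, by simp [𝒰], hx⟩
  have hcount : ∀ m : ℕ, 2 ^ m ≤ seqCoverCountOn f Set.univ id 𝒰 (N * m) := by
    intro m
    apply le_csInf (seqCover_nonempty f id 𝒰 hcov.2 (N * m))
    rintro k ⟨cc, hcc, hcv⟩
    have hw : ∀ σ : Fin m → Bool, ∃ w : X, ∀ i : Fin m, f^[N * i.1] w ∈ (if σ i then A else B) := by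
      intro σ
      obtain ⟨w, -, hw⟩ := words f A B c N hA hB hc h1 h2 m
        (fun i => if h : i < m then σ ⟨i, h⟩ else true)
      refine ⟨w, fun i => ?_⟩
      simpa using hw i.1 i.2
    choose w hw using hw
    have hj : ∀ σ, ∃ j : Fin k, ∀ i : Fin (N * m), f^[i.1] (w σ) ∈ cc j i := by
      intro σ
      obtain ⟨j, hj⟩ := mem_iUnion.1 (hcv (mem_univ (w σ)))
      exact ⟨j, fun i => mem_iInter.1 hj i⟩
    choose J hJ using hj
    have hinj : Function.Injective J := by
      intro σ τ h
      funext i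
      by_contra hne
      have hi : N * i.1 < N * m := Nat.mul_lt_mul_of_pos_left i.2 hN
      have e1 := hJ σ ⟨N * i.1, hi⟩
      have e2 := hJ τ ⟨N * i.1, hi⟩
      rw [← h] at e2
      have e3 := hcc (J σ) ⟨N * i.1, hi⟩
      have e4 := hw σ i
      have e5 := hw τ i
      simp only [𝒰, Finset.mem_insert, Finset.mem_singleton] at e3
      revert hne e4 e5
      cases σ i <;> cases τ i <;> rcases e3 with e3 | e3 <;> rw [e3] at e1 e2 <;>
        simp_all
    have := Fintype.card_le_of_injective J hinj
    simpa using this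
  intro h0
  have hle : ENNReal.ofReal (Real.log 2 / N) ≤ topEntropy f := by
    unfold topEntropy seqEntropy seqEntropyOn
    refine le_trans ?_ (le_iSup₂ (α := ℝ≥0∞) 𝒰 hcov)
    apply Filter.le_limsup_of_frequently_le
    · rw [Filter.frequently_atTop]
      intro n
      refine ⟨N * (n + 1), by nlinarith, ?_⟩
      apply ENNReal.ofReal_le_ofReal
      have hN' : (0 : ℝ) < N := by exact_mod_cast hN
      have hc := hcount (n + 1)
      have hlog : (n + 1 : ℝ) * Real.log 2 ≤
          Real.log (seqCoverCountOn f Set.univ id 𝒰 (N * (n + 1))) := by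
        have : Real.log ((2 : ℝ) ^ (n + 1)) = (n + 1 : ℝ) * Real.log 2 := by
          rw [Real.log_pow]; push_cast; ring
        rw [← this]
        apply Real.log_le_log (by positivity)
        exact_mod_cast hc
      rw [div_le_div_iff₀ hN' (by push_cast; positivity)]
      push_cast
      nlinarith
    · isBoundedDefault
  rw [h0] at hle
  have : 0 < Real.log 2 / N := div_pos (Real.log_pos (by norm_num)) (by exact_mod_cast hN)
  simp at hle
  linarith

end TreeCR

namespace TreeCR

/-- One edge: a parametrization together with the retraction onto it. -/
structure Edge (X : Type*) [TopologicalSpace X] where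
  h : ℝ → X
  ρ : X → ℝ
  hc : Continuous h
  ρc : Continuous ρ
  ρ0 : ∀ w, 0 ≤ ρ w
  ρ1 : ∀ w, ρ w ≤ 1
  ρh : ∀ t, 0 ≤ t → t ≤ 1 → ρ (h t) = t
  hρ : ∀ w, 0 < ρ w → ρ w < 1 → h (ρ w) = w

/-- The reversed edge. -/
def Edge.rev {X : Type*} [TopologicalSpace X] (e : Edge X) : Edge X where
  h t := e.h (1 - t)
  ρ w := 1 - e.ρ w
  hc := e.hc.comp (by fun_prop)
  ρc := continuous_const.sub e.ρc
  ρ0 w := by linarith [e.ρ1 w]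
  ρ1 w := by linarith [e.ρ0 w]
  ρh t h0 h1 := by rw [e.ρh _ (by linarith) (by linarith)]; ring
  hρ w h0 h1 := by
    have : (1 : ℝ) - (1 - e.ρ w) = e.ρ w := by ring
    rw [this, e.hρ w (by linarith) (by linarith)]

theorem Edge.cov_open {X : Type*} [TopologicalSpace X] (e : Edge X) {C : Set X}
    (hC : IsPreconnected C) {w1 w2 : X} (h1 : w1 ∈ C) (h2 : w2 ∈ C) {s : ℝ}
    (hs1 : e.ρ w1 < s) (hs2 : s < e.ρ w2) : e.h s ∈ C := by
  have := (hC.image e.ρ e.ρc.continuousOn).ordConnected.out (mem_image_of_mem _ h1)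
    (mem_image_of_mem _ h2) ⟨hs1.le, hs2.le⟩
  obtain ⟨w, hw, rfl⟩ := this
  rwa [e.hρ w (lt_of_le_of_lt (e.ρ0 _) hs1) (lt_of_lt_of_le hs2 (e.ρ1 _))]

theorem Edge.cov {X : Type*} [TopologicalSpace X] (e : Edge X) {C : Set X}
    (hC : IsPreconnected C) (hCc : IsClosed C) {w1 w2 : X} (h1 : w1 ∈ C) (h2 : w2 ∈ C)
    (h12 : e.ρ w1 < e.ρ w2) {s : ℝ}
    (hs1 : e.ρ w1 ≤ s) (hs2 : s ≤ e.ρ w2) : e.h s ∈ C := by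
  have hm : MapsTo e.h (Ioo (e.ρ w1) (e.ρ w2)) C := fun s hs => e.cov_open hC h1 h2 hs.1 hs.2
  have := hm.closure e.hc
  rw [closure_Ioo h12.ne, hCc.closure_eq] at this
  exact this ⟨hs1, hs2⟩

/-- Covering of an arc by the image of an arc. -/
theorem Edge.cov_image {X : Type*} [TopologicalSpace X] [T2Space X] (e : Edge X) {g : X → X}
    (hg : Continuous g) {a b : ℝ} {u v : ℝ} (hu : u ∈ Icc a b) (hv : v ∈ Icc a b)
    (h12 : e.ρ (g (e.h u)) < e.ρ (g (e.h v))) {s : ℝ}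
    (hs1 : e.ρ (g (e.h u)) ≤ s) (hs2 : s ≤ e.ρ (g (e.h v))) :
    ∃ t ∈ Icc a b, g (e.h t) = e.h s := by
  have hC : IsPreconnected ((g ∘ e.h) '' Icc a b) :=
    isPreconnected_Icc.image _ (hg.comp e.hc).continuousOn
  have hCc : IsClosed ((g ∘ e.h) '' Icc a b) :=
    (isCompact_Icc.image (hg.comp e.hc)).isClosed
  obtain ⟨t, ht, h⟩ := e.cov hC hCc (mem_image_of_mem (g ∘ e.h) hu) (mem_image_of_mem _ hv) h12 hs1 hs2
  exact ⟨t, ht, h⟩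

theorem back_seq {X : Type*} [TopologicalSpace X] [T2Space X] (e : Edge X) {g : X → X}
    (hg : Continuous g) {b y z : ℝ} (hb : 0 ≤ b) (hby : b < y) (hyz : y < z) (hz : z < 1)
    (hgy : g (e.h y) = e.h z) (hgb : e.ρ (g (e.h b)) ≤ b) (j : ℕ) :
    ∃ s, b < s ∧ s ≤ y ∧ g^[j] (e.h s) = e.h y := by
  induction j with
  | zero => exact ⟨y, hby, le_rfl, rfl⟩
  | succ j ih =>
    obtain ⟨s, hs1, hs2, hs⟩ := ih
    have hrz : e.ρ (g (e.h y)) = z := by rw [hgy, e.ρh z (by linarith) hz.le]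
    obtain ⟨t, ht, htg⟩ := e.cov_image hg (a := b) (b := y) (u := b) (v := y) (s := s)
      ⟨le_rfl, hby.le⟩ ⟨hby.le, le_rfl⟩ (by linarith) (by linarith) (by linarith)
    refine ⟨t, lt_of_le_of_ne ht.1 ?_, ht.2, ?_⟩
    · rintro rfl
      rw [htg, e.ρh s (by linarith) (by linarith)] at hgb
      linarith
    · rw [Function.iterate_succ_apply, htg, hs]

theorem homoclinic_aux {X : Type*} [TopologicalSpace X] [T2Space X] (e : Edge X) {g : X → X}
    (hg : Continuous g) {b y z : ℝ} (hb : 0 ≤ b) (hby : b < y) (hyz : y < z) (hz : z < 1)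
    (hgy : g (e.h y) = e.h z) (hgb : e.ρ (g (e.h b)) ≤ b) (hgz : e.ρ (g (e.h z)) < z)
    (hlim : ∀ s, b < s → ∃ l, ∀ i ≥ l, e.ρ (g^[i] (e.h z)) < s) :
    ∃ (A B c : Set X) (N : ℕ), 1 ≤ N ∧ IsClosed A ∧ IsClosed B ∧ Disjoint A B ∧ A ⊆ c ∧ B ⊆ c ∧
      c.Nonempty ∧ (∀ w ∈ c, ∃ s ∈ A, g^[N] s = w) ∧ (∀ w ∈ c, ∃ s ∈ B, g^[N] s = w) := by
  have hrz : e.ρ (g (e.h y)) = z := by rw [hgy, e.ρh z (by linarith) hz.le]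
  -- the fixed point
  obtain ⟨q, ⟨hyq, hqz⟩, hq⟩ : ∃ q ∈ Ioo y z, e.ρ (g (e.h q)) - q = 0 := by
    have hcont : ContinuousOn (fun s => e.ρ (g (e.h s)) - s) (Icc y z) :=
      ((e.ρc.comp (hg.comp e.hc)).sub continuous_id).continuousOn
    have := intermediate_value_Ioo' hyz.le hcont
    exact this ⟨by linarith, by linarith⟩
  have hq' : e.ρ (g (e.h q)) = q := by linarith
  have hqfix : g (e.h q) = e.h q := by
    have := e.hρ (g (e.h q)) (by linarith) (by linarith)
    rw [hq'] at this
    exact this.symm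
  have hqfixn : ∀ n, g^[n] (e.h q) = e.h q := fun n => Function.iterate_fixed hqfix n
  have hρq : e.ρ (e.h q) = q := e.ρh q (by linarith) (by linarith)
  obtain ⟨l, hl⟩ := hlim y hby
  obtain ⟨s, hbs, hsy, hs⟩ := back_seq e hg hb hby hyz hz hgy hgb (l + 1)
  obtain ⟨M, hM⟩ := hlim s hbs
  have hM := hM M le_rfl
  set a := e.h '' Icc s y with ha
  set bb := e.h '' Icc y q with hbb
  set c := e.h '' Icc q z with hc
  have acl : IsClosed a := (isCompact_Icc.image e.hc).isClosed
  have bcl : IsClosed bb := (isCompact_Icc.image e.hc).isClosed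
  have ccl : IsClosed c := (isCompact_Icc.image e.hc).isClosed
  have ycov : g^[l + 2] (e.h y) = g^[l + 1] (e.h z) := by
    rw [Function.iterate_succ_apply, hgy]
  have ylow : e.ρ (g^[l + 2] (e.h y)) < y := by rw [ycov]; exact hl _ (by omega)
  have cov_a : ∀ w ∈ c, ∃ t ∈ a, g^[l + 2] t = w := by
    rintro _ ⟨t, ht, rfl⟩
    have h2 : g^[l + 2] (e.h s) = e.h z := by
      rw [Function.iterate_succ_apply', hs, hgy]
    have hr : e.ρ (g^[l + 2] (e.h s)) = z := by rw [h2, e.ρh z (by linarith) hz.le]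
    obtain ⟨t', ht', h'⟩ := e.cov_image (hg.iterate (l + 2)) (a := s) (b := y) (u := y) (v := s) (s := t)
      ⟨hsy, le_rfl⟩ ⟨le_rfl, hsy⟩ (by linarith) (by linarith [ht.1]) (by linarith [ht.2])
    exact ⟨_, mem_image_of_mem _ ht', h'⟩
  have cov_b : ∀ w ∈ c, ∃ t ∈ bb, g t = w := by
    rintro _ ⟨t, ht, rfl⟩
    obtain ⟨t', ht', h'⟩ := e.cov_image hg (a := y) (b := q) (u := q) (v := y) (s := t)
      ⟨hyq.le, le_rfl⟩ ⟨le_rfl, hyq.le⟩ (by linarith) (by linarith [ht.1]) (by linarith [ht.2])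
    exact ⟨_, mem_image_of_mem _ ht', h'⟩
  have cov_c : ∀ t ∈ Icc s q, ∃ w ∈ c, g^[M] w = e.h t := by
    intro t ht
    have hr : e.ρ (g^[M] (e.h q)) = q := by rw [hqfixn, hρq]
    obtain ⟨t', ht', h'⟩ := e.cov_image (hg.iterate M) (a := q) (b := z) (u := z) (v := q) (s := t)
      ⟨hqz.le, le_rfl⟩ ⟨le_rfl, hqz.le⟩ (by linarith) (by linarith [ht.1]) (by linarith [ht.2])
    exact ⟨_, mem_image_of_mem _ ht', h'⟩
  have cov_ca : ∀ t ∈ a, ∃ w ∈ c, g^[M] w = t := by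
    rintro _ ⟨t, ht, rfl⟩
    exact cov_c t ⟨ht.1, by linarith [ht.2]⟩
  have cov_cb : ∀ t ∈ bb, ∃ w ∈ c, g^[M] w = t := by
    rintro _ ⟨t, ht, rfl⟩
    exact cov_c t ⟨by linarith [ht.1], ht.2⟩
  refine ⟨c ∩ (g^[M] ⁻¹' a ∩ (g^[l + 2 + M]) ⁻¹' c), c ∩ g^[M] ⁻¹' bb, c, 1 + M + (l + 2) + M, by omega,
    ccl.inter ((acl.preimage (hg.iterate _)).inter (ccl.preimage (hg.iterate _))),
    ccl.inter (bcl.preimage (hg.iterate _)), ?_, inter_subset_left, inter_subset_left,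
    ⟨e.h q, mem_image_of_mem _ ⟨le_rfl, hqz.le⟩⟩, ?_, ?_⟩
  · rw [Set.disjoint_left]
    rintro w ⟨-, ⟨t1, ht1, e1⟩, h2⟩ ⟨-, ⟨t2, ht2, e2⟩⟩
    have hρ1 : e.ρ (g^[M] w) = t1 := by rw [← e1]; exact e.ρh _ (by linarith [ht1.1]) (by linarith [ht1.2])
    have hρ2 : e.ρ (g^[M] w) = t2 := by rw [← e2]; exact e.ρh _ (by linarith [ht2.1]) (by linarith [ht2.2])
    have ht : t1 = y := le_antisymm ht1.2 (by rw [← hρ1, hρ2]; exact ht2.1)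
    rw [ht] at e1
    rw [mem_preimage, Function.iterate_add_apply, ← e1] at h2
    obtain ⟨t3, ht3, e3⟩ := h2
    rw [← e3, e.ρh t3 (by linarith [ht3.1]) (by linarith [ht3.2])] at ylow
    linarith [ht3.1]
  · intro w hw
    obtain ⟨w1, hw1, e1⟩ := cov_b w hw
    obtain ⟨w2, hw2, e2⟩ := cov_cb w1 hw1
    obtain ⟨w3, hw3, e3⟩ := cov_a w2 hw2
    obtain ⟨w4, hw4, e4⟩ := cov_ca w3 hw3
    refine ⟨w4, ⟨hw4, ?_, ?_⟩, ?_⟩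
    · rw [mem_preimage, e4]; exact hw3
    · rw [mem_preimage, Function.iterate_add_apply, e4, e3]; exact hw2
    · rw [Function.iterate_add_apply, e4, Function.iterate_add_apply, e3,
        Function.iterate_add_apply, e2, Function.iterate_one, e1]
  · intro w hw
    obtain ⟨w1, hw1, e1⟩ := cov_a w hw
    obtain ⟨w2, hw2, e2⟩ := cov_ca w1 hw1
    obtain ⟨w3, hw3, e3⟩ := cov_b w2 hw2
    obtain ⟨w4, hw4, e4⟩ := cov_cb w3 hw3
    refine ⟨w4, ⟨hw4, ?_⟩, ?_⟩
    · rw [mem_preimage, e4]; exact hw3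
    · have : 1 + M + (l + 2) + M = (l + 2) + (M + (1 + M)) := by omega
      rw [this, Function.iterate_add_apply g (l + 2), Function.iterate_add_apply g M,
        Function.iterate_add_apply g 1, e4, Function.iterate_one, e3, e2, e1]

/-- A homoclinic pair yields a horseshoe. -/
theorem homoclinic {X : Type*} [TopologicalSpace X] [T2Space X] (e : Edge X) {f : X → X}
    (hf : Continuous f) {b y z : ℝ} (hb : 0 ≤ b) (hby : b < y) (hyz : y < z) (hz : z < 1)
    {n : ℕ} (hn : 1 ≤ n)
    (hgy : f^[n] (e.h y) = e.h z) (hgb : ∀ m, e.ρ (f^[m] (e.h b)) ≤ b)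
    {p : X} (hp : e.ρ p ≤ b) (hlim : Tendsto (fun i => f^[i] (e.h z)) atTop (𝓝 p))
    {f0 : X → X} {k : ℕ} (hk : 1 ≤ k) (hfk : f = f0^[k]) :
    topEntropy f0 ≠ 0 := by
  have hl : ∀ s, b < s → ∃ l, ∀ i ≥ l, e.ρ (f^[i] (e.h z)) < s := by
    intro s hs
    have := ((e.ρc.tendsto p).comp hlim).eventually (gt_mem_nhds (lt_of_le_of_lt hp hs))
    exact eventually_atTop.1 this
  have hfn := hf.iterate n
  obtain ⟨l, hl1⟩ := hl z (by linarith)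
  obtain ⟨s, hbs, hsy, hs⟩ := back_seq e hfn hb hby hyz hz hgy (hgb n) l
  have hgs : (f^[n * (l + 1)]) (e.h s) = e.h z := by
    rw [Function.iterate_mul, Function.iterate_succ_apply', hs, hgy]
  have hpos : 1 ≤ n * (l + 1) := by nlinarith
  obtain ⟨A, B, c, N, hN, h1, h2, h3, h4, h5, h6, h7, h8⟩ :=
    homoclinic_aux e (hf.iterate (n * (l + 1))) hb hbs (by linarith) hz hgs (hgb _)
      (hl1 _ (by nlinarith)) (by
        intro s hs
        obtain ⟨l', hl'⟩ := hl s hs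
        refine ⟨l', fun i hi => ?_⟩
        rw [← Function.iterate_mul]
        exact hl' _ (by nlinarith))
  rw [← Function.iterate_mul, hfk, ← Function.iterate_mul] at h7 h8
  exact horseshoe f0 A B c (k * (n * (l + 1) * N)) (Nat.mul_pos hk (Nat.mul_pos hpos hN)) h1 h2 h3 h4 h5 h6 h7 h8

end TreeCR

namespace TreeCR

theorem finite_back {X : Type*} (f : X → X) (F : Set X) (hF : F.Finite) {x : X} (hx : x ∈ F)
    (hb : ∀ e ∈ F, ∃ e' ∈ F, f e' = e) : x ∈ Function.periodicPts f := by
  choose! s hs1 hs2 using hb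
  have hmem : ∀ m, s^[m] x ∈ F := by
    intro m
    induction m with
    | zero => exact hx
    | succ m ih => rw [Function.iterate_succ_apply']; exact hs1 _ ih
  have hfs : ∀ m, f^[m] (s^[m] x) = x := by
    intro m
    induction m with
    | zero => rfl
    | succ m ih =>
      rw [Function.iterate_succ_apply' s, Function.iterate_succ_apply f, hs2 _ (hmem m), ih]
  have hni : ¬ Function.Injective (fun m => s^[m] x) := by
    intro hi
    exact (Set.infinite_range_of_injective hi) (hF.subset (by rintro _ ⟨m, rfl⟩; exact hmem m))
  have : ∃ m m', m < m' ∧ s^[m] x = s^[m'] x := by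
    simp only [Function.Injective, not_forall] at hni
    obtain ⟨a, b, hab, hne⟩ := hni
    rcases lt_or_gt_of_ne hne with h | h
    · exact ⟨a, b, h, hab⟩
    · exact ⟨b, a, h, hab.symm⟩
  obtain ⟨m, m', hlt, heq⟩ := this
  refine ⟨m' - m, by omega, ?_⟩
  have h1 := hfs m'
  rw [← heq, show m' = (m' - m) + m by omega, Function.iterate_add_apply, hfs m] at h1
  exact h1

theorem nested_subset_open {X : Type*} [TopologicalSpace X] [CompactSpace X]
    (K : ℕ → Set X) (hd : ∀ n, K (n + 1) ⊆ K n) (hcl : ∀ n, IsClosed (K n))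
    {U : Set X} (hU : IsOpen U) (h : ⋂ n, K n ⊆ U) : ∃ n, K n ⊆ U := by
  by_contra hcon
  push Not at hcon
  have := IsCompact.nonempty_iInter_of_sequence_nonempty_isCompact_isClosed (fun n => K n ∩ Uᶜ)
    (fun n => inter_subset_inter_left _ (hd n))
    (fun n => by
      obtain ⟨x, hx, hxU⟩ := not_subset.1 (hcon n)
      exact ⟨x, hx, hxU⟩)
    ((hcl 0).inter hU.isClosed_compl).isCompact
    (fun n => (hcl n).inter hU.isClosed_compl)
  obtain ⟨x, hx⟩ := this
  rw [mem_iInter] at hx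
  exact (hx 0).2 (h (mem_iInter.2 fun n => (hx n).1))

theorem nested_preconnected {X : Type*} [TopologicalSpace X] [CompactSpace X] [T2Space X]
    (K : ℕ → Set X) (hd : ∀ n, K (n + 1) ⊆ K n) (hcl : ∀ n, IsClosed (K n))
    (hpc : ∀ n, IsPreconnected (K n)) : IsPreconnected (⋂ n, K n) := by
  rw [isPreconnected_closed_iff]
  intro u v hu hv huv h1 h2
  by_contra hcon
  rw [Set.not_nonempty_iff_eq_empty] at hcon
  have hScl : IsClosed (⋂ n, K n) := isClosed_iInter hcl
  have hdis : Disjoint ((⋂ n, K n) ∩ u) ((⋂ n, K n) ∩ v) := by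
    rw [Set.disjoint_left]
    intro x hx hx'
    have : x ∈ (⋂ n, K n) ∩ (u ∩ v) := ⟨hx.1, hx.2, hx'.2⟩
    rw [hcon] at this
    exact this
  obtain ⟨U, V, hU, hV, hsU, hsV, hUV⟩ := SeparatedNhds.of_isCompact_isCompact
    (hScl.inter hu).isCompact (hScl.inter hv).isCompact hdis
  obtain ⟨n, hn⟩ := nested_subset_open K hd hcl (hU.union hV) (by
    intro x hx
    rcases huv hx with h | h
    · exact Or.inl (hsU ⟨hx, h⟩)
    · exact Or.inr (hsV ⟨hx, h⟩))
  obtain ⟨x, hx⟩ := h1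
  obtain ⟨y, hy⟩ := h2
  obtain ⟨w, -, hw⟩ := hpc n U V hU hV hn ⟨x, mem_iInter.1 hx.1 n, hsU hx⟩ ⟨y, mem_iInter.1 hy.1 n, hsV hy⟩
  exact Set.disjoint_left.1 hUV hw.1 hw.2

theorem nested_image {X : Type*} [TopologicalSpace X] [CompactSpace X] [T2Space X]
    (f : X → X) (hf : Continuous f)
    (K : ℕ → Set X) (hd : ∀ n, K (n + 1) ⊆ K n) (hcl : ∀ n, IsClosed (K n)) {y : X}
    (hy : ∀ n, y ∈ f '' K n) : y ∈ f '' ⋂ n, K n := by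
  have := IsCompact.nonempty_iInter_of_sequence_nonempty_isCompact_isClosed
    (fun n => K n ∩ f ⁻¹' {y})
    (fun n => inter_subset_inter_left _ (hd n))
    (fun n => by
      obtain ⟨x, hx, hxU⟩ := hy n
      exact ⟨x, hx, hxU⟩)
    ((hcl 0).inter (isClosed_singleton.preimage hf)).isCompact
    (fun n => (hcl n).inter (isClosed_singleton.preimage hf))
  obtain ⟨x, hx⟩ := this
  rw [mem_iInter] at hx
  exact ⟨x, mem_iInter.2 fun n => (hx n).1, (hx 0).2⟩

theorem closure_diff_finite {X ι : Type*} [TopologicalSpace X] [Finite ι] (E : ι → Edge X)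
    (hE : ∀ w, ∃ i, ∃ t, 0 ≤ t ∧ t ≤ 1 ∧ (E i).h t = w) {U : Set X} (hU : IsPreconnected U) :
    (closure U \ U).Finite := by
  let P : ι → Set X := fun i => (E i).h '' {0, 1, sInf ((E i).ρ '' U), sSup ((E i).ρ '' U)}
  have hP : (⋃ i, P i).Finite := Set.finite_iUnion fun i => Set.Finite.image _ (by simp)
  refine hP.subset ?_
  rintro w ⟨hw, hwU⟩
  obtain ⟨i, t, ht0, ht1, rfl⟩ := hE w
  refine mem_iUnion.2 ⟨i, mem_image_of_mem _ ?_⟩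
  by_contra hcon
  simp only [mem_insert_iff, mem_singleton_iff, not_or] at hcon
  obtain ⟨h0, h1, h2, h3⟩ := hcon
  have h0' : 0 < t := lt_of_le_of_ne ht0 (Ne.symm h0)
  have h1' : t < 1 := lt_of_le_of_ne ht1 h1
  have hρ := (E i).ρh t ht0 ht1
  have hcl : t ∈ closure ((E i).ρ '' U) := by
    have := image_closure_subset_closure_image (E i).ρc (mem_image_of_mem (E i).ρ hw)
    rwa [hρ] at this
  have hne : ((E i).ρ '' U).Nonempty := by
    rw [← closure_nonempty_iff]; exact ⟨t, hcl⟩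
  have hbb : BddBelow ((E i).ρ '' U) := ⟨0, by rintro _ ⟨w, -, rfl⟩; exact (E i).ρ0 w⟩
  have hba : BddAbove ((E i).ρ '' U) := ⟨1, by rintro _ ⟨w, -, rfl⟩; exact (E i).ρ1 w⟩
  have hI : closure ((E i).ρ '' U) ⊆ Icc (sInf ((E i).ρ '' U)) (sSup ((E i).ρ '' U)) :=
    closure_minimal (fun s hs => ⟨csInf_le hbb hs, le_csSup hba hs⟩) isClosed_Icc
  have hlo := lt_of_le_of_ne (hI hcl).1 (Ne.symm h2)
  have hhi := lt_of_le_of_ne (hI hcl).2 h3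
  obtain ⟨_, ⟨w1, hw1, rfl⟩, hl1⟩ := exists_lt_of_csInf_lt hne hlo
  obtain ⟨_, ⟨w2, hw2, rfl⟩, hl2⟩ := exists_lt_of_lt_csSup hne hhi
  exact hwU ((E i).cov_open hU hw1 hw2 hl1 hl2)

theorem chain_close {X : Type*} [MetricSpace X] [CompactSpace X] (f : X → X) (hf : Continuous f)
    (n : ℕ) : ∀ δ > 0, ∃ ε > 0, ∀ c : ℕ → X, (∀ i, dist (f (c i)) (c (i + 1)) < ε) →
      ∀ i, dist (f^[n] (c i)) (c (i + n)) < δ := by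
  have huc := CompactSpace.uniformContinuous_of_continuous hf
  induction n with
  | zero => intro δ hδ; exact ⟨1, one_pos, fun c _ i => by simpa using hδ⟩
  | succ n ih =>
    intro δ hδ
    obtain ⟨η, hη, hη'⟩ := Metric.uniformContinuous_iff.1 huc (δ / 2) (by linarith)
    obtain ⟨ε, hε, hε'⟩ := ih η hη
    refine ⟨min ε (δ / 2), lt_min hε (by linarith), fun c hc i => ?_⟩
    have h1 := hη' (hε' c (fun i => lt_of_lt_of_le (hc i) (min_le_left _ _)) i)
    have h2 := lt_of_lt_of_le (hc (i + n)) (min_le_right _ _)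
    rw [Function.iterate_succ_apply']
    calc _ ≤ dist (f (f^[n] (c i))) (f (c (i + n))) + dist (f (c (i + n))) (c (i + (n + 1))) :=
          dist_triangle _ _ _
      _ < δ := by rw [← add_assoc]; linarith

/-- A chain recurrent point attracted by a trapping region lies in it. -/
theorem trap {X : Type*} [MetricSpace X] [CompactSpace X] (f : X → X) (hf : Continuous f)
    {x : X} (hx : x ∈ chainRecurrentSet f) (N : ℕ) (hN : 1 ≤ N) (V : Set X) (hV : IsClosed V)
    (hVV : f^[N] '' V ⊆ interior V) (m : ℕ) (hm : f^[N * m] x ∈ interior V) : x ∈ V := by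
  have hcomp : IsCompact (f^[N] '' V) := hV.isCompact.image (hf.iterate N)
  obtain ⟨δ1, hδ1, h1⟩ := hcomp.exists_thickening_subset_open isOpen_interior hVV
  obtain ⟨δ2, hδ2, h2⟩ := Metric.isOpen_iff.1 isOpen_interior _ hm
  obtain ⟨ε1, hε1, h3⟩ := chain_close f hf N δ1 hδ1
  obtain ⟨ε2, hε2, h4⟩ := chain_close f hf (N * m) δ2 hδ2
  obtain ⟨L, hL, c, hc0, hcL, hc⟩ := hx (min ε1 ε2) (lt_min hε1 hε2)
  let d : ℕ → X := fun i => c (i % L)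
  have hd : ∀ i, dist (f (d i)) (d (i + 1)) < min ε1 ε2 := by
    intro i
    have hlt : i % L < L := Nat.mod_lt _ hL
    have := hc (i % L) hlt
    by_cases h : i % L + 1 = L
    · have hz : (i + 1) % L = 0 := by
        rw [Nat.add_mod]
        rcases Nat.lt_or_ge 1 L with h1 | h1
        · rw [Nat.mod_eq_of_lt h1, h, Nat.mod_self]
        · have : L = 1 := by omega
          subst this; simp [Nat.mod_one]
      simp only [d, hz]
      rw [h, hcL] at this
      rw [hc0]; exact this
    · have hz : (i + 1) % L = i % L + 1 := by
        rw [Nat.add_mod, Nat.mod_eq_of_lt (by omega : 1 < L), Nat.mod_eq_of_lt (by omega)]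
      simp only [d, hz]; exact this
  have hd0 : d 0 = x := by simp [d, hc0]
  have hin : ∀ j, d (N * (m + j)) ∈ V := by
    intro j
    induction j with
    | zero =>
      apply interior_subset
      apply h2
      have := h4 d (fun i => lt_of_lt_of_le (hd i) (min_le_right _ _)) 0
      rw [hd0, zero_add] at this
      rw [Metric.mem_ball, dist_comm]; exact this
    | succ j ih =>
      apply interior_subset
      apply h1
      have := h3 d (fun i => lt_of_lt_of_le (hd i) (min_le_left _ _)) (N * (m + j))
      rw [Metric.mem_thickening_iff]
      refine ⟨_, mem_image_of_mem _ ih, ?_⟩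
      rw [dist_comm]
      have e : N * (m + (j + 1)) = N * (m + j) + N := by ring
      rw [e]; exact this
  have := hin (m * L - m)
  have hm' : m ≤ m * L := Nat.le_mul_of_pos_right m hL
  rw [show m + (m * L - m) = m * L by omega] at this
  have hz : d (N * (m * L)) = x := by
    simp only [d, ← mul_assoc, Nat.mul_mod_left, hc0]
  rwa [hz] at this

end TreeCR

namespace TreeCR

theorem finite_omega {X : Type*} [MetricSpace X] [CompactSpace X] (f : X → X) (hf : Continuous f)
    (x : X) (hfin : (omegaLimitSet f x).Finite) :
    ∃ k, 1 ≤ k ∧ ∃ p, f^[k] p = p ∧ Tendsto (fun j => f^[k * j] x) atTop (𝓝 p) := by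
  classical
  have : Nonempty X := ⟨x⟩
  set W := omegaLimitSet f x with hW
  have hmem : ∀ w ∈ W, ∀ ε > 0, ∀ n, ∃ m ≥ n, dist (f^[m] x) w < ε := by
    intro w hw ε hε n
    have := mem_iInter.1 hw n
    obtain ⟨_, ⟨m, hm, rfl⟩, hd⟩ := Metric.mem_closure_iff.1 this ε hε
    exact ⟨m, hm, by rw [dist_comm]; exact hd⟩
  have hmem' : ∀ w, (∀ ε > 0, ∀ n, ∃ m ≥ n, dist (f^[m] x) w < ε) → w ∈ W := by
    intro w h
    refine mem_iInter.2 fun n => Metric.mem_closure_iff.2 fun ε hε => ?_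
    obtain ⟨m, hm, hd⟩ := h ε hε n
    exact ⟨_, ⟨m, hm, rfl⟩, by rw [dist_comm]; exact hd⟩
  have hinv : ∀ w ∈ W, f w ∈ W := by
    intro w hw
    apply hmem'
    intro ε hε n
    obtain ⟨δ, hδ, h⟩ := Metric.continuous_iff.1 hf w ε hε
    obtain ⟨m, hm, hd⟩ := hmem w hw δ hδ n
    refine ⟨m + 1, by omega, ?_⟩
    rw [Function.iterate_succ_apply']; exact h _ hd
  have hnear : ∀ ε > 0, ∃ n, ∀ m ≥ n, ∃ w ∈ W, dist (f^[m] x) w < ε := by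
    intro ε hε
    have hsub : ⋂ n : ℕ, closure ((fun k => f^[k] x) '' Set.Ici n) ⊆ Metric.thickening ε W :=
      Metric.self_subset_thickening hε _
    obtain ⟨n, hn⟩ := nested_subset_open (fun n : ℕ => closure ((fun k => f^[k] x) '' Set.Ici n))
      (fun n => closure_mono (image_mono (Ici_subset_Ici.2 (Nat.le_succ n))))
      (fun n => isClosed_closure) Metric.isOpen_thickening hsub
    refine ⟨n, fun m hm => ?_⟩
    have := hn (subset_closure ⟨m, hm, rfl⟩)
    exact Metric.mem_thickening_iff.1 this
  obtain ⟨r, hr, hsep⟩ : ∃ r > 0, ∀ a ∈ W, ∀ b ∈ W, dist a b < 2 * r → a = b := by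
    have h1 : ∀ᶠ r : ℝ in 𝓝[>] 0, ∀ q ∈ W ×ˢ W, dist q.1 q.2 < 2 * r → q.1 = q.2 := by
      rw [(hfin.prod hfin).eventually_all]
      rintro ⟨a, b⟩ _
      by_cases hab : a = b
      · simp [hab]
      · have : 0 < dist a b / 2 := by have := dist_pos.2 hab; linarith
        filter_upwards [Ioo_mem_nhdsGT this] with r hr h
        have h' : dist a b < 2 * r := h
        linarith [hr.2]
    obtain ⟨r, h, hr⟩ := (h1.and self_mem_nhdsWithin).exists
    exact ⟨r, hr, fun a ha b hb => h (a, b) ⟨ha, hb⟩⟩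
  obtain ⟨δ, hδ, hδ'⟩ := Metric.uniformContinuous_iff.1
    (CompactSpace.uniformContinuous_of_continuous hf) r hr
  obtain ⟨n0, hn0⟩ := hnear (min r δ) (lt_min hr hδ)
  choose! w hw1 hw2 using hn0
  have hstep : ∀ m ≥ n0, w (m + 1) = f (w m) := by
    intro m hm
    apply hsep _ (hw1 _ (by omega)) _ (hinv _ (hw1 _ hm))
    have h1 := lt_of_lt_of_le (hw2 (m + 1) (by omega)) (min_le_left _ _)
    have h2 := hδ' (lt_of_lt_of_le (hw2 m hm) (min_le_right _ _))
    rw [Function.iterate_succ_apply'] at h1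
    calc dist (w (m + 1)) (f (w m)) ≤ dist (w (m+1)) (f (f^[m] x)) + dist (f (f^[m] x)) (f (w m)) :=
          dist_triangle _ _ _
      _ < _ := by rw [dist_comm (w (m+1))]; linarith
  have hit : ∀ j, ∀ m ≥ n0, w (m + j) = f^[j] (w m) := by
    intro j m hm
    induction j with
    | zero => rfl
    | succ j ih => rw [← add_assoc, hstep _ (by omega), ih, Function.iterate_succ_apply']
  obtain ⟨m, hm, hmd⟩ := hmem (w n0) (hw1 _ le_rfl) r hr (n0 + 1)
  have hwm : w m = w n0 := by
    apply hsep _ (hw1 _ (by omega)) _ (hw1 _ le_rfl)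
    have h1 := lt_of_lt_of_le (hw2 m (by omega)) (min_le_left _ _)
    have := dist_triangle_left (w m) (w n0) (f^[m] x)
    linarith
  have hper : ∀ i, w (n0 + i + (m - n0)) = w (n0 + i) := by
    intro i
    rw [show n0 + i + (m - n0) = m + i by omega, hit i m (by omega), hwm, hit i n0 le_rfl]
  set k := m - n0 with hk
  have hk1 : 1 ≤ k := by omega
  have hconst : ∀ j, w (k * (n0 + j)) = w (k * n0) := by
    intro j
    induction j with
    | zero => rfl
    | succ j ih =>
      rw [← ih]
      have h1 : n0 ≤ k * (n0 + j) := by nlinarith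
      obtain ⟨i, hi⟩ := Nat.exists_eq_add_of_le h1
      rw [show k * (n0 + (j + 1)) = k * (n0 + j) + k by ring, hi]
      exact hper i
  have hkn : n0 ≤ k * n0 := by nlinarith
  refine ⟨k, hk1, w (k * n0), ?_, ?_⟩
  · rw [← hit k _ hkn]
    have := hconst 1
    rwa [show k * (n0 + 1) = k * n0 + k by ring] at this
  · rw [Metric.tendsto_atTop]
    intro ε hε
    obtain ⟨n1, hn1⟩ := hnear (min ε r) (lt_min hε hr)
    refine ⟨n0 + n1, fun j hj => ?_⟩
    obtain ⟨j', rfl⟩ := Nat.exists_eq_add_of_le (show n0 ≤ j by omega)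
    have h1 : n0 + n1 ≤ k * (n0 + j') := by nlinarith
    obtain ⟨v, hv, hvd⟩ := hn1 (k * (n0 + j')) (by omega)
    have hv' : v = w (k * (n0 + j')) := by
      apply hsep _ hv _ (hw1 _ (by omega))
      have a1 := lt_of_lt_of_le (hw2 (k * (n0 + j')) (by omega)) (min_le_left _ _)
      have a2 := lt_of_lt_of_le hvd (min_le_right _ _)
      have := dist_triangle_left v (w (k * (n0 + j'))) (f^[k * (n0 + j')] x)
      linarith
    rw [← hconst j', ← hv']
    exact lt_of_lt_of_le hvd (min_le_left _ _)

end TreeCR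

namespace TreeCR

theorem arc_data {X : Type*} [TopologicalSpace X] {A : Set X} (hA : IsArc A) :
    ∃ h : ℝ → X, Continuous h ∧ InjOn h (Icc 0 1) ∧ h '' Icc 0 1 = A := by
  obtain ⟨φ⟩ := hA
  refine ⟨fun t => (φ.symm (projIcc (0 : ℝ) 1 zero_le_one t) : X), ?_, ?_, ?_⟩
  · exact continuous_subtype_val.comp (φ.symm.continuous.comp continuous_projIcc)
  · intro s hs t ht h
    have h1 := φ.symm.injective (Subtype.val_injective h)
    rw [projIcc_of_mem _ hs, projIcc_of_mem _ ht] at h1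
    exact congrArg Subtype.val h1
  · ext w
    constructor
    · rintro ⟨t, _, rfl⟩
      exact (φ.symm _).2
    · intro hw
      refine ⟨φ ⟨w, hw⟩, (φ ⟨w, hw⟩).2, ?_⟩
      simp

theorem endpoint_eq {X : Type*} [TopologicalSpace X] [T2Space X] {h : ℝ → X} (hc : Continuous h)
    (hi : InjOn h (Icc 0 1)) {p : X} (hp : IsArcEndpoint (h '' Icc 0 1) p) :
    p = h 0 ∨ p = h 1 := by
  obtain ⟨⟨s, hs, rfl⟩, hcon⟩ := hp
  by_contra hne
  push Not at hne
  have hs0 : 0 < s := lt_of_le_of_ne hs.1 (by rintro rfl; exact hne.1 rfl)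
  have hs1 : s < 1 := lt_of_le_of_ne hs.2 (by rintro rfl; exact hne.2 rfl)
  have hcl := isPreconnected_closed_iff.1 hcon.isPreconnected (h '' Icc 0 s) (h '' Icc s 1)
    (isCompact_Icc.image hc).isClosed (isCompact_Icc.image hc).isClosed
    (by
      rintro _ ⟨⟨t, ht, rfl⟩, _⟩
      rcases le_total t s with h1 | h1
      · exact Or.inl ⟨t, ⟨ht.1, h1⟩, rfl⟩
      · exact Or.inr ⟨t, ⟨h1, ht.2⟩, rfl⟩)
    ⟨h 0, ⟨⟨0, by simp, rfl⟩, fun e => hne.1 e.symm⟩, ⟨0, ⟨le_rfl, hs.1⟩, rfl⟩⟩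
    ⟨h 1, ⟨⟨1, by simp, rfl⟩, fun e => hne.2 e.symm⟩, ⟨1, ⟨hs.2, le_rfl⟩, rfl⟩⟩
  obtain ⟨w, ⟨_, hws⟩, ⟨a, ha, rfl⟩, ⟨b, hb, hab⟩⟩ := hcl
  have := hi ⟨by linarith [hb.1], hb.2⟩ ⟨ha.1, by linarith [ha.2]⟩ hab
  have : a = s := le_antisymm ha.2 (by linarith [hb.1])
  exact hws (by rw [this]; rfl)

theorem mkEdge {X : Type*} [TopologicalSpace X] [T2Space X] {h : ℝ → X} (hc : Continuous h)
    (hi : InjOn h (Icc 0 1)) {K0 K1 : Set X} (c0 : IsClosed K0) (c1 : IsClosed K1)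
    (hd : Disjoint K0 K1) (h0 : h 0 ∈ K0) (h1 : h 1 ∈ K1)
    (i0 : ∀ t ∈ Icc (0 : ℝ) 1, h t ∈ K0 → t = 0) (i1 : ∀ t ∈ Icc (0 : ℝ) 1, h t ∈ K1 → t = 1)
    (hun : ∀ w, w ∈ K0 ∨ w ∈ K1 ∨ w ∈ h '' Icc 0 1) : ∃ e : Edge X, e.h = h := by
  classical
  let ρ : X → ℝ := fun w => if w ∈ K0 then 0 else if w ∈ K1 then 1 else invFunOn h (Icc 0 1) w
  have hρ0 : ∀ w ∈ K0, ρ w = 0 := fun w hw => by simp [ρ, hw]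
  have hρ1 : ∀ w ∈ K1, ρ w = 1 := fun w hw => by
    have hw0 : w ∉ K0 := fun h' => disjoint_left.1 hd h' hw
    simp [ρ, hw, hw0]
  have hρh : ∀ t ∈ Icc (0 : ℝ) 1, ρ (h t) = t := by
    intro t ht
    by_cases k0 : h t ∈ K0
    · rw [hρ0 _ k0, i0 t ht k0]
    by_cases k1 : h t ∈ K1
    · rw [hρ1 _ k1, i1 t ht k1]
    simp only [ρ, k0, k1, if_false]
    have hex : ∃ a ∈ Icc (0 : ℝ) 1, h a = h t := ⟨t, ht, rfl⟩
    exact hi (invFunOn_mem hex) ht (invFunOn_eq hex)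
  have hmem : ∀ w, ρ w ∈ Icc (0 : ℝ) 1 := by
    intro w
    rcases hun w with hw | hw | ⟨t, ht, rfl⟩
    · rw [hρ0 _ hw]; simp
    · rw [hρ1 _ hw]; simp
    · rw [hρh t ht]; exact ht
  refine ⟨⟨h, ρ, hc, ?_, fun w => (hmem w).1, fun w => (hmem w).2,
    fun t a b => hρh t ⟨a, b⟩, ?_⟩, rfl⟩
  · rw [continuous_iff_isClosed]
    intro C hC
    have : ρ ⁻¹' C = h '' (C ∩ Icc 0 1) ∪ (if (0:ℝ) ∈ C then K0 else ∅) ∪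
        (if (1:ℝ) ∈ C then K1 else ∅) := by
      ext w
      constructor
      · intro hw
        have hw : ρ w ∈ C := hw
        rcases hun w with k | k | ⟨t, ht, rfl⟩
        · rw [hρ0 _ k] at hw
          left; right; simpa [hw] using k
        · rw [hρ1 _ k] at hw
          right; simpa [hw] using k
        · rw [hρh t ht] at hw
          left; left; exact ⟨t, ⟨hw, ht⟩, rfl⟩
      · rintro ((⟨t, ⟨ht1, ht⟩, rfl⟩ | hw) | hw)
        · show ρ (h t) ∈ C
          rwa [hρh t ht]
        · show ρ w ∈ C
          split_ifs at hw with hC0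
          · rwa [hρ0 _ hw]
          · exact hw.elim
        · show ρ w ∈ C
          split_ifs at hw with hC0
          · rwa [hρ1 _ hw]
          · exact hw.elim
    rw [this]
    refine ((((isCompact_Icc.inter_left hC).image hc).isClosed).union ?_).union ?_
    · split_ifs <;> simp [c0]
    · split_ifs <;> simp [c1]
  · intro w a b
    rcases hun w with k | k | ⟨t, ht, rfl⟩
    · rw [hρ0 _ k] at a; exact absurd a (lt_irrefl _)
    · rw [hρ1 _ k] at b; exact absurd b (lt_irrefl _)
    · rw [hρh t ht]

/-- `a` and `b` are joined by a (possibly degenerate) arc in `K`. -/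
def Joined (X : Type*) [TopologicalSpace X] (K : Set X) (a b : X) : Prop :=
  ∃ (L : ℝ) (γ : ℝ → X), 0 ≤ L ∧ Continuous γ ∧ InjOn γ (Icc 0 L) ∧ γ 0 = a ∧ γ L = b ∧
    ∀ t ∈ Icc 0 L, γ t ∈ K

theorem joined_trans {X : Type*} [TopologicalSpace X] [T2Space X] {K : Set X} {a b c : X}
    (h1 : Joined X K a b) (h2 : Joined X K b c) : Joined X K a c := by
  obtain ⟨L, γ, hL, γc, γi, γ0, γ1, γK⟩ := h1
  obtain ⟨L', δ, hL', δc, δi, δ0, δ1, δK⟩ := h2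
  have hD : IsClosed (δ '' Icc 0 L') := (isCompact_Icc.image δc).isClosed
  have hS : IsCompact (Icc 0 L ∩ γ ⁻¹' (δ '' Icc 0 L')) :=
    isCompact_Icc.inter_right (hD.preimage γc)
  obtain ⟨s, ⟨hs, t0, ht0, hst⟩, hmin⟩ := hS.exists_isLeast
    ⟨L, ⟨hL, le_rfl⟩, ⟨0, ⟨le_rfl, hL'⟩, by rw [δ0, γ1]⟩⟩
  refine ⟨s + (L' - t0), fun t => if t ≤ s then γ t else δ (t - s + t0), by
    linarith [hs.1, ht0.2], ?_, ?_, ?_, ?_, ?_⟩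
  · refine Continuous.if_le γc (by fun_prop) continuous_id continuous_const ?_
    rintro t rfl
    simp [hst]
  · have key : ∀ t ∈ Icc 0 (s + (L' - t0)), ∀ t' ∈ Icc 0 (s + (L' - t0)), t ≤ s → s < t' →
        γ t ≠ δ (t' - s + t0) := by
      intro t ht t' ht' hts hst' he
      have hmem : t' - s + t0 ∈ Icc 0 L' := ⟨by linarith [ht0.1], by linarith [ht'.2]⟩
      have : s ≤ t := hmin ⟨⟨ht.1, by linarith [hs.2]⟩, ⟨_, hmem, he.symm⟩⟩
      have : t = s := le_antisymm hts this
      rw [this, ← hst] at he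
      have := δi ht0 hmem he
      linarith
    intro t ht t' ht' he
    simp only at he
    split_ifs at he with a b b
    · exact γi ⟨ht.1, by linarith [hs.2]⟩ ⟨ht'.1, by linarith [hs.2]⟩ he
    · exact absurd he (key t ht t' ht' a (not_le.1 b))
    · exact absurd he.symm (key t' ht' t ht b (not_le.1 a))
    · push Not at a b
      have := δi ⟨by linarith [ht0.1], by linarith [ht.2]⟩
        ⟨by linarith [ht0.1], by linarith [ht'.2]⟩ he
      linarith
  · simp [hs.1, γ0]
  · by_cases hz : L' - t0 ≤ 0
    · have : t0 = L' := by linarith [ht0.2]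
      simp [← hst, this, δ1]
    · simp [hz, δ1]
  · intro t ht
    simp only
    split_ifs with h
    · exact γK _ ⟨ht.1, by linarith [hs.2]⟩
    · exact δK _ ⟨by linarith [ht0.1], by linarith [ht.2]⟩

theorem loop_curve {X : Type*} [TopologicalSpace X] [T2Space X] {T : ℝ} (hT : 0 < T) (F : ℝ → X)
    (hF : Continuous F) (h0 : F 0 = F T) (hi : InjOn F (Ico 0 T)) :
    ∃ S : Set X, IsSimpleClosedCurve S := by
  have : Fact (0 < T) := ⟨hT⟩
  let G : AddCircle T → X := AddCircle.liftIco T 0 F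
  have hG : Continuous G := AddCircle.liftIco_zero_continuous h0 hF.continuousOn
  have hGi : Injective G := by
    intro u v huv
    have hrep : ∀ u : AddCircle T, ∃ t ∈ Ico 0 T, (t : AddCircle T) = u := by
      intro u
      have h := (AddCircle.equivIco T 0 u).2
      exact ⟨_, ⟨h.1, by linarith [h.2]⟩, (AddCircle.equivIco T 0).symm_apply_apply u⟩
    obtain ⟨s, hs, rfl⟩ := hrep u
    obtain ⟨t, ht, rfl⟩ := hrep v
    simp only [G] at huv
    rw [AddCircle.liftIco_zero_coe_apply hs, AddCircle.liftIco_zero_coe_apply ht] at huv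
    rw [hi hs ht huv]
  have hemb := (hG.isClosedEmbedding hGi).isEmbedding
  have e1 : AddCircle T ≃ₜ Circle := AddCircle.homeomorphCircle hT.ne'
  have e2 : Circle ≃ₜ Metric.sphere (0 : ℂ) 1 := Homeomorph.refl (Metric.sphere (0 : ℂ) 1)
  exact ⟨range G, ⟨hemb.toHomeomorph.symm.trans (e1.trans e2)⟩⟩

theorem tree_edge {X : Type*} [TopologicalSpace X] [T2Space X] (𝒜 : Finset (Set X))
    (hun : ⋃₀ (𝒜 : Set (Set X)) = Set.univ) (H : Set X → ℝ → X)
    (Hc : ∀ A ∈ 𝒜, Continuous (H A)) (Hi : ∀ A ∈ 𝒜, InjOn (H A) (Icc 0 1))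
    (HA : ∀ A ∈ 𝒜, H A '' Icc 0 1 = A)
    (hend : ∀ A ∈ 𝒜, ∀ B ∈ 𝒜, A ≠ B → ∀ p ∈ A, p ∈ B → p = H A 0 ∨ p = H A 1)
    (hns : ∀ S : Set X, ¬ IsSimpleClosedCurve S) (A : Set X) (hA : A ∈ 𝒜) :
    ∃ e : Edge X, e.h = H A := by
  classical
  let r : X → X → Prop := fun u w => ∃ B ∈ 𝒜, B ≠ A ∧
    ((u = H B 0 ∧ w = H B 1) ∨ (u = H B 1 ∧ w = H B 0))
  let R : X → Prop := fun w => Relation.ReflTransGen r (H A 0) w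
  have hmem : ∀ B ∈ 𝒜, ∀ t ∈ Icc (0:ℝ) 1, H B t ∈ B := fun B hB t ht => by
    have := mem_image_of_mem (H B) ht
    rwa [HA B hB] at this
  have hcl : ∀ B ∈ 𝒜, IsClosed B := fun B hB => by
    rw [← HA B hB]; exact (isCompact_Icc.image (Hc B hB)).isClosed
  have hm0 : ∀ B ∈ 𝒜, H B 0 ∈ B := fun B hB => hmem B hB 0 (by simp)
  have hm1 : ∀ B ∈ 𝒜, H B 1 ∈ B := fun B hB => hmem B hB 1 (by simp)
  have h01 : H A 0 ≠ H A 1 := fun h => by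
    have := Hi A hA (by simp) (by simp) h
    norm_num at this
  have hR01 : ∀ B ∈ 𝒜, B ≠ A → (R (H B 0) ↔ R (H B 1)) := by
    intro B hB hBA
    constructor
    · intro h; exact h.tail ⟨B, hB, hBA, Or.inl ⟨rfl, rfl⟩⟩
    · intro h; exact h.tail ⟨B, hB, hBA, Or.inr ⟨rfl, rfl⟩⟩
  have hRe : ∀ B ∈ 𝒜, B ≠ A → ∀ w, (w = H B 0 ∨ w = H B 1) → (R w ↔ R (H B 0)) := by
    rintro B hB hBA w (rfl | rfl)
    · rfl
    · exact (hR01 B hB hBA).symm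
  have hcov : ∀ w, ∃ B ∈ 𝒜, w ∈ B := fun w => by
    have : w ∈ ⋃₀ (𝒜 : Set (Set X)) := by rw [hun]; trivial
    obtain ⟨B, hB, hw⟩ := this
    exact ⟨B, hB, hw⟩
  by_cases hR : R (H A 1)
  · exfalso
    let K : Set X := {H A 0} ∪ {w | ∃ B ∈ 𝒜, B ≠ A ∧ w ∈ B}
    have hJ : ∀ w, R w → Joined X K (H A 0) w := by
      intro w hw
      induction hw with
      | refl =>
        refine ⟨0, fun _ => H A 0, le_rfl, continuous_const, ?_, rfl, rfl, fun t _ => Or.inl rfl⟩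
        intro s hs t ht _
        rw [le_antisymm hs.2 hs.1, le_antisymm ht.2 ht.1]
      | tail _ hr ih =>
        refine joined_trans ih ?_
        obtain ⟨B, hB, hBA, ⟨rfl, rfl⟩ | ⟨rfl, rfl⟩⟩ := hr
        · exact ⟨1, H B, zero_le_one, Hc B hB, Hi B hB, rfl, rfl,
            fun t ht => Or.inr ⟨B, hB, hBA, hmem B hB t ht⟩⟩
        · refine ⟨1, fun t => H B (1 - t), zero_le_one, (Hc B hB).comp (by fun_prop), ?_,
            by simp, by simp, fun t ht => Or.inr ⟨B, hB, hBA, hmem B hB _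
              ⟨by linarith [ht.2], by linarith [ht.1]⟩⟩⟩
          intro s hs t ht h
          have := Hi B hB ⟨by linarith [hs.2], by linarith [hs.1]⟩
            ⟨by linarith [ht.2], by linarith [ht.1]⟩ h
          linarith
    obtain ⟨L, γ, hL, γc, γi, γ0, γ1, γK⟩ := hJ _ hR
    have hL0 : 0 < L := lt_of_le_of_ne hL (by rintro rfl; exact h01 (γ0.symm.trans γ1))
    have hKA : ∀ t ∈ Icc (0:ℝ) 1, H A t ∈ K → t = 0 ∨ t = 1 := by
      intro t ht hK
      have : H A t = H A 0 ∨ H A t = H A 1 := by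
        rcases hK with h | ⟨B, hB, hBA, hw⟩
        · exact Or.inl h
        · exact hend A hA B hB hBA.symm _ (hmem A hA t ht) hw
      rcases this with h | h
      · exact Or.inl (Hi A hA ht (by simp) h)
      · exact Or.inr (Hi A hA ht (by simp) h)
    obtain ⟨S, hS⟩ := loop_curve (T := 1 + L) (by linarith)
      (fun t => if t ≤ 1 then H A t else γ (1 + L - t))
      (by
        refine Continuous.if_le (Hc A hA) (by fun_prop) continuous_id continuous_const ?_
        rintro t rfl
        simp [γ1])
      (by simp [γ0, hL0])
      (by
        have key : ∀ t ∈ Ico 0 (1 + L), ∀ t' ∈ Ico 0 (1 + L), t ≤ 1 → 1 < t' →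
            H A t ≠ γ (1 + L - t') := by
          intro t ht t' ht' ht1 ht1' he
          have hm : 1 + L - t' ∈ Icc 0 L := ⟨by linarith [ht'.2], by linarith⟩
          rcases hKA t ⟨ht.1, ht1⟩ (by rw [he]; exact γK _ hm) with rfl | rfl
          · rw [← γ0] at he
            have := γi ⟨le_rfl, hL⟩ hm he
            linarith [ht'.2]
          · rw [← γ1] at he
            have := γi ⟨hL, le_rfl⟩ hm he
            linarith
        intro t ht t' ht' he
        simp only at he
        split_ifs at he with a b b
        · exact Hi A hA ⟨ht.1, a⟩ ⟨ht'.1, b⟩ he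
        · exact absurd he (key t ht t' ht' a (not_le.1 b))
        · exact absurd he.symm (key t' ht' t ht b (not_le.1 a))
        · push Not at a b
          have := γi ⟨by linarith [ht.2], by linarith⟩ ⟨by linarith [ht'.2], by linarith⟩ he
          linarith)
    exact hns S hS
  · have hfin : ∀ Q : Set X → Prop, IsClosed {w | ∃ B ∈ 𝒜, Q B ∧ w ∈ B} := by
      intro Q
      have : {w | ∃ B ∈ 𝒜, Q B ∧ w ∈ B} = ⋃ B ∈ 𝒜.filter Q, B := by
        ext w; simp [and_assoc]
      rw [this]
      exact isClosed_biUnion_finset fun B hB => hcl B (Finset.mem_filter.1 hB).1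
    have hs : ∀ x : X, IsClosed ({x} : Set X) := fun x => isClosed_singleton
    refine mkEdge (K0 := {H A 0} ∪ {w | ∃ B ∈ 𝒜, (B ≠ A ∧ R (H B 0)) ∧ w ∈ B})
      (K1 := {H A 1} ∪ {w | ∃ B ∈ 𝒜, (B ≠ A ∧ ¬ R (H B 0)) ∧ w ∈ B}) (Hc A hA) (Hi A hA)
      ((hs _).union (hfin _)) ((hs _).union (hfin _)) ?_ (Or.inl rfl) (Or.inl rfl) ?_ ?_ ?_
    · rw [disjoint_left]
      rintro w (h | ⟨B, hB, ⟨hBA, hBR⟩, hwB⟩) (h' | ⟨B', hB', ⟨hBA', hBR'⟩, hwB'⟩)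
      · exact h01 (h.symm.trans h')
      · have h : w = H A 0 := h
        subst h
        exact hBR' ((hRe B' hB' hBA' _ (hend B' hB' A hA hBA' _ hwB' (hm0 A hA))).1 .refl)
      · have h' : w = H A 1 := h'
        subst h'
        exact hR ((hRe B hB hBA _ (hend B hB A hA hBA _ hwB (hm1 A hA))).2 hBR)
      · have hne : B ≠ B' := by rintro rfl; exact hBR' hBR
        have h1 := (hRe B hB hBA _ (hend B hB B' hB' hne _ hwB hwB')).2 hBR
        exact hBR' ((hRe B' hB' hBA' _ (hend B' hB' B hB hne.symm _ hwB' hwB)).1 h1)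
    · rintro t ht (h | ⟨B, hB, ⟨hBA, hBR⟩, hwB⟩)
      · exact Hi A hA ht (by simp) h
      · rcases hend A hA B hB hBA.symm _ (hmem A hA t ht) hwB with h | h
        · exact Hi A hA ht (by simp) h
        · rw [h] at hwB
          exact absurd ((hRe B hB hBA _ (hend B hB A hA hBA _ hwB (hm1 A hA))).2 hBR) hR
    · rintro t ht (h | ⟨B, hB, ⟨hBA, hBR⟩, hwB⟩)
      · exact Hi A hA ht (by simp) h
      · rcases hend A hA B hB hBA.symm _ (hmem A hA t ht) hwB with h | h
        · rw [h] at hwB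
          exact absurd ((hRe B hB hBA _ (hend B hB A hA hBA _ hwB (hm0 A hA))).1 .refl) hBR
        · exact Hi A hA ht (by simp) h
    · intro w
      obtain ⟨B, hB, hw⟩ := hcov w
      by_cases hBA : B = A
      · right; right; rw [HA A hA, ← hBA]; exact hw
      · by_cases hBR : R (H B 0)
        · left; right; exact ⟨B, hB, ⟨hBA, hBR⟩, hw⟩
        · right; left; right; exact ⟨B, hB, ⟨hBA, hBR⟩, hw⟩

theorem tree_edges {X : Type*} [MetricSpace X] (hX : IsTree X) :
    ∃ (n : ℕ) (E : Fin n → Edge X), (∀ w, ∃ i, ∃ t, 0 ≤ t ∧ t ≤ 1 ∧ (E i).h t = w) ∧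
      ∀ i, ∃ j, E j = (E i).rev := by
  classical
  obtain ⟨_, _, ⟨𝒜, harc, hun, hint⟩, hns⟩ := hX
  have hex : ∀ A ∈ 𝒜, ∃ h : ℝ → X, Continuous h ∧ InjOn h (Icc 0 1) ∧ h '' Icc 0 1 = A :=
    fun A hA => arc_data (harc A hA)
  have hne : Nonempty X := inferInstance
  choose! H Hc Hi HA using hex
  have hend : ∀ A ∈ 𝒜, ∀ B ∈ 𝒜, A ≠ B → ∀ p ∈ A, p ∈ B → p = H A 0 ∨ p = H A 1 := by
    intro A hA B hB hAB p hpA hpB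
    have := (hint A hA B hB hAB p ⟨hpA, hpB⟩).1
    rw [← HA A hA] at this
    exact endpoint_eq (Hc A hA) (Hi A hA) this
  have he : ∀ A : 𝒜, ∃ e : Edge X, e.h = H A := fun A =>
    tree_edge 𝒜 hun H Hc Hi HA hend hns A A.2
  choose e heq using he
  let E : 𝒜 × Bool → Edge X := fun q => if q.2 then e q.1 else (e q.1).rev
  have hrev : ∀ e : Edge X, e.rev.rev = e := by
    intro e
    cases e
    simp [Edge.rev]
  let φ := (Fintype.equivFin (𝒜 × Bool)).symm
  refine ⟨_, E ∘ φ, ?_, ?_⟩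
  · intro w
    have : w ∈ ⋃₀ (𝒜 : Set (Set X)) := by rw [hun]; trivial
    obtain ⟨B, hB, hw⟩ := this
    rw [← HA B hB] at hw
    obtain ⟨t, ht, rfl⟩ := hw
    refine ⟨φ.symm (⟨B, hB⟩, true), t, ht.1, ht.2, ?_⟩
    simp [E, heq]
  · intro i
    refine ⟨φ.symm ((φ i).1, !(φ i).2), ?_⟩
    simp only [Function.comp, Equiv.apply_symm_apply, E]
    cases (φ i).2 <;> simp [hrev]

end TreeCR

namespace TreeCR

/-- Closed connected strongly invariant sets containing `p` and missing `x`. -/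
def Good {X : Type*} [TopologicalSpace X] (g : X → X) (p x : X) (Y : Set X) : Prop :=
  IsClosed Y ∧ IsPreconnected Y ∧ g '' Y = Y ∧ p ∈ Y ∧ x ∉ Y

theorem exists_maximal {X ι : Type*} [TopologicalSpace X] [T2Space X] [CompactSpace X] [Finite ι]
    (E : ι → Edge X) (hE : ∀ w, ∃ i, ∃ t, 0 ≤ t ∧ t ≤ 1 ∧ (E i).h t = w) (g : X → X)
    (hg : Continuous g) {p x : X} (hp : g p = p) (hxp : x ≠ p) (hper : x ∉ periodicPts g) :
    ∃ Y, Good g p x Y ∧ ∀ Z, Good g p x Z → Y ⊆ Z → Z ⊆ Y := by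
  obtain ⟨Y, _, hY⟩ := zorn_subset_nonempty {Y | Good g p x Y} (by
    intro c hc hch hne
    have hU : IsPreconnected (⋃₀ c) :=
      isPreconnected_sUnion p c (fun s hs => (hc hs).2.2.2.1) (fun s hs => (hc hs).2.1)
    have hgU : g '' (⋃₀ c) = ⋃₀ c := by
      rw [image_sUnion]
      ext w
      constructor
      · rintro ⟨_, ⟨s, hs, rfl⟩, hw⟩
        have h1 : g '' s = s := (hc hs).2.2.1
        have hw : w ∈ g '' s := hw
        rw [h1] at hw
        exact ⟨s, hs, hw⟩
      · rintro ⟨s, hs, hw⟩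
        refine ⟨g '' s, ⟨s, hs, rfl⟩, ?_⟩
        have h1 : g '' s = s := (hc hs).2.2.1
        rwa [h1]
    have hgc : g '' closure (⋃₀ c) = closure (⋃₀ c) := by
      apply Subset.antisymm
      · have := image_closure_subset_closure_image hg (s := ⋃₀ c)
        rwa [hgU] at this
      · apply closure_minimal
        · conv_lhs => rw [← hgU]
          exact image_mono subset_closure
        · exact (isClosed_closure.isCompact.image hg).isClosed
    refine ⟨closure (⋃₀ c), ⟨isClosed_closure, hU.closure, hgc, ?_, ?_⟩,
      fun s hs => (subset_sUnion_of_mem hs).trans subset_closure⟩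
    · obtain ⟨s, hs⟩ := hne
      exact subset_closure ⟨s, hs, (hc hs).2.2.2.1⟩
    · intro hx
      refine hper (finite_back g (closure (⋃₀ c) \ ⋃₀ c) (closure_diff_finite E hE hU)
        ⟨hx, ?_⟩ ?_)
      · rintro ⟨s, hs, h⟩
        exact (hc hs).2.2.2.2 h
      · rintro e ⟨he, heU⟩
        rw [← hgc] at he
        obtain ⟨e', he', rfl⟩ := he
        refine ⟨e', ⟨he', fun h => heU ?_⟩, rfl⟩
        rw [← hgU]
        exact mem_image_of_mem _ h) {p}
    ⟨isClosed_singleton, isPreconnected_singleton, by simp [hp], rfl, hxp⟩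
  exact ⟨Y, hY.prop, fun Z hZ hYZ => hY.le_of_ge hZ hYZ⟩

/-- The top level of `Y` on an edge. -/
noncomputable def bb {X : Type*} [TopologicalSpace X] (e : Edge X) (Y : Set X) : ℝ := sSup (e.ρ '' Y)

theorem le_bb {X : Type*} [TopologicalSpace X] (e : Edge X) {Y : Set X} {y : X} (hy : y ∈ Y) :
    e.ρ y ≤ bb e Y :=
  le_csSup ⟨1, by rintro _ ⟨w, _, rfl⟩; exact e.ρ1 w⟩ (mem_image_of_mem _ hy)

theorem bb_nonneg {X : Type*} [TopologicalSpace X] (e : Edge X) (Y : Set X) : 0 ≤ bb e Y :=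
  Real.sSup_nonneg (by rintro _ ⟨w, _, rfl⟩; exact e.ρ0 w)

/-- The small neighbourhoods of `Y`. -/
def NN {X ι : Type*} [TopologicalSpace X] (E : ι → Edge X) (Y : Set X) (t : ℝ) : Set X :=
  Y ∪ ⋃ i, ⋃ (_ : bb (E i) Y < 1 ∧ (E i).h (bb (E i) Y) ∈ Y),
    (E i).h '' Icc (bb (E i) Y) (bb (E i) Y + t * (1 - bb (E i) Y))

section
variable {X ι : Type*} [TopologicalSpace X] [T2Space X] (E : ι → Edge X) {Y : Set X}

theorem mem_NN {t : ℝ} {w : X} : w ∈ NN E Y t ↔ w ∈ Y ∨ ∃ i, (bb (E i) Y < 1 ∧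
    (E i).h (bb (E i) Y) ∈ Y) ∧ ∃ s ∈ Icc (bb (E i) Y) (bb (E i) Y + t * (1 - bb (E i) Y)),
      (E i).h s = w := by
  simp only [NN, mem_union, mem_iUnion, exists_prop, mem_image]

theorem NN_closed [Finite ι] (hY : IsClosed Y) (t : ℝ) : IsClosed (NN E Y t) :=
  hY.union (isClosed_iUnion_of_finite fun _ => isClosed_iUnion_of_finite fun _ =>
    (isCompact_Icc.image (E _).hc).isClosed)

theorem NN_mono {t t' : ℝ} (h : t ≤ t') : NN E Y t ⊆ NN E Y t' := by
  intro w hw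
  rw [mem_NN] at *
  rcases hw with hw | ⟨i, hi, s, hs, rfl⟩
  · exact Or.inl hw
  · exact Or.inr ⟨i, hi, s, ⟨hs.1, by nlinarith [hs.2, hi.1]⟩, rfl⟩

theorem NN_preconnected (hY : IsPreconnected Y) {p : X} (hp : p ∈ Y) {t : ℝ} (ht : 0 ≤ t) :
    IsPreconnected (NN E Y t) := by
  refine isPreconnected_of_forall p fun w hw => ?_
  rw [mem_NN] at hw
  rcases hw with hw | ⟨i, hi, s, hs, rfl⟩
  · exact ⟨Y, subset_union_left, hp, hw, hY⟩
  · refine ⟨Y ∪ (E i).h '' Icc (bb (E i) Y) (bb (E i) Y + t * (1 - bb (E i) Y)), ?_,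
      Or.inl hp, Or.inr ⟨s, hs, rfl⟩, ?_⟩
    · rintro w (hw | ⟨s', hs', rfl⟩)
      · exact Or.inl hw
      · exact (mem_NN E).2 (Or.inr ⟨i, hi, s', hs', rfl⟩)
    · refine IsPreconnected.union ((E i).h (bb (E i) Y)) hi.2 ⟨_, ⟨le_rfl, ?_⟩, rfl⟩ hY
        (isPreconnected_Icc.image _ (E i).hc.continuousOn)
      nlinarith [hi.1]

theorem NN_subset_open [Finite ι] {U : Set X} (hU : IsOpen U) (hYU : Y ⊆ U) :
    ∀ᶠ t : ℝ in 𝓝[>] 0, NN E Y t ⊆ U := by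
  have : ∀ᶠ t : ℝ in 𝓝[>] 0, ∀ i, (bb (E i) Y < 1 ∧ (E i).h (bb (E i) Y) ∈ Y) →
      ∀ s ∈ Icc (bb (E i) Y) (bb (E i) Y + t * (1 - bb (E i) Y)), (E i).h s ∈ U := by
    rw [eventually_all]
    intro i
    by_cases hi : bb (E i) Y < 1 ∧ (E i).h (bb (E i) Y) ∈ Y
    · have hn : (E i).h ⁻¹' U ∈ 𝓝 (bb (E i) Y) :=
        (hU.preimage (E i).hc).mem_nhds (hYU hi.2)
      obtain ⟨δ, hδ, hb⟩ := Metric.mem_nhds_iff.1 hn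
      filter_upwards [Ioo_mem_nhdsGT hδ] with t ht _ s hs
      apply hb
      rw [Metric.mem_ball, Real.dist_eq, abs_of_nonneg (by linarith [hs.1])]
      have := bb_nonneg (E i) Y
      nlinarith [hs.2, ht.1, ht.2, mul_nonneg ht.1.le this]
    · exact Eventually.of_forall fun t h => absurd h hi
  filter_upwards [this] with t ht w hw
  rw [mem_NN] at hw
  rcases hw with hw | ⟨i, hi, s, hs, rfl⟩
  · exact hYU hw
  · exact ht i hi s hs

theorem NN_right (hY : IsPreconnected Y) {t : ℝ} (ht : 0 < t) (i : ι) {s : ℝ} (hs0 : 0 ≤ s)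
    (hs1 : s ≤ 1) (hsY : (E i).h s ∈ Y) :
    ∃ ε > 0, ∀ s', s ≤ s' → s' < s + ε → s' ≤ 1 → (E i).h s' ∈ NN E Y t := by
  have hle := le_bb (E i) hsY
  have hρ := (E i).ρh s hs0 hs1
  rw [hρ] at hle
  rcases hle.lt_or_eq with hlt | heq
  · refine ⟨bb (E i) Y - s, by linarith, fun s' h1 h2 h3 => Or.inl ?_⟩
    rcases h1.eq_or_lt with rfl | h1
    · exact hsY
    obtain ⟨_, ⟨w, hw, rfl⟩, hw2⟩ := exists_lt_of_lt_csSup (⟨_, mem_image_of_mem _ hsY⟩ :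
      ((E i).ρ '' Y).Nonempty) (show s' < sSup ((E i).ρ '' Y) by unfold bb at h2; linarith)
    exact (E i).cov_open hY hsY hw (by rw [hρ]; exact h1) hw2
  · rcases hs1.lt_or_eq with hs1 | hs1
    · refine ⟨t * (1 - s), mul_pos ht (by linarith), fun s' h1 h2 h3 => ?_⟩
      rw [mem_NN]
      exact Or.inr ⟨i, by rw [← heq]; exact ⟨hs1, hsY⟩, s', by rw [← heq]; exact ⟨h1, h2.le⟩, rfl⟩
    · refine ⟨1, one_pos, fun s' h1 h2 h3 => Or.inl ?_⟩
      rwa [show s' = s by linarith]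

theorem NN_nhds [Finite ι] (hE : ∀ w, ∃ i, ∃ t, 0 ≤ t ∧ t ≤ 1 ∧ (E i).h t = w)
    (hrev : ∀ i, ∃ j, E j = (E i).rev) (hY : IsPreconnected Y)
    {t : ℝ} (ht : 0 < t) : Y ⊆ interior (NN E Y t) := by
  intro y hy
  rw [interior_eq_compl_closure_compl]
  intro hcl
  have hsub : (NN E Y t)ᶜ ⊆ ⋃ i, (E i).h '' {s | s ∈ Icc (0:ℝ) 1 ∧ (E i).h s ∉ NN E Y t} := by
    intro w hw
    obtain ⟨i, s, h0, h1, rfl⟩ := hE w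
    exact mem_iUnion.2 ⟨i, s, ⟨⟨h0, h1⟩, hw⟩, rfl⟩
  have h2 := closure_mono hsub hcl
  rw [closure_iUnion_of_finite] at h2
  obtain ⟨i, hi⟩ := mem_iUnion.1 h2
  set S := {s | s ∈ Icc (0:ℝ) 1 ∧ (E i).h s ∉ NN E Y t} with hS
  have hSI : closure S ⊆ Icc (0:ℝ) 1 := closure_minimal (fun s hs => hs.1) isClosed_Icc
  have hSc : IsCompact (closure S) := isCompact_Icc.of_isClosed_subset isClosed_closure hSI
  have hi' : y ∈ (E i).h '' closure S :=
    closure_minimal (image_mono subset_closure) (hSc.image (E i).hc).isClosed hi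
  obtain ⟨s, hs, rfl⟩ := hi'
  obtain ⟨h0, h1⟩ := hSI hs
  obtain ⟨ε1, hε1, hr⟩ := NN_right E hY ht i h0 h1 hy
  obtain ⟨j, hj⟩ := hrev i
  have hy' : (E j).h (1 - s) ∈ Y := by rw [hj]; simpa [Edge.rev] using hy
  obtain ⟨ε2, hε2, hl⟩ := NN_right E hY ht j (by linarith) (by linarith) hy'
  obtain ⟨s', ⟨hs'I, hs'N⟩, hd⟩ := Metric.mem_closure_iff.1 hs (min ε1 ε2) (lt_min hε1 hε2)
  rw [Real.dist_eq] at hd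
  have hd1 := lt_of_lt_of_le hd (min_le_left _ _)
  have hd2 := lt_of_lt_of_le hd (min_le_right _ _)
  rw [abs_lt] at hd1 hd2
  apply hs'N
  rcases le_total s s' with h | h
  · exact hr s' h (by linarith) hs'I.2
  · have := hl (1 - s') (by linarith) (by linarith) (by linarith [hs'I.1])
    rw [hj] at this
    simpa [Edge.rev] using this

end

end TreeCR

namespace TreeCR

theorem exists_orbit {X ι : Type*} [MetricSpace X] [CompactSpace X] [Finite ι]
    (E : ι → Edge X) (hE : ∀ w, ∃ i, ∃ t, 0 ≤ t ∧ t ≤ 1 ∧ (E i).h t = w)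
    (hrev : ∀ i, ∃ j, E j = (E i).rev)
    (f : X → X) (hf : Continuous f) {x p : X} (hx : x ∈ chainRecurrentSet f) {k : ℕ} (hk : 1 ≤ k)
    (hp : f^[k] p = p) (hper : x ∉ periodicPts f^[k])
    (hlim : Tendsto (fun j => (f^[k])^[j] x) atTop (𝓝 p))
    {Y : Set X} (hY : Good f^[k] p x Y) (hmax : ∀ Z, Good f^[k] p x Z → Y ⊆ Z → Z ⊆ Y)
    {t : ℝ} (ht : 0 < t) (hxN : x ∉ NN E Y t) : ∃ r, ∃ w ∈ NN E Y t, (f^[k])^[r] w = x := by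
  have hg : Continuous f^[k] := hf.iterate k
  set g := f^[k] with hgdef
  obtain ⟨Yc, Yp, Yg, pY, xY⟩ := hY
  set N := NN E Y t with hN
  have hYN : Y ⊆ N := subset_union_left
  have hNc : IsClosed N := NN_closed E Yc t
  have hNp : IsPreconnected N := NN_preconnected E Yp pY ht.le
  have hYi : Y ⊆ interior N := NN_nhds E hE hrev Yp ht
  have hpn : ∀ n, g^[n] p = p := fun n => Function.iterate_fixed hp n
  have hYn : ∀ n, g^[n] '' Y = Y := by
    intro n
    induction n with
    | zero => simp
    | succ n ih => rw [Function.iterate_succ, image_comp, Yg, ih]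
  set G := ⋃ n, g^[n] '' N with hG
  have hGp : IsPreconnected G := isPreconnected_iUnion
    ⟨p, mem_iInter.2 fun n => ⟨p, hYN pY, hpn n⟩⟩
    (fun n => hNp.image _ (hg.iterate n).continuousOn)
  have hNG : N ⊆ G := fun w hw => mem_iUnion.2 ⟨0, w, hw, rfl⟩
  have hgG : MapsTo g G G := by
    rintro _ hw
    obtain ⟨n, v, hv, rfl⟩ := mem_iUnion.1 hw
    exact mem_iUnion.2 ⟨n + 1, v, hv, Function.iterate_succ_apply' _ _ _⟩
  set H := closure G with hH
  have hHp : IsPreconnected H := hGp.closure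
  have hHc : IsClosed H := isClosed_closure
  have hNH : N ⊆ H := hNG.trans subset_closure
  have hgH : MapsTo g H H := hgG.closure hg
  have hHsub : H ⊆ N ∪ g '' H := by
    apply closure_minimal
    · intro w hw
      obtain ⟨n, v, hv, rfl⟩ := mem_iUnion.1 hw
      cases n with
      | zero => exact Or.inl hv
      | succ n =>
        right
        rw [Function.iterate_succ_apply']
        exact mem_image_of_mem _ (subset_closure (mem_iUnion.2 ⟨n, v, hv, rfl⟩))
    · exact hNc.union (hHc.isCompact.image hg).isClosed
  have hxH : x ∈ H := by
    by_contra hxH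
    let K : ℕ → Set X := fun n => g^[n] '' H
    have hKs : ∀ n, K (n + 1) = g '' K n := by
      intro n
      simp only [K]
      rw [Function.iterate_succ', image_comp]
    have hKd : ∀ n, K (n + 1) ⊆ K n := by
      intro n
      simp only [K]
      rw [Function.iterate_succ, image_comp]
      exact image_mono hgH.image_subset
    have hKc : ∀ n, IsClosed (K n) := fun n => (hHc.isCompact.image (hg.iterate n)).isClosed
    have hKp : ∀ n, IsPreconnected (K n) := fun n => hHp.image _ (hg.iterate n).continuousOn
    have hYK : ∀ n, Y ⊆ K n := fun n => by
      conv_lhs => rw [← hYn n]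
      exact image_mono (hYN.trans hNH)
    have hgood : Good g p x (⋂ n, K n) := by
      refine ⟨isClosed_iInter hKc, nested_preconnected K hKd hKc hKp, ?_,
        mem_iInter.2 fun n => hYK n pY, fun h => hxH ?_⟩
      · apply Subset.antisymm
        · rintro _ ⟨w, hw, rfl⟩
          refine mem_iInter.2 fun n => hKd n ?_
          rw [hKs]
          exact mem_image_of_mem _ (mem_iInter.1 hw n)
        · intro w hw
          apply nested_image g hg K hKd hKc
          intro n
          rw [← hKs]
          exact mem_iInter.1 hw (n + 1)
      · have := mem_iInter.1 h 0
        simpa [K] using this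
    have hsub := hmax _ hgood (subset_iInter hYK)
    have hYH : Y ⊆ interior H := hYi.trans (interior_mono hNH)
    obtain ⟨n, hn⟩ := nested_subset_open K hKd hKc isOpen_interior (hsub.trans hYH)
    have hn1 : K (n + 1) ⊆ interior H := (hKd n).trans hn
    have hev : ∀ᶠ j in atTop, g^[j] x ∈ interior H :=
      hlim.eventually (isOpen_interior.mem_nhds (hYH pY))
    obtain ⟨m, hm⟩ := eventually_atTop.1 hev
    apply hxH
    refine trap f hf hx (k * (n + 1)) (Nat.mul_pos hk (Nat.succ_pos n)) H hHc ?_ m ?_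
    · rw [Function.iterate_mul]; exact hn1
    · rw [mul_assoc, Function.iterate_mul]
      exact hm _ (by nlinarith)
  by_cases hxG : x ∈ G
  · obtain ⟨n, w, hw, h⟩ := mem_iUnion.1 hxG
    exact ⟨n, w, hw, h⟩
  · exfalso
    refine hper (finite_back g (H \ G) (closure_diff_finite E hE hGp) ⟨hxH, hxG⟩ ?_)
    rintro e ⟨he, heG⟩
    rcases hHsub he with h | ⟨e', he', rfl⟩
    · exact absurd (hNG h) heG
    · exact ⟨e', ⟨he', fun h => heG (hgG h)⟩, rfl⟩

theorem levels {X ι : Type*} [TopologicalSpace X] [T2Space X] [Finite ι]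
    (E : ι → Edge X) (hE : ∀ w, ∃ i, ∃ t, 0 ≤ t ∧ t ≤ 1 ∧ (E i).h t = w)
    (hrev : ∀ i, ∃ j, E j = (E i).rev) (g : X → X) (hg : Continuous g) {Y : Set X}
    (hY : IsPreconnected Y) (hgY : g '' Y ⊆ Y) {x : X} (hx : x ∉ Y) :
    ∃ T : ℕ → ℝ, (∀ j, 0 < T j ∧ T j < 1) ∧ x ∉ NN E Y (T 0) ∧ (∀ j, T (j + 1) < T j) ∧
      ∀ j, MapsTo g (NN E Y (T (j + 1))) (NN E Y (T j)) := by
  have hnext : ∀ t : ℝ, 0 < t → ∃ t', 0 < t' ∧ t' < t ∧ MapsTo g (NN E Y t') (NN E Y t) := by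
    intro t ht
    have hsub : Y ⊆ g ⁻¹' interior (NN E Y t) := fun y hy =>
      NN_nhds E hE hrev hY ht (hgY (mem_image_of_mem _ hy))
    obtain ⟨t', h1, h2⟩ := ((NN_subset_open E (isOpen_interior.preimage hg) hsub).and
      (Ioo_mem_nhdsGT ht)).exists
    exact ⟨t', h2.1, h2.2, fun w hw => interior_subset (h1 hw)⟩
  obtain ⟨t0, h1, h2⟩ := ((NN_subset_open E (isOpen_compl_singleton (x := x))
    (fun y hy h => hx (by rw [← show y = x from h]; exact hy))).and
      (Ioo_mem_nhdsGT (zero_lt_one' ℝ))).exists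
  choose! nx n1 n2 n3 using hnext
  let T : ℕ → ℝ := fun j => nx^[j] t0
  have hTs : ∀ j, T (j + 1) = nx (T j) := fun j => Function.iterate_succ_apply' _ _ _
  have hT0 : ∀ j, 0 < T j := by
    intro j
    induction j with
    | zero => exact h2.1
    | succ j ih => rw [hTs]; exact n1 _ ih
  have hT1 : ∀ j, T j < 1 := by
    intro j
    induction j with
    | zero => exact h2.2
    | succ j ih => rw [hTs]; exact (n2 _ (hT0 j)).trans ih
  refine ⟨T, fun j => ⟨hT0 j, hT1 j⟩, fun h => h1 h rfl, fun j => ?_, fun j => ?_⟩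
  · rw [hTs]; exact n2 _ (hT0 j)
  · rw [hTs]; exact n3 _ (hT0 j)

theorem main {X : Type*} [MetricSpace X] [CompactSpace X] {n : ℕ}
    (E : Fin n → Edge X) (hE : ∀ w, ∃ i, ∃ t, 0 ≤ t ∧ t ≤ 1 ∧ (E i).h t = w)
    (hrev : ∀ i, ∃ j, E j = (E i).rev)
    (f : X → X) (hf : Continuous f) {x p : X} (hx : x ∈ chainRecurrentSet f) {k : ℕ} (hk : 1 ≤ k)
    (hp : f^[k] p = p) (hper : x ∉ periodicPts f^[k])
    (hlim : Tendsto (fun j => (f^[k])^[j] x) atTop (𝓝 p)) : topEntropy f ≠ 0 := by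
  classical
  have hg : Continuous f^[k] := hf.iterate k
  have hxp : x ≠ p := by
    rintro rfl
    exact hper (mem_periodicPts.2 ⟨1, one_pos, hp⟩)
  obtain ⟨Y, hY, hmax⟩ := exists_maximal E hE _ hg hp hxp hper
  obtain ⟨T, hT, hxN, hTd, hTm⟩ := levels E hE hrev _ hg hY.2.1 hY.2.2.1.subset hY.2.2.2.2
  have hanti : StrictAnti T := strictAnti_nat_of_succ_lt hTd
  have horb := fun t ht hxt => exists_orbit E hE hrev f hf hx hk hp hper hlim hY hmax (t := t) ht hxt
  obtain ⟨g, hgdef⟩ : ∃ g, g = f^[k] := ⟨_, rfl⟩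
  rw [← hgdef] at hp hper hlim hg hY hTm
  simp only [← hgdef] at hlim horb
  obtain ⟨Yc, Yp, Yg, pY, xY⟩ := hY
  have hxj : ∀ j, x ∉ NN E Y (T j) := fun j h => hxN (NN_mono E (hanti.antitone (Nat.zero_le j)) h)
  obtain ⟨r, w, hw, hwr⟩ := horb (T (n + 1)) (hT _).1 (hxj _)
  -- last exit times
  let τ : ℕ → ℕ := fun j => Nat.findGreatest (fun m => g^[m] w ∈ NN E Y (T j)) r
  have hτN : ∀ j ≤ n + 1, g^[τ j] w ∈ NN E Y (T j) := by
    intro j hj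
    exact Nat.findGreatest_spec (P := fun m => g^[m] w ∈ NN E Y (T j)) (Nat.zero_le r)
      (NN_mono E (hanti.antitone hj) hw)
  have hτr : ∀ j ≤ n + 1, τ j < r := by
    intro j hj
    refine lt_of_le_of_ne (Nat.findGreatest_le r) fun h => hxj j ?_
    have := hτN j hj
    rwa [h, hwr] at this
  have hτout : ∀ j ≤ n + 1, g (g^[τ j] w) ∉ NN E Y (T j) := by
    intro j hj
    rw [← Function.iterate_succ_apply' g]
    exact Nat.findGreatest_is_greatest (P := fun m => g^[m] w ∈ NN E Y (T j))
      (Nat.lt_succ_self _) (hτr j hj)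
  have hτle : ∀ j j', j ≤ j' → j' ≤ n + 1 → τ j' ≤ τ j := by
    intro j j' h h'
    exact Nat.le_findGreatest (hτr j' h').le (NN_mono E (hanti.antitone h) (hτN j' h'))
  have hdat : ∀ j : Fin (n + 1), ∃ i : Fin n, ∃ s : ℝ, (bb (E i) Y < 1 ∧
      (E i).h (bb (E i) Y) ∈ Y) ∧ bb (E i) Y + T (j + 1) * (1 - bb (E i) Y) < s ∧
      s ≤ bb (E i) Y + T j * (1 - bb (E i) Y) ∧ (E i).h s = g^[τ j] w := by
    intro j
    have hj : (j : ℕ) ≤ n + 1 := j.2.le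
    have hnot : g^[τ j] w ∉ NN E Y (T (j + 1)) := fun h => hτout j hj (hTm _ h)
    have hin := hτN j hj
    rw [mem_NN] at hin hnot
    push Not at hnot
    rcases hin with h | ⟨i, hi, s, hs, hsw⟩
    · exact absurd h hnot.1
    · refine ⟨i, s, hi, ?_, hs.2, hsw⟩
      by_contra hcon
      exact hnot.2 i hi s ⟨hs.1, not_lt.1 hcon⟩ hsw
  choose I S hS1 hS2 hS3 hS4 using hdat
  obtain ⟨j, j', hne, hI⟩ := Fintype.exists_ne_map_eq_of_card_lt I (by simp)
  wlog hlt : j < j' generalizing j j'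
  · exact this j' j hne.symm hI.symm (lt_of_le_of_ne (not_lt.1 hlt) hne.symm)
  have a1 := hS1 j'
  have a2 := hS2 j'
  have a3 := hS3 j'
  have a4 := hS4 j'
  rw [← hI] at a1 a2 a3 a4
  have c2 := hS2 j
  have c3 := hS3 j
  have c4 := hS4 j
  have hb0 := bb_nonneg (E (I j)) Y
  have hρp := le_bb (E (I j)) pY
  have hρm : ∀ m, (E (I j)).ρ (g^[m] ((E (I j)).h (bb (E (I j)) Y))) ≤ bb (E (I j)) Y := by
    intro m
    apply le_bb
    have hYm : MapsTo g Y Y := fun y hy => Yg.subset (mem_image_of_mem _ hy)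
    exact hYm.iterate m a1.2
  set b := bb (E (I j)) Y with hb
  have hpos : 0 < 1 - b := by linarith [a1.1]
  have hTj : T j' ≤ T (j + 1) := hanti.antitone (by
    have : (j : ℕ) < j' := hlt
    omega)
  have hyz : S j' < S j := by nlinarith
  have hby : b < S j' := by nlinarith [mul_pos (hT (j' + 1)).1 hpos]
  have hz1 : S j < 1 := by nlinarith [mul_pos (sub_pos.2 (hT j).2) hpos]
  have hττ := hτle j j' (by exact_mod_cast hlt.le) j'.2.le
  have hne' : τ j' ≠ τ j := by
    intro h
    rw [h, ← c4] at a4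
    have := congrArg (E (I j)).ρ a4
    rw [(E (I j)).ρh _ (by linarith) (by linarith), (E (I j)).ρh _ (by linarith) hz1.le] at this
    linarith
  have hτj := hτr j j.2.le
  refine homoclinic (E (I j)) hg (n := τ j - τ j') hb0 hby hyz hz1 (by omega) ?_ hρm hρp ?_ hk hgdef
  · rw [a4, c4, ← Function.iterate_add_apply g]
    congr 1
    congr 1
    omega
  · rw [← tendsto_add_atTop_iff_nat (r - τ j)]
    refine hlim.congr fun i => ?_
    rw [Function.iterate_add_apply, c4, ← Function.iterate_add_apply g (r - τ j),
      Nat.sub_add_cancel hτj.le, hwr]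

end TreeCR
/-- For a zero entropy tree map, every non-periodic chain recurrent point
has an infinite ω-limit set. -/
theorem omegaLimit_infinite_of_chainRecurrent_not_periodic {X : Type*} [MetricSpace X]
    (hX : IsTree X) (f : X → X) (hf : Continuous f) (h0 : topEntropy f = 0)
    {x : X} (hx : x ∈ chainRecurrentSet f) (hxp : x ∉ Function.periodicPts f) :
    (omegaLimitSet f x).Infinite := by
  intro hfin
  obtain ⟨n, E, hE, hrev⟩ := TreeCR.tree_edges hX
  have : CompactSpace X := hX.1
  obtain ⟨k, hk, p, hp, hlim⟩ := TreeCR.finite_omega f hf x hfin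
  refine TreeCR.main E hE hrev f hf hx hk hp ?_ ?_ h0
  · intro h
    obtain ⟨m, hm, hmx⟩ := Function.mem_periodicPts.1 h
    refine hxp (Function.mem_periodicPts.2 ⟨k * m, Nat.mul_pos hk hm, ?_⟩)
    have : (f^[k])^[m] x = x := hmx
    rw [← Function.iterate_mul] at this
    exact this
  · refine hlim.congr fun j => ?_
    rw [Function.iterate_mul]
end

section
/- Let X be a tree and let f : X → X be a continuous map with zero topological entropy. Let x be a chain recurrent point of f that is not periodic, and let I be a periodic arc of f such that ω_f(x) ⊆ Orb_f(I). Then x ∈ Orb_f(I). -/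
open Set Filter Topology Function
open scoped ENNReal

theorem hs_word {X : Type*} (g : X → X) (Z A B : Set X)
    (hA : ∀ w ∈ Z, ∃ w' ∈ Z, w' ∈ A ∧ g w' = w) (hB : ∀ w ∈ Z, ∃ w' ∈ Z, w' ∈ B ∧ g w' = w)
    (hZ : Z.Nonempty) (n : ℕ) : ∀ s : ℕ → Bool,
    ∃ z ∈ Z, ∀ i < n, (s i = true → g^[i] z ∈ A) ∧ (s i = false → g^[i] z ∈ B) := by
  induction n with
  | zero => intro s; obtain ⟨z, hz⟩ := hZ; exact ⟨z, hz, by simp⟩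
  | succ n ih =>
    intro s
    obtain ⟨z, hz, h⟩ := ih (fun i => s (i+1))
    have key : ∀ z', g z' = z → ∀ i < n, (s (i+1) = true → g^[i+1] z' ∈ A) ∧
        (s (i+1) = false → g^[i+1] z' ∈ B) := by
      intro z' hz' i hi
      rw [Function.iterate_succ_apply, hz']
      exact h i hi
    cases hs : s 0 with
    | true =>
      obtain ⟨z', h1, h2, h3⟩ := hA z hz
      refine ⟨z', h1, ?_⟩
      intro i hi
      cases i with
      | zero => simp [hs, h2]
      | succ i => exact key z' h3 i (by omega)
    | false =>
      obtain ⟨z', h1, h2, h3⟩ := hB z hz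
      refine ⟨z', h1, ?_⟩
      intro i hi
      cases i with
      | zero => simp [hs, h2]
      | succ i => exact key z' h3 i (by omega)

theorem hs_count {X : Type*} [TopologicalSpace X] (f : X → X) (M : ℕ) (hM : 1 ≤ M)
    (A B : Set X) (hdisj : Disjoint A B)
    (n : ℕ) (hw : ∀ s : ℕ → Bool, ∃ z, ∀ i < n, (s i = true → (f^[M])^[i] z ∈ A) ∧
      (s i = false → (f^[M])^[i] z ∈ B)) (𝒰 : Finset (Set X)) (h𝒰 : ∀ U, U ∈ 𝒰 ↔ U = Aᶜ ∨ U = Bᶜ) :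
    2 ^ n ≤ seqCoverCountOn f Set.univ id 𝒰 (n * M) := by
  classical
  unfold seqCoverCountOn
  set S := { m | ∃ c : Fin m → Fin (n*M) → Set X, (∀ j i, c j i ∈ 𝒰) ∧
    Set.univ ⊆ ⋃ j, ⋂ i, f^[id i.1] ⁻¹' c j i } with hS
  have hne : S.Nonempty := by
    let e := Fintype.equivFin (Fin (n*M) → (𝒰 : Set (Set X)))
    refine ⟨Fintype.card (Fin (n*M) → (𝒰 : Set (Set X))), fun j i => ((e.symm j) i : Set X), ?_, ?_⟩
    · intro j i
      exact ((e.symm j) i).2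
    · intro x _
      have hx : ∀ y : X, ∃ U : (𝒰 : Set (Set X)), y ∈ (U : Set X) := by
        intro y
        by_cases hy : y ∈ A
        · exact ⟨⟨Bᶜ, by simp [h𝒰]⟩, fun hyB => Set.disjoint_left.1 hdisj hy hyB⟩
        · exact ⟨⟨Aᶜ, by simp [h𝒰]⟩, hy⟩
      choose U hU using hx
      simp only [Set.mem_iUnion, Set.mem_iInter, Set.mem_preimage]
      refine ⟨e (fun i => U (f^[id i.1] x)), fun i => ?_⟩
      simp only [Equiv.symm_apply_apply]
      exact hU _
  have hmem := Nat.sInf_mem hne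
  generalize sInf S = m at hmem ⊢
  obtain ⟨c, hc, hcov⟩ := hmem
  let ext : (Fin n → Bool) → ℕ → Bool := fun s i => if h : i < n then s ⟨i, h⟩ else false
  choose z hz using hw
  have hj : ∀ s : Fin n → Bool, ∃ j : Fin m, ∀ i : Fin (n*M), f^[i.1] (z (ext s)) ∈ c j i := by
    intro s
    have := hcov (Set.mem_univ (z (ext s)))
    simpa using this
  choose j hj using hj
  have hinj : Function.Injective j := by
    have main : ∀ s t : Fin n → Bool, j s = j t → ∀ i : Fin n, s i = true → t i = false → False := by
      intro s t hst i hs ht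
      have hlt : i.1 * M < n * M := Nat.mul_lt_mul_of_pos_right i.2 hM
      have h1 := hj s ⟨i.1 * M, hlt⟩
      have h2 := hj t ⟨i.1 * M, hlt⟩
      rw [← hst] at h2
      have hit : ∀ w, f^[i.1 * M] w = (f^[M])^[i.1] w := by
        intro w; rw [mul_comm, Function.iterate_mul]
      have hA := (hz (ext s) i.1 i.2).1 (by simp [ext, hs])
      have hB := (hz (ext t) i.1 i.2).2 (by simp [ext, ht])
      simp only [hit] at h1 h2
      rcases (h𝒰 _).1 (hc (j s) ⟨i.1 * M, hlt⟩) with h | h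
      · rw [h] at h1; exact h1 hA
      · rw [h] at h2; exact h2 hB
    intro s t hst
    funext i
    cases hs : s i <;> cases ht : t i <;> try rfl
    · exact (main t s hst.symm i ht hs).elim
    · exact (main s t hst i hs ht).elim
  have := Fintype.card_le_of_injective j hinj
  simpa using this

theorem hs_entropy {X : Type*} [TopologicalSpace X] (f : X → X) (hf : Continuous f)
    (N : ℕ) (hN : 1 ≤ N) (P Q K : Set X) (hP : IsClosed P) (hQ : IsClosed Q)
    (hK : MapsTo f^[N] K K) (y : X) (hPQ : P ∩ Q ⊆ {y}) (hy : f^[N] y ∉ P)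
    (h1 : (P ∪ Q) \ K ⊆ f^[N] '' P) (h2 : (P ∪ Q) \ K ⊆ f^[N] '' Q)
    (hne : ((P ∪ Q) \ K).Nonempty) : topEntropy f ≠ 0 := by
  classical
  set G := f^[N] with hG
  have hGc : Continuous G := hf.iterate N
  set A := P ∩ G ⁻¹' P with hA
  set B := Q ∩ G ⁻¹' Q with hB
  have hAc : IsClosed A := hP.inter (hP.preimage hGc)
  have hBc : IsClosed B := hQ.inter (hQ.preimage hGc)
  have hdisj : Disjoint A B := by
    rw [Set.disjoint_left]
    rintro w ⟨hw1, hw2⟩ ⟨hw3, hw4⟩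
    have : w = y := hPQ ⟨hw1, hw3⟩
    subst this
    exact hy hw2
  set Z := (P ∪ Q) \ K with hZ
  have g2 : ∀ w, f^[N*2] w = G (G w) := by
    intro w; rw [Function.iterate_mul]; rfl
  have hZA : ∀ w ∈ Z, ∃ w' ∈ Z, w' ∈ A ∧ f^[N*2] w' = w := by
    intro w hw
    obtain ⟨w1, hw1, rfl⟩ := h1 hw
    have hw1Z : w1 ∈ Z := ⟨Or.inl hw1, fun h => hw.2 (hK h)⟩
    obtain ⟨w0, hw0, rfl⟩ := h1 hw1Z
    exact ⟨w0, ⟨Or.inl hw0, fun h => hw1Z.2 (hK h)⟩, ⟨hw0, hw1⟩, g2 _⟩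
  have hZB : ∀ w ∈ Z, ∃ w' ∈ Z, w' ∈ B ∧ f^[N*2] w' = w := by
    intro w hw
    obtain ⟨w1, hw1, rfl⟩ := h2 hw
    have hw1Z : w1 ∈ Z := ⟨Or.inr hw1, fun h => hw.2 (hK h)⟩
    obtain ⟨w0, hw0, rfl⟩ := h2 hw1Z
    exact ⟨w0, ⟨Or.inr hw0, fun h => hw1Z.2 (hK h)⟩, ⟨hw0, hw1⟩, g2 _⟩
  set M := N*2 with hMdef
  have hM : 1 ≤ M := by omega
  let 𝒰 : Finset (Set X) := {Aᶜ, Bᶜ}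
  have h𝒰 : ∀ U, U ∈ 𝒰 ↔ U = Aᶜ ∨ U = Bᶜ := by intro U; simp [𝒰]
  have hcov : IsOpenCoverOn (Set.univ : Set X) 𝒰 := by
    refine ⟨?_, ?_⟩
    · intro U hU
      rcases (h𝒰 U).1 hU with rfl | rfl
      · exact hAc.isOpen_compl
      · exact hBc.isOpen_compl
    · intro x _
      by_cases hx : x ∈ A
      · exact ⟨Bᶜ, by simp [𝒰], fun hxB => Set.disjoint_left.1 hdisj hx hxB⟩
      · exact ⟨Aᶜ, by simp [𝒰], hx⟩
  have hcount : ∀ n : ℕ, 2 ^ n ≤ seqCoverCountOn f Set.univ id 𝒰 (n * M) := by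
    intro n
    refine hs_count f M hM A B hdisj n ?_ 𝒰 h𝒰
    intro s
    obtain ⟨z, -, hz⟩ := hs_word (f^[M]) Z A B hZA hZB hne n s
    exact ⟨z, hz⟩
  have hpos : 0 < ENNReal.ofReal (Real.log 2 / M) := by
    rw [ENNReal.ofReal_pos]
    have := Real.log_pos (by norm_num : (1:ℝ) < 2)
    have : (0:ℝ) < M := by exact_mod_cast hM
    positivity
  have hlim : ENNReal.ofReal (Real.log 2 / M) ≤ Filter.limsup
      (fun n : ℕ => ENNReal.ofReal (Real.log (seqCoverCountOn f Set.univ id 𝒰 n) / n)) Filter.atTop := by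
    refine Filter.le_limsup_of_frequently_le ?_ (by isBoundedDefault)
    · rw [Filter.frequently_atTop]
      intro n0
      refine ⟨(n0+1) * M, by nlinarith, ?_⟩
      apply ENNReal.ofReal_le_ofReal
      have hMp : (0:ℝ) < M := by exact_mod_cast hM
      have hnp : (0:ℝ) < (((n0+1) * M : ℕ) : ℝ) := by
        exact_mod_cast Nat.mul_pos (Nat.succ_pos _) hM
      rw [div_le_div_iff₀ hMp hnp]
      have h3 : Real.log ((2:ℝ)^(n0+1)) ≤ Real.log (seqCoverCountOn f Set.univ id 𝒰 ((n0+1) * M)) := by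
        apply Real.log_le_log (by positivity)
        exact_mod_cast hcount (n0+1)
      rw [Real.log_pow] at h3
      push_cast at h3 ⊢
      nlinarith
  have hle : ENNReal.ofReal (Real.log 2 / M) ≤ topEntropy f := by
    refine hlim.trans ?_
    unfold topEntropy seqEntropy seqEntropyOn
    exact le_iSup₂_of_le 𝒰 hcov le_rfl
  exact (lt_of_lt_of_le hpos hle).ne'

structure TreeLike (X : Type*) [MetricSpace X] : Prop where
  comp : CompactSpace X
  conn : PreconnectedSpace X
  lc : ∀ ε > 0, ∃ δ > 0, ∀ u v : X, dist u v < δ →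
    ∃ S : Set X, IsClosed S ∧ IsPreconnected S ∧ u ∈ S ∧ v ∈ S ∧ S ⊆ Metric.closedBall u ε
  uni : ∀ C D : Set X, IsClosed C → IsClosed D → IsPreconnected C → IsPreconnected D →
    IsPreconnected (C ∩ D)

/-- the hull of `K` and `b`. -/
def dn {X : Type*} [TopologicalSpace X] (K : Set X) (b : X) : Set X :=
  {y | ∀ C : Set X, IsClosed C → IsPreconnected C → K ⊆ C → b ∈ C → y ∈ C}

section dn
variable {X : Type*} [MetricSpace X]

theorem dn_min {K C : Set X} {b : X} (h1 : IsClosed C) (h2 : IsPreconnected C) (h3 : K ⊆ C)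
    (h4 : b ∈ C) : dn K b ⊆ C := fun _ hy => hy C h1 h2 h3 h4

theorem dn_self (K : Set X) (b : X) : b ∈ dn K b := fun _ _ _ _ h => h

theorem dn_sub (K : Set X) (b : X) : K ⊆ dn K b := fun _ hy _ _ _ h _ => h hy

theorem dn_left (a b : X) : a ∈ dn {a} b := dn_sub _ _ rfl

theorem dn_trans {K : Set X} {u v w : X} (h1 : u ∈ dn K v) (h2 : v ∈ dn K w) : u ∈ dn K w :=
  fun C a b c d => h1 C a b c (h2 C a b c d)

theorem dn_comm (a b : X) : dn {a} b = dn {b} a := by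
  ext y
  constructor
  · intro h C h1 h2 h3 h4
    exact h C h1 h2 (by simpa using h4) (h3 rfl)
  · intro h C h1 h2 h3 h4
    exact h C h1 h2 (by simpa using h4) (h3 rfl)

theorem dn_closed (K : Set X) (b : X) : IsClosed (dn K b) := by
  have : dn K b = ⋂₀ {C | IsClosed C ∧ IsPreconnected C ∧ K ⊆ C ∧ b ∈ C} := by
    ext y
    simp only [dn, Set.mem_ofPred_eq, Set.mem_sInter]
    constructor
    · rintro h C ⟨h1, h2, h3, h4⟩; exact h C h1 h2 h3 h4
    · intro h C h1 h2 h3 h4; exact h C ⟨h1, h2, h3, h4⟩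
  rw [this]
  exact isClosed_sInter fun C hC => hC.1

theorem preconn_sInter [CompactSpace X] (𝓕 : Set (Set X)) (hne : 𝓕.Nonempty)
    (hcl : ∀ C ∈ 𝓕, IsClosed C) (hpc : ∀ C ∈ 𝓕, IsPreconnected C)
    (hint : ∀ C ∈ 𝓕, ∀ D ∈ 𝓕, C ∩ D ∈ 𝓕) : IsPreconnected (⋂₀ 𝓕) := by
  have hT : IsClosed (⋂₀ 𝓕) := isClosed_sInter hcl
  rw [isPreconnected_iff_subset_of_fully_disjoint_closed hT]
  intro U V hU hV hsub hUV
  obtain ⟨U', V', hU', hV', hUU, hVV, hd⟩ := normal_separation hU hV hUV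
  have hdir : Directed (· ⊇ ·) (fun C : 𝓕 => (C : Set X)) := by
    intro C D
    exact ⟨⟨C ∩ D, hint _ C.2 _ D.2⟩, Set.inter_subset_left, Set.inter_subset_right⟩
  have : Nonempty 𝓕 := hne.to_subtype
  obtain ⟨C, hC⟩ := exists_subset_nhds_of_isCompact' (V := fun C : 𝓕 => (C : Set X)) hdir
    (fun C => (hcl _ C.2).isCompact) (fun C => hcl _ C.2) (U := U' ∪ V') (by
      intro x hx
      rw [← Set.sInter_eq_iInter] at hx
      exact (hU'.union hV').mem_nhds ((Set.union_subset_union hUU hVV) (hsub hx)))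
  have hTC : ⋂₀ 𝓕 ⊆ C := Set.sInter_subset_of_mem C.2
  rcases (isPreconnected_iff_subset_of_disjoint.1 (hpc _ C.2)) U' V' hU' hV' hC
    (by rw [hd.inter_eq, Set.inter_empty]) with h | h
  · left
    intro x hx
    rcases hsub hx with h1 | h1
    · exact h1
    · exact (Set.disjoint_left.1 hd (h (hTC hx)) (hVV h1)).elim
  · right
    intro x hx
    rcases hsub hx with h1 | h1
    · exact (Set.disjoint_left.1 hd (hUU h1) (h (hTC hx))).elim
    · exact h1

theorem dn_conn (hX : TreeLike X) (K : Set X) (b : X) : IsPreconnected (dn K b) := by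
  have := hX.comp
  have := hX.conn
  have : dn K b = ⋂₀ {C | IsClosed C ∧ IsPreconnected C ∧ K ⊆ C ∧ b ∈ C} := by
    ext y
    simp only [dn, Set.mem_ofPred_eq, Set.mem_sInter]
    constructor
    · rintro h C ⟨h1, h2, h3, h4⟩; exact h C h1 h2 h3 h4
    · intro h C h1 h2 h3 h4; exact h C ⟨h1, h2, h3, h4⟩
  rw [this]
  apply preconn_sInter
  · exact ⟨Set.univ, isClosed_univ, isPreconnected_univ, Set.subset_univ _, Set.mem_univ _⟩
  · exact fun C hC => hC.1
  · exact fun C hC => hC.2.1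
  · rintro C ⟨h1, h2, h3, h4⟩ D ⟨h5, h6, h7, h8⟩
    exact ⟨h1.inter h5, hX.uni C D h1 h5 h2 h6, Set.subset_inter h3 h7, h4, h8⟩

theorem dn_antisymm (hX : TreeLike X) {K : Set X} (hKc : IsClosed K) (hK : IsPreconnected K)
    (hKn : K.Nonempty) {u v : X} (hu : u ∉ K) (h1 : u ∈ dn K v) (h2 : v ∈ dn K u) : u = v := by
  have := hX.comp
  have := hX.conn
  by_contra hne
  let 𝓢 : Set (Set X) := {C | IsClosed C ∧ IsPreconnected C ∧ K ⊆ C ∧ u ∉ C}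
  let S : Set X := ⋃₀ 𝓢
  have hKS : K ⊆ S := fun k hk => ⟨K, ⟨hKc, hK, subset_rfl, hu⟩, hk⟩
  have huS : u ∉ S := by rintro ⟨C, hC, huC⟩; exact hC.2.2.2 huC
  have hvS : v ∉ S := by
    rintro ⟨C, hC, hvC⟩
    exact hC.2.2.2 (h1 C hC.1 hC.2.1 hC.2.2.1 hvC)
  obtain ⟨k, hk⟩ := hKn
  have hSc : IsPreconnected S := isPreconnected_sUnion k _ (fun C hC => hC.2.2.1 hk) (fun C hC => hC.2.1)
  have key : ∀ w, w ≠ u → ∃ δ > 0, ∀ w', dist w w' < δ → (w ∈ S ↔ w' ∈ S) := by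
    intro w hw
    have hd : 0 < dist w u := dist_pos.2 hw
    obtain ⟨δ, hδ, H⟩ := hX.lc (dist w u / 2) (by positivity)
    refine ⟨δ, hδ, fun w' hw' => ?_⟩
    obtain ⟨T, hT1, hT2, hT3, hT4, hT5⟩ := H w w' hw'
    have huT : u ∉ T := by
      intro h
      have := hT5 h
      rw [Metric.mem_closedBall, dist_comm] at this
      linarith
    constructor
    · rintro ⟨C, hC, hwC⟩
      exact ⟨C ∪ T, ⟨hC.1.union hT1, hC.2.1.union w hwC hT3 hT2,
        hC.2.2.1.trans Set.subset_union_left, by rintro (h | h); exacts [hC.2.2.2 h, huT h]⟩, Or.inr hT4⟩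
    · rintro ⟨C, hC, hwC⟩
      exact ⟨C ∪ T, ⟨hC.1.union hT1, hC.2.1.union w' hwC hT4 hT2,
        hC.2.2.1.trans Set.subset_union_left, by rintro (h | h); exacts [hC.2.2.2 h, huT h]⟩, Or.inr hT3⟩
  have hSo : IsOpen S := by
    rw [Metric.isOpen_iff]
    intro w hw
    obtain ⟨δ, hδ, H⟩ := key w (fun h => huS (h ▸ hw))
    refine ⟨δ, hδ, fun w' hw' => (H w' ?_).1 hw⟩
    rw [dist_comm]; exact hw'
  have hcl : ∀ w ∈ closure S, w ≠ u → w ∈ S := by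
    intro w hw hwu
    obtain ⟨δ, hδ, H⟩ := key w hwu
    obtain ⟨w', hw', hd⟩ := Metric.mem_closure_iff.1 hw δ hδ
    exact (H w' hd).2 hw'
  have huc : u ∈ closure S := by
    by_contra hnu
    have hclosed : IsClosed S := by
      apply isClosed_of_closure_subset
      intro w hw
      exact hcl w hw (fun h => hnu (h ▸ hw))
    have := IsClopen.eq_univ ⟨hclosed, hSo⟩ ⟨k, hKS hk⟩
    exact huS (this ▸ Set.mem_univ u)
  have := h2 (closure S) isClosed_closure hSc.closure (hKS.trans subset_closure) huc
  exact hvS (hcl v this (Ne.symm hne))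

theorem dn_not_near (hX : TreeLike X) {K : Set X} {y b : X} (h : y ∉ dn K b) :
    ∃ ε > 0, ∀ y' b', dist y' y < ε → dist b' b < ε → y' ∉ dn K b' := by
  simp only [dn, Set.mem_ofPred_eq, not_forall] at h
  obtain ⟨C, hC1, hC2, hC3, hC4, hy⟩ := h
  obtain ⟨ε, hε, hball⟩ := Metric.isOpen_iff.1 hC1.isOpen_compl y hy
  obtain ⟨δ, hδ, H⟩ := hX.lc (ε/2) (by positivity)
  refine ⟨min δ (ε/2), by positivity, ?_⟩
  intro y' b' hy' hb' hmem
  obtain ⟨S, hS1, hS2, hS3, hS4, hS5⟩ := H b b' (by rw [dist_comm]; exact hb'.trans_le (min_le_left _ _))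
  have h1 := hmem (C ∪ S) (hC1.union hS1) (hC2.union b hC4 hS3 hS2) (hC3.trans Set.subset_union_left)
    (Or.inr hS4)
  have hy2 : dist y' y < ε/2 := hy'.trans_le (min_le_right _ _)
  rcases h1 with h1 | h1
  · exact hball (show y' ∈ Metric.ball y ε by rw [Metric.mem_ball]; linarith) h1
  · have := hS5 h1
    rw [Metric.mem_closedBall] at this
    refine hball (show b ∈ Metric.ball y ε from ?_) hC4
    rw [Metric.mem_ball]
    have := dist_triangle b y' y
    rw [dist_comm b y'] at this
    linarith

theorem dn_closed_snd (hX : TreeLike X) (K : Set X) (y : X) : IsClosed {b | y ∈ dn K b} := by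
  rw [← isOpen_compl_iff, Metric.isOpen_iff]
  intro b hb
  obtain ⟨ε, hε, H⟩ := dn_not_near hX hb
  exact ⟨ε, hε, fun b' hb' => H y b' (by simpa using hε) hb'⟩

theorem dn_lim (hX : TreeLike X) {K : Set X} {y b : X} {u v : ℕ → X} (hu : Tendsto u atTop (𝓝 y))
    (hv : Tendsto v atTop (𝓝 b)) (h : ∀ n, u n ∈ dn K (v n)) : y ∈ dn K b := by
  by_contra hn
  obtain ⟨ε, hε, H⟩ := dn_not_near hX hn
  have h1 := (Metric.tendsto_nhds.1 hu) ε hε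
  have h2 := (Metric.tendsto_nhds.1 hv) ε hε
  obtain ⟨n, h3, h4⟩ := (h1.and h2).exists
  exact H _ _ h3 h4 (h n)

/-- `dn K a ⊆ dn K u ∪ dn {u} a`. -/
theorem dn_split (hX : TreeLike X) (K : Set X) (u a : X) : dn K a ⊆ dn K u ∪ dn {u} a := by
  apply dn_min ((dn_closed _ _).union (dn_closed _ _))
  · exact (dn_conn hX K u).union u (dn_self _ _) (dn_left _ _) (dn_conn hX _ _)
  · exact (dn_sub _ _).trans Set.subset_union_left
  · exact Or.inr (dn_self _ _)

theorem dn_linear (hX : TreeLike X) {K : Set X} {u v a : X}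
    (hu : u ∈ dn K a) (hv : v ∈ dn K a) : u ∈ dn K v ∨ v ∈ dn K u := by
  rcases dn_split hX K u a hv with h | h
  · exact Or.inr h
  rcases dn_split hX K v a hu with h' | h'
  · exact Or.inl h'
  by_cases hua : u = a
  · subst hua; exact Or.inr hv
  rw [dn_comm] at h h'
  have := dn_antisymm hX isClosed_singleton isPreconnected_singleton (Set.singleton_nonempty a)
    (u := u) (v := v) hua h' h
  subst this
  exact Or.inl (dn_self _ _)

theorem dn_inter (hX : TreeLike X) {K : Set X} (hKc : IsClosed K) (hK : IsPreconnected K)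
    (hKn : K.Nonempty) {y a : X} (hy : y ∉ K) (hya : y ≠ a) (hle : y ∈ dn K a) :
    dn K y ∩ dn {y} a ⊆ {y} := by
  rintro w ⟨h1, h2⟩
  rcases dn_split hX K w a hle with h | h
  · exact (dn_antisymm hX hKc hK hKn hy h h1).symm
  · rw [dn_comm] at h h2
    exact (dn_antisymm hX isClosed_singleton isPreconnected_singleton (Set.singleton_nonempty a)
      (u := y) (v := w) hya h h2).symm

/-- a closed connected set containing `u ≼ b` and `a ≽ b` contains the hull of `b, a`. -/
theorem dn_seg (hX : TreeLike X) {K : Set X} (hKc : IsClosed K) (hK : IsPreconnected K)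
    (hKn : K.Nonempty) {u b a : X} (hb : b ∉ K) (hub : u ∈ dn K b) (hba : b ∈ dn K a)
    {C : Set X} (hC1 : IsClosed C) (hC2 : IsPreconnected C) (huC : u ∈ C) (haC : a ∈ C) :
    dn {b} a ⊆ C := by
  have hbC : b ∈ C := by
    rcases dn_split hX K u a hba with h | h
    · rw [dn_antisymm hX hKc hK hKn hb h hub]; exact huC
    · exact dn_min hC1 hC2 (by simpa using huC) haC h
  exact dn_min hC1 hC2 (by simpa using hbC) haC

theorem dn_between (hX : TreeLike X) {K : Set X} {u v w : X} (hK : K.Nonempty)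
    (h : v ∈ dn {u} w) : v ∈ dn K u ∨ v ∈ dn K w := by
  obtain ⟨k, hk⟩ := hK
  exact dn_min (K := {u}) ((dn_closed K u).union (dn_closed K w))
    ((dn_conn hX K u).union k (dn_sub _ _ hk) (dn_sub _ _ hk) (dn_conn hX K w))
    (by simpa using Or.inl (dn_self K u)) (Or.inr (dn_self K w)) h

end dn

section core
variable {X : Type*} [MetricSpace X]

theorem image_cover_iter {g : X → X} {D K : Set X} (hK : MapsTo g K K) (h : D \ K ⊆ g '' D) (n : ℕ) :
    D \ K ⊆ g^[n] '' D := by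
  induction n with
  | zero => simp
  | succ n ih =>
    intro w hw
    obtain ⟨z, hz, rfl⟩ := ih hw
    have hzK : z ∉ K := fun hk => hw.2 (hK.iterate n hk)
    obtain ⟨z', hz', rfl⟩ := h ⟨hz, hzK⟩
    exact ⟨z', hz', by rw [Function.iterate_succ_apply]⟩

theorem core_contra (hX : TreeLike X) (f : X → X) (hf : Continuous f) (h0 : topEntropy f = 0)
    (t : ℕ) (ht : 1 ≤ t) (K : Set X) (hKc : IsClosed K) (hK : IsPreconnected K) (hKn : K.Nonempty)
    (hKm : MapsTo f^[t] K K) (a a' : X) (ha : a ∉ K) (haa : a' ∈ dn K a) (hfa : f^[t] a' = a)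
    (hconv : ∀ U, IsOpen U → K ⊆ U → ∀ᶠ n : ℕ in atTop, (f^[t])^[n] a ∈ U)
    (hP3 : ∀ v : ℕ → X, ∃ i j, i < j ∧ (v i ∈ dn K (v j) ∨ v j ∈ dn K (v i))) : False := by
  have := hX.comp
  have := hX.conn
  set G := f^[t] with hG
  have hGc : Continuous G := hf.iterate t
  have hGn : ∀ n, Continuous (G^[n]) := fun n => hGc.iterate n
  have hGit : ∀ n, G^[n] = f^[t*n] := fun n => (Function.iterate_mul f t n).symm
  have himc : ∀ n (C : Set X), IsClosed C → IsClosed (G^[n] '' C) := fun n C hC =>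
    (hC.isCompact.image (hGn n)).isClosed
  have himp : ∀ n (C : Set X), IsPreconnected C → IsPreconnected (G^[n] '' C) := fun n C hC =>
    hC.image _ (hGn n).continuousOn
  have hper : ∀ n, 1 ≤ n → G^[n] a ≠ a := by
    intro n hn h
    have h1 := hconv {a}ᶜ isOpen_compl_singleton (fun k hk h => ha (h ▸ hk))
    obtain ⟨N, hN⟩ := eventually_atTop.1 h1
    have h2 := hN (n * N) (Nat.le_mul_of_pos_left N hn)
    apply h2
    rw [Function.iterate_mul]
    exact Function.iterate_fixed h N
  have ha' : a' ∉ K := fun h => ha (hfa ▸ hKm h)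
  by_cases hcase : ∃ N, 1 ≤ N ∧ (dn {a} (G^[N] a) ∩ K).Nonempty
  · obtain ⟨N, hN, k, hk1, hk2⟩ := hcase
    have hcov1 : dn K a \ K ⊆ G '' dn K a := by
      have h1 : dn K a ⊆ G '' dn K a ∪ K := by
        obtain ⟨k, hk⟩ := hKn
        apply dn_min (((dn_closed K a).isCompact.image hGc).isClosed.union hKc)
        · exact ((dn_conn hX K a).image _ hGc.continuousOn).union (G k)
            ⟨k, dn_sub _ _ hk, rfl⟩ (hKm hk) hK
        · exact Set.subset_union_right
        · exact Or.inl ⟨a', haa, hfa⟩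
      intro w hw
      rcases h1 hw.1 with h | h
      · exact h
      · exact (hw.2 h).elim
    obtain ⟨y, hy, hya⟩ := image_cover_iter hKm hcov1 N ⟨dn_self K a, ha⟩
    have hyK : y ∉ K := fun h => ha (hya ▸ hKm.iterate N h)
    have hyne : y ≠ a := fun h => hper N hN (h ▸ hya)
    have hPs : dn K y ⊆ dn K a := fun w hw => dn_trans hw hy
    have hQs : dn {y} a ⊆ dn K a := dn_min (dn_closed _ _) (dn_conn hX _ _) (by simpa using hy) (dn_self _ _)
    have h1 : dn K a ⊆ G^[N] '' (dn K y) ∪ K := by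
      obtain ⟨k, hk⟩ := hKn
      apply dn_min ((himc N _ (dn_closed K y)).union hKc)
      · exact (himp N _ (dn_conn hX K y)).union (G^[N] k) ⟨k, dn_sub _ _ hk, rfl⟩ (hKm.iterate N hk) hK
      · exact Set.subset_union_right
      · exact Or.inl ⟨y, dn_self _ _, hya⟩
    have h2 : dn K a ⊆ G^[N] '' (dn {y} a) ∪ K := by
      apply dn_min ((himc N _ (dn_closed {y} a)).union hKc)
      · refine (himp N _ (dn_conn hX {y} a)).union k ?_ hk2 hK
        refine dn_min (himc N _ (dn_closed {y} a)) (himp N _ (dn_conn hX {y} a)) ?_ ?_ hk1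
        · rw [Set.singleton_subset_iff]; exact ⟨y, dn_left _ _, hya⟩
        · exact ⟨a, dn_self _ _, rfl⟩
      · exact Set.subset_union_right
      · exact Or.inl ⟨y, dn_left _ _, hya⟩
    have hsub : (dn K y ∪ dn {y} a) ⊆ dn K a := Set.union_subset hPs hQs
    refine hs_entropy f hf (t*N) (Nat.mul_pos ht hN) (dn K y) (dn {y} a) K (dn_closed _ _) (dn_closed _ _)
      (by rw [← hGit]; exact hKm.iterate N) y (dn_inter hX hKc hK hKn hyK hyne hy) ?_ ?_ ?_ ?_ h0
    · rw [← hGit, hya]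
      intro h
      exact hyne (dn_antisymm hX hKc hK hKn hyK hy h)
    · rw [← hGit]
      rintro w ⟨hw, hwK⟩
      exact (h1 (hsub hw)).resolve_right hwK
    · rw [← hGit]
      rintro w ⟨hw, hwK⟩
      exact (h2 (hsub hw)).resolve_right hwK
    · exact ⟨a, Or.inr (dn_self _ _), ha⟩
  · push Not at hcase
    set b : ℕ → X := fun n => G^[n] a with hb
    have hbK : ∀ n, 1 ≤ n → b n ∉ K := by
      intro n hn h
      have : b n ∈ dn {a} (G^[n] a) ∩ K := ⟨dn_self _ _, h⟩
      rw [hcase n hn] at this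
      exact this
    have hβ : ∀ n, 1 ≤ n → ∃ β, β ∈ dn K (b n) ∧ β ∈ dn K a ∧ β ∉ K := by
      intro n hn
      have hsub : dn {a} (b n) ⊆ dn K a ∪ dn K (b n) := by
        obtain ⟨k, hk⟩ := hKn
        exact dn_min ((dn_closed K a).union (dn_closed K (b n)))
          ((dn_conn hX K a).union k (dn_sub _ _ hk) (dn_sub _ _ hk) (dn_conn hX K _))
          (by simpa using Or.inl (dn_self K a)) (Or.inr (dn_self K _))
      obtain ⟨z, hz1, hz2, hz3⟩ := isPreconnected_closed_iff.1 (dn_conn hX {a} (b n)) (dn K a) (dn K (b n))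
        (dn_closed _ _) (dn_closed _ _) hsub ⟨a, dn_left _ _, dn_self _ _⟩ ⟨b n, dn_self _ _, dn_self _ _⟩
      refine ⟨z, hz3, hz2, fun hzK => ?_⟩
      have : z ∈ dn {a} (G^[n] a) ∩ K := ⟨hz1, hzK⟩
      rw [hcase n hn] at this
      exact this
    have hev : ∀ z, z ∉ K → ∀ᶠ n in atTop, z ∉ dn K (b n) := by
      intro z hz
      refine hconv {c | z ∈ dn K c}ᶜ (dn_closed_snd hX K z).isOpen_compl ?_
      intro k hk h
      exact hz (dn_min hKc hK subset_rfl hk h)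
    have hle : ∀ᶠ n in atTop, b n ∈ dn K a := by
      by_contra hcon
      have hcon : ∃ᶠ n in atTop, b n ∉ dn K a := Filter.not_eventually.1 hcon
      have : Nonempty X := ⟨a⟩
      choose! β hβ1 hβ2 hβ3 using hβ
      obtain ⟨φ, hφ1, hφ2⟩ := exists_seq_of_forall_finset_exists (fun n => 1 ≤ n ∧ b n ∉ dn K a)
        (fun p q => β p ∉ dn K (b q)) (by
          intro s hs
          have h1 : ∀ᶠ n in atTop, ∀ p ∈ s, β p ∉ dn K (b n) :=
            (Filter.eventually_all_finset s).2 fun p hp => hev _ (hβ3 p (hs p hp).1)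
          obtain ⟨n, hn, hn2, hn3⟩ := (hcon.and_eventually (h1.and (eventually_ge_atTop 1))).exists
          exact ⟨n, ⟨hn3, hn⟩, hn2⟩)
      obtain ⟨i, j, hij, h⟩ := hP3 (fun i => b (φ i))
      have hi := hφ1 i
      have hj := hφ1 j
      have hr := hφ2 i j hij
      rcases h with h | h
      · exact hr (dn_trans (hβ1 _ hi.1) h)
      · rcases dn_linear hX (hβ1 _ hi.1) h with h' | h'
        · exact hr h'
        · exact hj.2 (dn_trans h' (hβ2 _ hi.1))
    have hle' : ∀ᶠ n in atTop, b n ∈ dn K a' := by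
      filter_upwards [hle, hev a' ha'] with n h1 h2
      exact (dn_linear hX h1 haa).resolve_right h2
    obtain ⟨n0, hn0⟩ := eventually_atTop.1 (hle.and (hle'.and (eventually_ge_atTop 1)))
    have hn01 : 1 ≤ n0 := (hn0 n0 le_rfl).2.2
    obtain ⟨n1, hn1⟩ := eventually_atTop.1 (hev (b n0) (hbK n0 hn01))
    have hmax : ∀ k, ∃ m, n0 ≤ m ∧ ∀ n, n0 ≤ n → n ≤ n0 + k → b n ∈ dn K (b m) := by
      intro k
      induction k with
      | zero =>
        refine ⟨n0, le_rfl, fun n h1 h2 => ?_⟩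
        have : n = n0 := by omega
        subst this
        exact dn_self _ _
      | succ k ih =>
        obtain ⟨m, hm, H⟩ := ih
        rcases dn_linear hX (hn0 m hm).1 (hn0 (n0+k+1) (by omega)).1 with h | h
        · refine ⟨n0+k+1, by omega, fun n h1 h2 => ?_⟩
          rcases Nat.lt_or_ge n (n0+k+1) with h3 | h3
          · exact dn_trans (H n h1 (by omega)) h
          · have : n = n0+k+1 := by omega
            subst this; exact dn_self _ _
        · refine ⟨m, hm, fun n h1 h2 => ?_⟩
          rcases Nat.lt_or_ge n (n0+k+1) with h3 | h3
          · exact H n h1 (by omega)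
          · have : n = n0+k+1 := by omega
            subst this; exact h
    obtain ⟨m, hm, hmm⟩ := hmax n1
    have hall : ∀ n, n0 ≤ n → b n ∈ dn K (b m) := by
      intro n hn
      rcases Nat.lt_or_ge n (n0+n1) with h | h
      · exact hmm n hn h.le
      · have h1 := hn1 n (by omega)
        exact dn_trans ((dn_linear hX (hn0 n hn).1 (hn0 n0 le_rfl).1).resolve_right h1) (hmm n0 le_rfl (by omega))
    have hm1 : 1 ≤ m := by omega
    have hbm : b m ∉ K := hbK m hm1
    have hba : b m ∈ dn K a := (hn0 m hm).1
    have hba' : b m ∈ dn K a' := (hn0 m hm).2.1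
    have ha'm : a' ∈ dn {b m} a := by
      rcases dn_split hX K (b m) a haa with h | h
      · rw [← dn_antisymm hX hKc hK hKn hbm hba' h]; exact dn_left _ _
      · exact h
    have hcov1 : dn {b m} a \ ∅ ⊆ G '' dn {b m} a := by
      rw [Set.sdiff_empty]
      apply dn_seg hX hKc hK hKn hbm (hall (m+1) (by omega)) hba
        (((dn_closed _ _).isCompact.image hGc).isClosed) ((dn_conn hX _ _).image _ hGc.continuousOn)
      · refine ⟨b m, dn_left _ _, ?_⟩
        simp only [hb, Function.iterate_succ_apply']
      · exact ⟨a', ha'm, hfa⟩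
    obtain ⟨y, hy, hya⟩ := image_cover_iter (K := ∅) (Set.mapsTo_empty _ _) hcov1 m ⟨dn_self _ a, by simp⟩
    have hyne : y ≠ a := fun h => hper m hm1 (h ▸ hya)
    have hiter : G^[m] (b m) = b (m + m) := by simp only [hb, Function.iterate_add_apply]
    have hynb : y ≠ b m := by
      rintro rfl
      rw [hiter] at hya
      exact hper (m+m) (by omega) hya
    have hPs : dn {b m} y ⊆ dn {b m} a := fun w hw => dn_trans hw hy
    have hQs : dn {y} a ⊆ dn {b m} a := dn_min (dn_closed _ _) (dn_conn hX _ _) (by simpa using hy) (dn_self _ _)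
    have hsub := Set.union_subset hPs hQs
    have h1 : dn {b m} a ⊆ G^[m] '' (dn {b m} y) :=
      dn_seg hX hKc hK hKn hbm (hall (m+m) (by omega)) hba (himc m _ (dn_closed _ _))
        (himp m _ (dn_conn hX _ _)) ⟨b m, dn_left _ _, hiter⟩ ⟨y, dn_self _ _, hya⟩
    have h2 : dn {b m} a ⊆ G^[m] '' (dn {y} a) :=
      dn_seg hX hKc hK hKn hbm (hall m hm) hba (himc m _ (dn_closed _ _))
        (himp m _ (dn_conn hX _ _)) ⟨a, dn_self _ _, rfl⟩ ⟨y, dn_left _ _, hya⟩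
    refine hs_entropy f hf (t*m) (Nat.mul_pos ht hm1) (dn {b m} y) (dn {y} a) ∅ (dn_closed _ _) (dn_closed _ _)
      (Set.mapsTo_empty _ _) y (dn_inter hX isClosed_singleton isPreconnected_singleton
        (Set.singleton_nonempty _) hynb hyne hy) ?_ ?_ ?_ ?_ h0
    · rw [← hGit, hya]
      intro h
      exact hyne (dn_antisymm hX isClosed_singleton isPreconnected_singleton
        (Set.singleton_nonempty _) hynb hy h)
    · rw [← hGit, Set.sdiff_empty]; exact hsub.trans h1
    · rw [← hGit, Set.sdiff_empty]; exact hsub.trans h2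
    · exact ⟨a, Or.inr (dn_self _ _), by simp⟩

end core

section chain
variable {X : Type*} [MetricSpace X]

/-- thickening of `F R` by small continua. -/
def thk (F : X → X) (ε : ℝ) (R : Set X) : Set X :=
  {v | ∃ q ∈ R, ∃ S : Set X, IsClosed S ∧ IsPreconnected S ∧ F q ∈ S ∧ v ∈ S ∧
    S ⊆ Metric.closedBall (F q) ε}

/-- the increasing family of connected reachable sets. -/
def reach (F : X → X) (K : Set X) (ε : ℝ) : ℕ → Set X
  | 0 => K
  | n+1 => K ∪ closure (thk F ε (reach F K ε n))

theorem thk_mono (F : X → X) (ε : ℝ) {R R' : Set X} (h : R ⊆ R') : thk F ε R ⊆ thk F ε R' := by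
  rintro v ⟨q, hq, hS⟩
  exact ⟨q, h hq, hS⟩

theorem reach_K (F : X → X) (K : Set X) (ε : ℝ) (n : ℕ) : K ⊆ reach F K ε n := by
  cases n with
  | zero => exact subset_rfl
  | succ n => exact Set.subset_union_left

theorem reach_mono (F : X → X) (K : Set X) (ε : ℝ) : Monotone (reach F K ε) := by
  apply monotone_nat_of_le_succ
  intro n
  induction n with
  | zero => exact Set.subset_union_left
  | succ n ih => exact Set.union_subset_union_right _ (closure_mono (thk_mono F ε ih))

theorem reach_closed (F : X → X) {K : Set X} (hKc : IsClosed K) (ε : ℝ) (n : ℕ) :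
    IsClosed (reach F K ε n) := by
  cases n with
  | zero => exact hKc
  | succ n => exact hKc.union isClosed_closure

theorem reach_conn (F : X → X) (hF : Continuous F) {K : Set X} (hK : IsPreconnected K) (hKn : K.Nonempty)
    (hm : MapsTo F K K) {ε : ℝ} (hε : 0 < ε) (n : ℕ) :
    IsPreconnected (reach F K ε n) := by
  induction n with
  | zero => exact hK
  | succ n ih =>
    obtain ⟨k, hk⟩ := hKn
    have hkR : k ∈ reach F K ε n := reach_K F K ε n hk
    have himg : F '' reach F K ε n ⊆ thk F ε (reach F K ε n) := by
      rintro _ ⟨q, hq, rfl⟩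
      refine ⟨q, hq, {F q}, isClosed_singleton, isPreconnected_singleton, rfl, rfl, ?_⟩
      simpa using hε.le
    have hN : IsPreconnected (thk F ε (reach F K ε n)) := by
      apply isPreconnected_of_forall (F k)
      rintro v ⟨q, hq, S, h1, h2, h3, h4, h5⟩
      refine ⟨F '' reach F K ε n ∪ S, Set.union_subset himg ?_, Or.inl ⟨k, hkR, rfl⟩, Or.inr h4, ?_⟩
      · intro w hw
        exact ⟨q, hq, S, h1, h2, h3, hw, h5⟩
      · exact (ih.image _ hF.continuousOn).union (F q) ⟨q, hq, rfl⟩ h3 h2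
    exact hK.union (F k) (hm hk) (subset_closure (himg ⟨k, hkR, rfl⟩)) hN.closure

theorem reach_step (F : X → X) {K : Set X} (hKc : IsClosed K) {ε : ℝ} (hε : 0 < ε) (j : ℕ) (p : X)
    (hp : p ∈ reach F K ε (j+1)) (hp' : p ∉ reach F K ε j) :
    ∃ q ∈ reach F K ε j, (∀ l < j, q ∉ reach F K ε l) ∧ dist (F q) p < 2 * ε := by
  have hpN : p ∈ closure (thk F ε (reach F K ε j)) :=
    hp.resolve_left (fun h => hp' (reach_K F K ε j h))
  obtain ⟨η, hη, hball⟩ := Metric.isOpen_iff.1 (reach_closed F hKc ε j).isOpen_compl p hp'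
  obtain ⟨p', ⟨q, hq, S, h1, h2, h3, h4, h5⟩, hd⟩ := Metric.mem_closure_iff.1 hpN (min η ε) (by positivity)
  have hp'R : p' ∉ reach F K ε j := hball (by
    rw [Metric.mem_ball, dist_comm]; exact hd.trans_le (min_le_left _ _))
  refine ⟨q, hq, ?_, ?_⟩
  · intro l hl hql
    apply hp'R
    apply reach_mono F K ε (Nat.succ_le_of_lt hl)
    exact Or.inr (subset_closure ⟨q, hql, S, h1, h2, h3, h4, h5⟩)
  · have h6 := h5 h4
    rw [Metric.mem_closedBall] at h6
    have h7 := hd.trans_le (min_le_right _ _)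
    have := dist_triangle (F q) p' p
    rw [dist_comm (F q) p', dist_comm p' p] at this
    linarith

theorem reach_seq (F : X → X) {K : Set X} (hKc : IsClosed K) {ε : ℝ} (hε : 0 < ε) (n : ℕ) :
    ∀ p, p ∈ reach F K ε n → (∀ l < n, p ∉ reach F K ε l) →
    ∃ v : ℕ → X, v 0 = p ∧ (∀ i ≤ n, v i ∈ reach F K ε (n-i) ∧ ∀ l < n - i, v i ∉ reach F K ε l) ∧
      ∀ i < n, dist (F (v (i+1))) (v i) < 2 * ε := by
  induction n with
  | zero =>
    intro p hp _
    refine ⟨fun _ => p, rfl, ?_, by simp⟩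
    intro i hi
    exact ⟨by simpa using hp, by simp⟩
  | succ n ih =>
    intro p hp hp'
    obtain ⟨q, hq, hq', hd⟩ := reach_step F hKc hε n p hp (hp' n (Nat.lt_succ_self n))
    obtain ⟨v, hv0, hv1, hv2⟩ := ih q hq hq'
    refine ⟨fun i => Nat.casesOn i p v, rfl, ?_, ?_⟩
    · intro i hi
      cases i with
      | zero => exact ⟨hp, hp'⟩
      | succ i =>
        have := hv1 i (by omega)
        rw [show n + 1 - (i + 1) = n - i by omega]
        exact this
    · intro i hi
      cases i with
      | zero => simpa [hv0] using hd
      | succ i => exact hv2 i (by omega)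

theorem chain_eps (hX : TreeLike X) (F : X → X) (hF : Continuous F) {K : Set X} (hKc : IsClosed K)
    (hK : IsPreconnected K) (hKn : K.Nonempty) (hm : MapsTo F K K) (L : ℕ)
    (hP3 : ∀ v : ℕ → X, ∃ i j, i < j ∧ j ≤ L ∧ (v i ∈ dn K (v j) ∨ v j ∈ dn K (v i)))
    (x : X) (hx : x ∉ K)
    (hch : ∀ ε > 0, ∃ n, ∃ c : ℕ → X, c 0 ∈ K ∧ c n = x ∧ ∀ i < n, dist (F (c i)) (c (i+1)) < ε)
    (ε : ℝ) (hε : 0 < ε) :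
    ∃ v : ℕ → X, ∃ i m, i < m ∧ m ≤ L ∧ v 0 = x ∧ v m ∈ dn K (v i) ∧
      ∀ j < m, dist (F (v (j+1))) (v j) < 2 * ε := by
  classical
  obtain ⟨δ, hδ, hlc⟩ := hX.lc ε hε
  obtain ⟨n₀, c, hc0, hcn, hcd⟩ := hch δ hδ
  have hreach : ∀ i ≤ n₀, c i ∈ reach F K ε i := by
    intro i
    induction i with
    | zero => exact fun _ => hc0
    | succ i ih =>
      intro hi
      obtain ⟨S, h1, h2, h3, h4, h5⟩ := hlc _ _ (hcd i (by omega))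
      exact Or.inr (subset_closure ⟨c i, ih (by omega), S, h1, h2, h3, h4, h5⟩)
  have hex : ∃ n, x ∈ reach F K ε n := ⟨n₀, hcn ▸ hreach n₀ le_rfl⟩
  obtain ⟨v, hv0, hv1, hv2⟩ := reach_seq F hKc hε (Nat.find hex) x (Nat.find_spec hex)
    (fun l hl => Nat.find_min hex hl)
  have hpos : 0 < Nat.find hex := by
    rw [Nat.pos_iff_ne_zero]
    intro h
    have := Nat.find_spec hex
    rw [h] at this
    exact hx this
  generalize Nat.find hex = n at *
  rcases Nat.lt_or_ge n L with h | h
  · refine ⟨v, 0, n, hpos, h.le, hv0, ?_, hv2⟩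
    have := (hv1 n le_rfl).1
    rw [Nat.sub_self] at this
    exact dn_sub _ _ this
  · obtain ⟨i, j, hij, hjL, hor⟩ := hP3 v
    refine ⟨v, i, j, hij, hjL, hv0, ?_, fun l hl => hv2 l (by omega)⟩
    apply hor.resolve_left
    intro hc
    have h1 := (hv1 j (by omega)).1
    refine (hv1 i (by omega)).2 (n - j) (by omega) ?_
    exact dn_min (reach_closed F hKc ε _) (reach_conn F hF hK hKn hm hε _) (reach_K F K ε _) h1 hc

theorem chain_lemma (hX : TreeLike X) (F : X → X) (hF : Continuous F) {K : Set X} (hKc : IsClosed K)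
    (hK : IsPreconnected K) (hKn : K.Nonempty) (hm : MapsTo F K K) (L : ℕ)
    (hP3 : ∀ v : ℕ → X, ∃ i j, i < j ∧ j ≤ L ∧ (v i ∈ dn K (v j) ∨ v j ∈ dn K (v i)))
    (x : X) (hx : x ∉ K)
    (hch : ∀ ε > 0, ∃ n, ∃ c : ℕ → X, c 0 ∈ K ∧ c n = x ∧ ∀ i < n, dist (F (c i)) (c (i+1)) < ε) :
    ∃ a a' : X, ∃ i k, 1 ≤ k ∧ F^[i] a = x ∧ F^[k] a' = a ∧ a' ∈ dn K a := by
  have := hX.comp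
  have H := fun p : ℕ => chain_eps hX F hF hKc hK hKn hm L hP3 x hx hch (1/((p:ℝ)+1)) Nat.one_div_pos_of_nat
  choose v i m him hmL hv0 hdn hd using H
  let w : ℕ → (ℕ → X) × (Fin (L+1) × Fin (L+1)) := fun p =>
    (v p, ⟨i p, by have := him p; have := hmL p; omega⟩, ⟨m p, by have := hmL p; omega⟩)
  obtain ⟨⟨V, I, M⟩, φ, hφ, hlim⟩ := CompactSpace.tendsto_subseq w
  rw [Prod.tendsto_iff, Prod.tendsto_iff] at hlim
  obtain ⟨hV, hI, hM⟩ := hlim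
  simp only [nhds_discrete, tendsto_pure] at hI hM
  obtain ⟨N, hN⟩ := eventually_atTop.1 (hI.and hM)
  have hVj : ∀ j, Tendsto (fun p => v (φ (p + N)) j) atTop (𝓝 (V j)) := by
    intro j
    have h1 := (tendsto_pi_nhds.1 hV j)
    exact h1.comp (tendsto_add_atTop_nat N)
  have hi : ∀ p, i (φ (p+N)) = I := fun p => congrArg Fin.val (hN (p+N) (by omega)).1
  have hmm : ∀ p, m (φ (p+N)) = M := fun p => congrArg Fin.val (hN (p+N) (by omega)).2
  have hIM : (I:ℕ) < M := by rw [← hi 0, ← hmm 0]; exact him _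
  have hV0 : V 0 = x := by
    refine tendsto_nhds_unique (hVj 0) ?_
    simp only [hv0]
    exact tendsto_const_nhds
  have hVdn : V M ∈ dn K (V I) := by
    refine dn_lim hX (hVj M) (hVj I) fun p => ?_
    have := hdn (φ (p+N))
    rwa [hi, hmm] at this
  have hVF : ∀ j < (M:ℕ), F (V (j+1)) = V j := by
    intro j hj
    rw [← dist_le_zero]
    have h1 : Tendsto (fun p => dist (F (v (φ (p+N)) (j+1))) (v (φ (p+N)) j)) atTop
        (𝓝 (dist (F (V (j+1))) (V j))) :=
      ((hF.tendsto _).comp (hVj (j+1))).dist (hVj j)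
    have h2 : Tendsto (fun p => 2 * (1/(((φ (p+N) : ℕ):ℝ)+1))) atTop (𝓝 (2*0)) := by
      apply Tendsto.const_mul
      exact (tendsto_one_div_add_atTop_nhds_zero_nat (𝕜 := ℝ)).comp
        (hφ.tendsto_atTop.comp (tendsto_add_atTop_nat N))
    rw [mul_zero] at h2
    refine le_of_tendsto_of_tendsto' h1 h2 fun p => ?_
    exact (hd (φ (p+N)) j (by rw [hmm]; exact hj)).le
  have hit : ∀ k j, j + k ≤ (M:ℕ) → F^[k] (V (j+k)) = V j := by
    intro k
    induction k with
    | zero => intro j _; rfl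
    | succ k ih =>
      intro j hj
      rw [Function.iterate_succ_apply, show j + (k+1) = (j+k)+1 by omega, hVF (j+k) (by omega)]
      exact ih j (by omega)
  refine ⟨V I, V M, I, M - I, by omega, ?_, ?_, hVdn⟩
  · have := hit I 0 (by omega)
    rw [Nat.zero_add] at this
    rw [this, hV0]
  · have := hit (M - I) I (by omega)
    rwa [show (I:ℕ) + (M - I) = M by omega] at this

theorem core_main (hX : TreeLike X) (f : X → X) (hf : Continuous f) (h0 : topEntropy f = 0)
    (s : ℕ) (hs : 1 ≤ s) {K : Set X} (hKc : IsClosed K)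
    (hK : IsPreconnected K) (hKn : K.Nonempty) (hm : MapsTo f^[s] K K) (L : ℕ)
    (hP3 : ∀ v : ℕ → X, ∃ i j, i < j ∧ j ≤ L ∧ (v i ∈ dn K (v j) ∨ v j ∈ dn K (v i)))
    (x : X)
    (hch : ∀ ε > 0, ∃ n, ∃ c : ℕ → X, c 0 ∈ K ∧ c n = x ∧ ∀ i < n, dist (f^[s] (c i)) (c (i+1)) < ε)
    (hconv : ∀ U, IsOpen U → K ⊆ U → ∀ᶠ n : ℕ in atTop, (f^[s])^[n] x ∈ U) : x ∈ K := by
  by_contra hx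
  obtain ⟨a, a', i, k, hk, hax, haa, hdn⟩ := chain_lemma hX f^[s] (hf.iterate s) hKc hK hKn hm L hP3 x hx hch
  have hit : ∀ k, f^[s * k] = (f^[s])^[k] := fun k => Function.iterate_mul f s k
  refine core_contra hX f hf h0 (s*k) (Nat.mul_pos hs hk) K hKc hK hKn (by rw [hit]; exact hm.iterate k)
    a a' (fun h => hx (hax ▸ hm.iterate i h)) hdn (by rw [hit]; exact haa) ?_ ?_
  · intro U hU hKU
    obtain ⟨N, hN⟩ := eventually_atTop.1 (hconv U hU hKU)
    filter_upwards [eventually_ge_atTop (N + i)] with n hn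
    rw [hit, ← Function.iterate_mul]
    have h1 : n ≤ k * n := Nat.le_mul_of_pos_left n hk
    rw [show k * n = (k*n - i) + i by omega, Function.iterate_add_apply, hax]
    exact hN _ (by omega)
  · intro v
    obtain ⟨i, j, h1, _, h2⟩ := hP3 v
    exact ⟨i, j, h1, h2⟩

end chain

section omega
variable {X : Type*} [MetricSpace X]

theorem omega_eventually [CompactSpace X] (f : X → X) (x : X) (W : Set X) (hW : IsOpen W)
    (h : omegaLimitSet f x ⊆ W) : ∀ᶠ n in atTop, f^[n] x ∈ W := by
  have hdir : Directed (· ⊇ ·) (fun n : ℕ => closure ((fun k => f^[k] x) '' Set.Ici n)) := by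
    intro m n
    refine ⟨max m n, ?_, ?_⟩
    · exact closure_mono (Set.image_mono (Set.Ici_subset_Ici.2 (le_max_left _ _)))
    · exact closure_mono (Set.image_mono (Set.Ici_subset_Ici.2 (le_max_right _ _)))
  obtain ⟨n, hn⟩ := exists_subset_nhds_of_isCompact' hdir
    (fun n => isClosed_closure.isCompact) (fun n => isClosed_closure) (U := W)
    (fun y hy => hW.mem_nhds (h hy))
  filter_upwards [eventually_ge_atTop n] with k hk
  exact hn (subset_closure ⟨k, hk, rfl⟩)

theorem omega_conv [CompactSpace X] (f : X → X) (hf : Continuous f) (x : X) (s : ℕ) (hs : 1 ≤ s)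
    (Ks : ℕ → Set X) (hc : ∀ i, IsClosed (Ks i))
    (hd : ∀ i j, i < j → j < s → Disjoint (Ks i) (Ks j)) (hm : ∀ i, MapsTo f^[s] (Ks i) (Ks i))
    (hω : omegaLimitSet f x ⊆ ⋃ i ∈ Finset.range s, Ks i) :
    ∃ i < s, ∀ U, IsOpen U → Ks i ⊆ U → ∀ᶠ n : ℕ in atTop, (f^[s])^[n] x ∈ U := by
  have hit : ∀ k, f^[s * k] = (f^[s])^[k] := fun k => Function.iterate_mul f s k
  obtain ⟨z, φ, hφ, hz⟩ := CompactSpace.tendsto_subseq (fun n => (f^[s])^[n] x)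
  have hzω : z ∈ omegaLimitSet f x := by
    rw [omegaLimitSet, Set.mem_iInter]
    intro n
    refine mem_closure_of_tendsto hz ?_
    filter_upwards [eventually_ge_atTop n] with k hk
    refine ⟨s * φ k, ?_, congrFun (hit (φ k)) x⟩
    have h1 := hφ.id_le k
    have h2 : φ k ≤ s * φ k := Nat.le_mul_of_pos_left _ hs
    exact hk.trans (h1.trans h2)
  obtain ⟨i, hi, hzi⟩ := Set.mem_iUnion₂.1 (hω hzω)
  rw [Finset.mem_range] at hi
  refine ⟨i, hi, ?_⟩
  set K' : Set X := ⋃ j ∈ (Finset.range s).filter (· ≠ i), Ks j with hK'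
  have hK'c : IsClosed K' := isClosed_biUnion_finset fun j _ => hc j
  have hK'm : MapsTo f^[s] K' K' := by
    intro y hy
    obtain ⟨j, hj, hyj⟩ := Set.mem_iUnion₂.1 hy
    exact Set.mem_iUnion₂.2 ⟨j, hj, hm j hyj⟩
  have hdis : Disjoint (Ks i) K' := by
    rw [Set.disjoint_left]
    intro y hy hy'
    obtain ⟨j, hj, hyj⟩ := Set.mem_iUnion₂.1 hy'
    rw [Finset.mem_filter, Finset.mem_range] at hj
    rcases Nat.lt_or_gt_of_ne hj.2 with h | h
    · exact Set.disjoint_left.1 (hd j i h hi) hyj hy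
    · exact Set.disjoint_left.1 (hd i j h hj.1) hy hyj
  have hun : omegaLimitSet f x ⊆ Ks i ∪ K' := by
    intro y hy
    obtain ⟨j, hj, hyj⟩ := Set.mem_iUnion₂.1 (hω hy)
    by_cases h : j = i
    · subst h; exact Or.inl hyj
    · exact Or.inr (Set.mem_iUnion₂.2 ⟨j, Finset.mem_filter.2 ⟨hj, h⟩, hyj⟩)
  obtain ⟨U, U', hU, hU', hKU, hKU', hUU⟩ := normal_separation (hc i) hK'c hdis
  have hFc : Continuous f^[s] := hf.iterate s
  have hevF : ∀ W, IsOpen W → omegaLimitSet f x ⊆ W → ∀ᶠ n in atTop, (f^[s])^[n] x ∈ W := by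
    intro W hW h
    obtain ⟨N, hN⟩ := eventually_atTop.1 (omega_eventually f x W hW h)
    filter_upwards [eventually_ge_atTop N] with n hn
    rw [← hit]
    exact hN _ (hn.trans (Nat.le_mul_of_pos_left _ hs))
  have h1 := hevF ((U ∩ f^[s] ⁻¹' U) ∪ (U' ∩ f^[s] ⁻¹' U'))
    ((hU.inter (hU.preimage hFc)).union (hU'.inter (hU'.preimage hFc)))
    (hun.trans (Set.union_subset_union (fun y hy => ⟨hKU hy, hKU (hm i hy)⟩)
      (fun y hy => ⟨hKU' hy, hKU' (hK'm hy)⟩)))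
  obtain ⟨N, hN⟩ := eventually_atTop.1 h1
  have h2 : ∀ᶠ k in atTop, (f^[s])^[φ k] x ∈ U := hz (hU.mem_nhds (hKU hzi))
  obtain ⟨k, hk, hkN⟩ := (h2.and (eventually_ge_atTop N)).exists
  have hkN' : N ≤ φ k := hkN.trans (hφ.id_le k)
  have h3 : ∀ n, φ k ≤ n → (f^[s])^[n] x ∈ U := by
    intro n hn
    induction n, hn using Nat.le_induction with
    | base => exact hk
    | succ n hn ih =>
      rw [Function.iterate_succ_apply']
      rcases hN n (by omega) with h | h
      · exact h.2
      · exact (Set.disjoint_left.1 hUU ih h.1).elim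
  intro V hV hKV
  have h4 := hevF (V ∪ U') (hV.union hU') (hun.trans (Set.union_subset_union hKV hKU'))
  filter_upwards [h4, eventually_ge_atTop (φ k)] with n h5 h6
  exact h5.resolve_right (Set.disjoint_left.1 hUU (h3 n h6))

theorem chain_shadow [CompactSpace X] (f : X → X) (hf : Continuous f) (t : ℕ) : ∀ η > 0,
    ∃ δ > 0, ∀ c : ℕ → X, (∀ i, dist (f (c i)) (c (i+1)) < δ) → ∀ i, dist (f^[t] (c i)) (c (i+t)) < η := by
  induction t with
  | zero => intro η hη; exact ⟨1, one_pos, fun c _ i => by simpa using hη⟩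
  | succ t ih =>
    intro η hη
    obtain ⟨ρ, hρ, H⟩ := Metric.uniformContinuous_iff.1
      (CompactSpace.uniformContinuous_of_continuous hf) (η/2) (by positivity)
    obtain ⟨δ, hδ, H'⟩ := ih ρ hρ
    refine ⟨min δ (η/2), by positivity, fun c hc i => ?_⟩
    have h1 := H (H' c (fun i => (hc i).trans_le (min_le_left _ _)) i)
    have h2 := (hc (i+t)).trans_le (min_le_right _ _)
    rw [Function.iterate_succ_apply']
    have := dist_triangle (f (f^[t] (c i))) (f (c (i+t))) (c (i+t+1))
    rw [← add_assoc]
    linarith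

theorem chain_from_K [CompactSpace X] (f : X → X) (hf : Continuous f) (x : X)
    (hx : x ∈ chainRecurrentSet f) (s : ℕ) (K : Set X)
    (hconv : ∀ U, IsOpen U → K ⊆ U → ∀ᶠ n : ℕ in atTop, (f^[s])^[n] x ∈ U) :
    ∀ ε > 0, ∃ n, ∃ c : ℕ → X, c 0 ∈ K ∧ c n = x ∧ ∀ i < n, dist (f^[s] (c i)) (c (i+1)) < ε := by
  intro ε hε
  obtain ⟨η, hη, hη'⟩ := Metric.uniformContinuous_iff.1
      (CompactSpace.uniformContinuous_of_continuous (hf.iterate s)) (ε/2) (by positivity)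
  obtain ⟨q, hq⟩ := (hconv (Metric.thickening (η/2) K) Metric.isOpen_thickening
    (Metric.self_subset_thickening (by positivity) K)).exists
  obtain ⟨k, hk, hkd⟩ := Metric.mem_thickening_iff.1 hq
  rw [← Function.iterate_mul] at hkd
  obtain ⟨δ₁, hδ₁, H₁⟩ := chain_shadow f hf s (ε/2) (by positivity)
  obtain ⟨δ₂, hδ₂, H₂⟩ := chain_shadow f hf (s*q) (η/2) (by positivity)
  obtain ⟨m, hm, c, hc0, hcm, hc⟩ := hx (min δ₁ δ₂) (by positivity)
  set d : ℕ → X := fun j => c (j % m) with hd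
  have hdd : ∀ i, dist (f (d i)) (d (i+1)) < min δ₁ δ₂ := by
    intro i
    have hlt : i % m < m := Nat.mod_lt _ hm
    have h1 := hc (i % m) hlt
    have h2 : d (i+1) = c (i % m + 1) := by
      simp only [hd]
      rcases Nat.lt_or_ge (i % m + 1) m with h | h
      · rw [Nat.add_mod, Nat.mod_eq_of_lt (a := 1) (by omega), Nat.mod_eq_of_lt h]
      · have h3 : i % m + 1 = m := by omega
        rw [h3, hcm, ← Nat.mod_add_mod, h3, Nat.mod_self, hc0]
    rw [h2]; exact h1
  have hd0 : ∀ j, d (m * j) = x := by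
    intro j
    simp only [hd, Nat.mul_mod_right, hc0]
  have S₁ := H₁ d (fun i => (hdd i).trans_le (min_le_left _ _))
  have S₂ := H₂ d (fun i => (hdd i).trans_le (min_le_right _ _)) 0
  rw [Nat.zero_add, show d 0 = x from by simpa using hd0 0] at S₂
  have hq1 : q + 1 ≤ m * (q+1) := Nat.le_mul_of_pos_left _ hm
  refine ⟨m * (q+1) - q, fun j => if j = 0 then k else d (s*q + s * j), by simpa using hk, ?_, ?_⟩
  · beta_reduce
    rw [if_neg (by omega), ← Nat.mul_add, show q + (m * (q+1) - q) = m * (q+1) by omega,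
      show s * (m * (q+1)) = m * (s * (q+1)) by ring]
    exact hd0 _
  · intro i hi
    beta_reduce
    rw [if_neg (by omega : ¬ (i + 1 = 0))]
    rcases Nat.eq_zero_or_pos i with h | h
    · subst h
      rw [if_pos rfl, Nat.zero_add, Nat.mul_one]
      have h1 : dist k (d (s*q)) < η := by
        have := dist_triangle k (f^[s*q] x) (d (s*q))
        rw [dist_comm k (f^[s*q] x)] at this
        linarith
      have h2 := hη' h1
      have h3 := S₁ (s*q)
      have := dist_triangle (f^[s] k) (f^[s] (d (s*q))) (d (s*q+s))
      linarith
    · rw [if_neg (by omega : ¬ (i = 0)), show s*q + s*(i+1) = s*q+s*i+s by ring]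
      have := S₁ (s*q+s*i)
      linarith

end omega

theorem main_of_treelike {X : Type*} [MetricSpace X] (hX : TreeLike X) (L : ℕ)
    (hP3 : ∀ K : Set X, K.Nonempty →
      ∀ v : ℕ → X, ∃ i j, i < j ∧ j ≤ L ∧ (v i ∈ dn K (v j) ∨ v j ∈ dn K (v i)))
    (f : X → X) (hf : Continuous f) (h0 : topEntropy f = 0)
    {x : X} (hx : x ∈ chainRecurrentSet f)
    {I : Set X} {s : ℕ} (hI : IsPeriodicArc f I s)
    (hω : omegaLimitSet f x ⊆ arcOrbit f I s) :
    x ∈ arcOrbit f I s := by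
  have := hX.comp
  obtain ⟨⟨e⟩, hs, hm, hd⟩ := hI
  have hIr : I = Set.range (fun t : Set.Icc (0:ℝ) 1 => (e.symm t : X)) := by
    ext y
    constructor
    · intro hy; exact ⟨e ⟨y, hy⟩, by simp⟩
    · rintro ⟨t, rfl⟩; exact (e.symm t).2
  have hec : Continuous (fun t : Set.Icc (0:ℝ) 1 => (e.symm t : X)) :=
    continuous_subtype_val.comp e.symm.continuous
  have hIc : IsCompact I := by rw [hIr]; exact isCompact_range hec
  have hIp : IsConnected I := by rw [hIr]; exact isConnected_range hec
  have hmi : ∀ i, MapsTo f^[s] (f^[i] '' I) (f^[i] '' I) := by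
    rintro i _ ⟨y, hy, rfl⟩
    refine ⟨f^[s] y, hm hy, ?_⟩
    rw [← Function.iterate_add_apply, ← Function.iterate_add_apply, Nat.add_comm]
  have hc : ∀ i, IsClosed (f^[i] '' I) := fun i => (hIc.image (hf.iterate i)).isClosed
  obtain ⟨i, hi, hconv⟩ := omega_conv f hf x s hs (fun i => f^[i] '' I) hc hd hmi hω
  have hcon : IsConnected (f^[i] '' I) := hIp.image _ (hf.iterate i).continuousOn
  have := core_main hX f hf h0 s hs (hc i) hcon.2 hcon.1 (hmi i) L (hP3 _ hcon.1) x
    (chain_from_K f hf x hx s _ hconv) hconv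
  exact Set.mem_iUnion₂.2 ⟨i, Finset.mem_range.2 hi, this⟩

section arcs
variable {X : Type*} [MetricSpace X]

/-- `γ` parametrizes `A` injectively on `[0,1]`. -/
def Par (γ : ℝ → X) (A : Set X) : Prop :=
  ContinuousOn γ (Set.Icc 0 1) ∧ Set.InjOn γ (Set.Icc 0 1) ∧ γ '' Set.Icc 0 1 = A

theorem arc_param {A : Set X} (h : IsArc A) : ∃ γ : ℝ → X, Par γ A := by
  obtain ⟨e⟩ := h
  refine ⟨fun t => (e.symm (Set.projIcc 0 1 zero_le_one t) : X), ?_, ?_, ?_⟩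
  · exact (continuous_subtype_val.comp (e.symm.continuous.comp continuous_projIcc)).continuousOn
  · intro s hs t ht hst
    have h1 : e.symm (Set.projIcc 0 1 zero_le_one s) = e.symm (Set.projIcc 0 1 zero_le_one t) :=
      Subtype.ext hst
    have h2 := e.symm.injective h1
    rw [Set.projIcc_of_mem _ hs, Set.projIcc_of_mem _ ht] at h2
    exact congrArg Subtype.val h2
  · ext y
    constructor
    · rintro ⟨t, _, rfl⟩; exact (e.symm _).2
    · intro hy
      refine ⟨(e ⟨y, hy⟩ : ℝ), (e ⟨y, hy⟩).2, ?_⟩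
      simp

theorem par_compact {γ : ℝ → X} {A : Set X} (h : Par γ A) : IsCompact A := by
  rw [← h.2.2]; exact isCompact_Icc.image_of_continuousOn h.1

theorem par_conn {γ : ℝ → X} {A : Set X} (h : Par γ A) : IsPreconnected A := by
  rw [← h.2.2]; exact isPreconnected_Icc.image _ h.1

theorem par_ord {γ : ℝ → X} {A : Set X} (h : Par γ A) {C : Set X} (hCA : C ⊆ A) (hC : IsPreconnected C)
    {u v w : ℝ} (hu : 0 ≤ u) (huv : u ≤ v) (hvw : v ≤ w) (hw : w ≤ 1) (h1 : γ u ∈ C) (h2 : γ w ∈ C) :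
    γ v ∈ C := by
  have hc : ∀ a b : ℝ, 0 ≤ a → b ≤ 1 → IsClosed (γ '' Set.Icc a b) := fun a b ha hb =>
    (isCompact_Icc.image_of_continuousOn (h.1.mono (Set.Icc_subset_Icc ha hb))).isClosed
  obtain ⟨y, hy, ⟨s, hs, rfl⟩, ⟨t, ht, hst⟩⟩ := isPreconnected_closed_iff.1 hC (γ '' Set.Icc 0 v) (γ '' Set.Icc v 1)
    (hc _ _ le_rfl (by linarith)) (hc _ _ (by linarith) le_rfl) (by
      intro c hc
      have := hCA hc
      rw [← h.2.2] at this
      obtain ⟨t, ht, rfl⟩ := this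
      rcases le_total t v with h3 | h3
      · exact Or.inl ⟨t, ⟨ht.1, h3⟩, rfl⟩
      · exact Or.inr ⟨t, ⟨h3, ht.2⟩, rfl⟩)
    ⟨γ u, h1, u, ⟨hu, huv⟩, rfl⟩ ⟨γ w, h2, w, ⟨hvw, hw⟩, rfl⟩
  have : t = s := h.2.1 ⟨by linarith [ht.1], ht.2⟩ ⟨hs.1, by linarith [hs.2]⟩ hst
  have h3 : s = v := by
    subst this
    exact le_antisymm hs.2 ht.1
  rw [← h3]; exact hy

theorem par_endpoint {γ : ℝ → X} {A : Set X} (h : Par γ A) {t : ℝ} (ht : t ∈ Set.Icc (0:ℝ) 1)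
    (he : IsArcEndpoint A (γ t)) : t = 0 ∨ t = 1 := by
  by_contra hn
  push Not at hn
  have hmem : ∀ s ∈ Set.Icc (0:ℝ) 1, s ≠ t → γ s ∈ A \ {γ t} := by
    intro s hs hst
    refine ⟨h.2.2 ▸ ⟨s, hs, rfl⟩, fun h' => hst (h.2.1 hs ht h')⟩
  have := par_ord h Set.sdiff_subset he.2.isPreconnected le_rfl ht.1 ht.2 le_rfl
    (hmem 0 (by simp) (Ne.symm hn.1)) (hmem 1 (by simp) (Ne.symm hn.2))
  exact this.2 rfl

/-- paths property and unicoherence property. -/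
structure Good (T : Set X) : Prop where
  closed : IsClosed T
  path : ∀ p ∈ T, ∀ q ∈ T, p ≠ q → ∃ γ : ℝ → X, ContinuousOn γ (Set.Icc 0 1) ∧
    Set.InjOn γ (Set.Icc 0 1) ∧ γ 0 = p ∧ γ 1 = q ∧ ∀ t ∈ Set.Icc (0:ℝ) 1, γ t ∈ T
  uni : ∀ C D : Set X, C ⊆ T → D ⊆ T → IsPreconnected C → IsPreconnected D → IsPreconnected (C ∩ D)

theorem good_arc {γ : ℝ → X} {A : Set X} (h : Par γ A) : Good A where
  closed := (par_compact h).isClosed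
  path := by
    intro p hp q hq hpq
    rw [← h.2.2] at hp hq
    obtain ⟨s, hs, rfl⟩ := hp
    obtain ⟨t, ht, rfl⟩ := hq
    have hst : t - s ≠ 0 := fun h' => hpq (by rw [sub_eq_zero.1 h'])
    have hmap : MapsTo (fun r : ℝ => s + r * (t - s)) (Set.Icc 0 1) (Set.Icc 0 1) := by
      rintro r ⟨h1, h2⟩
      obtain ⟨h3, h4⟩ := hs
      obtain ⟨h5, h6⟩ := ht
      constructor
      · nlinarith
      · nlinarith
    refine ⟨fun r => γ (s + r * (t - s)), ?_, ?_, by simp, by simp, ?_⟩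
    · exact h.1.comp (by fun_prop) hmap
    · intro r hr r' hr' heq
      have := h.2.1 (hmap hr) (hmap hr') heq
      have h2 : r * (t-s) = r' * (t-s) := by linarith
      exact mul_right_cancel₀ hst h2
    · intro r hr
      rw [← h.2.2]
      exact ⟨_, hmap hr, rfl⟩
  uni := by
    intro C D hC hD hCc hDc
    have heq : C ∩ D = γ '' {t | t ∈ Set.Icc (0:ℝ) 1 ∧ γ t ∈ C ∩ D} := by
      ext y
      constructor
      · intro hy
        have := hC hy.1
        rw [← h.2.2] at this
        obtain ⟨t, ht, rfl⟩ := this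
        exact ⟨t, ⟨ht, hy⟩, rfl⟩
      · rintro ⟨t, ht, rfl⟩; exact ht.2
    rw [heq]
    have hord : Set.OrdConnected {t | t ∈ Set.Icc (0:ℝ) 1 ∧ γ t ∈ C ∩ D} := by
      constructor
      rintro u ⟨hu, huC⟩ w ⟨hw, hwC⟩ v ⟨huv, hvw⟩
      exact ⟨⟨hu.1.trans huv, hvw.trans hw.2⟩,
        par_ord h hC hCc hu.1 huv hvw hw.2 huC.1 hwC.1, par_ord h hD hDc hu.1 huv hvw hw.2 huC.2 hwC.2⟩
    exact hord.isPreconnected.image _ (h.1.mono fun t ht => ht.1)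

/-- concatenation. -/
noncomputable def cat (α β : ℝ → X) : ℝ → X := fun t => if t ≤ 1/2 then α (2*t) else β (2*t-1)

theorem cat_cont {α β : ℝ → X} (hα : ContinuousOn α (Set.Icc 0 1)) (hβ : ContinuousOn β (Set.Icc 0 1))
    (h : α 1 = β 0) : ContinuousOn (cat α β) (Set.Icc 0 1) := by
  have h1 : ContinuousOn (cat α β) (Set.Icc 0 (1/2)) := by
    refine ContinuousOn.congr (f := fun t => α (2*t)) (hα.comp (by fun_prop) ?_) ?_
    · rintro t ⟨h1, h2⟩; constructor <;> linarith
    · rintro t ⟨h1, h2⟩; simp only [cat, if_pos h2]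
  have h2 : ContinuousOn (cat α β) (Set.Icc (1/2) 1) := by
    refine ContinuousOn.congr (f := fun t => β (2*t-1)) (hβ.comp (by fun_prop) ?_) ?_
    · rintro t ⟨h1, h2⟩; constructor <;> linarith
    · rintro t ⟨h1, h2⟩
      simp only [cat]
      split_ifs with h3
      · have : t = 1/2 := le_antisymm h3 h1
        subst this
        norm_num [h]
      · rfl
  have := h1.union_of_isClosed h2 isClosed_Icc isClosed_Icc
  rwa [Set.Icc_union_Icc_eq_Icc (by norm_num) (by norm_num)] at this

theorem cat_inj {α β : ℝ → X} (hα : Set.InjOn α (Set.Icc 0 1)) (J : Set ℝ)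
    (hβ : Set.InjOn β J) (hd : ∀ s ∈ Set.Icc (0:ℝ) 1, ∀ t ∈ J, α s ≠ β t) (Q : Set ℝ)
    (hQ0 : ∀ t ∈ Q, 0 ≤ t) (hQ : ∀ t ∈ Q, 1/2 < t → 2*t-1 ∈ J) : Set.InjOn (cat α β) Q := by
  intro s hs t ht hst
  simp only [cat] at hst
  have hs0 := hQ0 s hs
  have ht0 := hQ0 t ht
  split_ifs at hst with h1 h2 h2
  · have := hα ⟨by linarith, by linarith⟩ ⟨by linarith, by linarith⟩ hst
    linarith
  · exact (hd _ ⟨by linarith, by linarith⟩ _ (hQ t ht (not_le.1 h2)) hst).elim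
  · exact (hd _ ⟨by linarith, by linarith⟩ _ (hQ s hs (not_le.1 h1)) hst.symm).elim
  · have := hβ (hQ s hs (not_le.1 h1)) (hQ t ht (not_le.1 h2)) hst
    linarith

theorem wedge_piece {T₁ T₂ : Set X} {r : X} (h1 : IsClosed T₁) (h2 : IsClosed T₂) (hr : T₁ ∩ T₂ = {r})
    {C : Set X} (hC : C ⊆ T₁ ∪ T₂) (hCc : IsPreconnected C) : IsPreconnected (C ∩ T₁) := by
  have hrT : r ∈ T₁ ∩ T₂ := hr ▸ rfl
  by_cases hrC : r ∈ C
  · have aux : ∀ U V : Set X, IsClosed U → IsClosed V → C ∩ T₁ ⊆ U ∪ V → (C ∩ T₁ ∩ V).Nonempty →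
        r ∈ U → (C ∩ T₁ ∩ (U ∩ V)).Nonempty := by
      intro U V hU hV hsub ⟨v, hv, hvV⟩ hrU
      obtain ⟨z, hz, hz1, hz2⟩ := isPreconnected_closed_iff.1 hCc ((U ∩ T₁) ∪ T₂) (V ∩ T₁)
        ((hU.inter h1).union h2) (hV.inter h1) (by
          intro c hc
          rcases hC hc with h | h
          · rcases hsub ⟨hc, h⟩ with h' | h'
            · exact Or.inl (Or.inl ⟨h', h⟩)
            · exact Or.inr ⟨h', h⟩
          · exact Or.inl (Or.inr h)) ⟨r, hrC, Or.inr hrT.2⟩ ⟨v, hv.1, hvV, hv.2⟩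
      rcases hz1 with h | h
      · exact ⟨z, ⟨hz, h.2⟩, h.1, hz2.1⟩
      · have : z ∈ T₁ ∩ T₂ := ⟨hz2.2, h⟩
        rw [hr] at this
        obtain rfl : z = r := this
        exact ⟨z, ⟨hz, hz2.2⟩, hrU, hz2.1⟩
    rw [isPreconnected_closed_iff]
    intro U V hU hV hsub hnU hnV
    rcases hsub ⟨hrC, hrT.1⟩ with h | h
    · exact aux U V hU hV hsub hnV h
    · rw [Set.inter_comm U V]
      exact aux V U hV hU (by rwa [Set.union_comm]) hnU h
  · by_cases hne : (C ∩ T₁).Nonempty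
    · by_cases hne2 : (C ∩ T₂).Nonempty
      · obtain ⟨z, hz, hz1⟩ := isPreconnected_closed_iff.1 hCc T₁ T₂ h1 h2 hC hne hne2
        rw [hr] at hz1
        obtain rfl : z = r := hz1
        exact (hrC hz).elim
      · rw [Set.not_nonempty_iff_eq_empty] at hne2
        have : C ∩ T₁ = C := by
          apply Set.inter_eq_left.2
          intro c hc
          refine (hC hc).resolve_right fun h => ?_
          have : c ∈ C ∩ T₂ := ⟨hc, h⟩
          rw [hne2] at this; exact this
        rw [this]; exact hCc
    · rw [Set.not_nonempty_iff_eq_empty] at hne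
      rw [hne]; exact isPreconnected_empty

theorem good_wedge {T₁ T₂ : Set X} {r : X} (h1 : Good T₁) (h2 : Good T₂) (hr : T₁ ∩ T₂ = {r}) :
    Good (T₁ ∪ T₂) where
  closed := h1.closed.union h2.closed
  path := by
    have hrT : r ∈ T₁ ∩ T₂ := hr ▸ rfl
    have key : ∀ p ∈ T₁, ∀ q ∈ T₂, p ≠ q → ∃ γ : ℝ → X, ContinuousOn γ (Set.Icc 0 1) ∧
        Set.InjOn γ (Set.Icc 0 1) ∧ γ 0 = p ∧ γ 1 = q ∧ ∀ t ∈ Set.Icc (0:ℝ) 1, γ t ∈ T₁ ∪ T₂ := by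
      intro p hp q hq hpq
      by_cases hpr : p = r
      · obtain ⟨γ, a, b, c, d, e⟩ := h2.path p (hpr ▸ hrT.2) q hq hpq
        exact ⟨γ, a, b, c, d, fun t ht => Or.inr (e t ht)⟩
      by_cases hqr : q = r
      · obtain ⟨γ, a, b, c, d, e⟩ := h1.path p hp q (hqr ▸ hrT.1) hpq
        exact ⟨γ, a, b, c, d, fun t ht => Or.inl (e t ht)⟩
      obtain ⟨α, a1, b1, c1, d1, e1⟩ := h1.path p hp r hrT.1 hpr
      obtain ⟨β, a2, b2, c2, d2, e2⟩ := h2.path r hrT.2 q hq (Ne.symm hqr)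
      refine ⟨cat α β, cat_cont a1 a2 (d1.trans c2.symm), ?_, ?_, ?_, ?_⟩
      · refine cat_inj b1 (Set.Ioc 0 1) (b2.mono Set.Ioc_subset_Icc_self) ?_ _ (fun t ht => ht.1) ?_
        · intro s hs t ht hst
          have : α s ∈ T₁ ∩ T₂ := ⟨e1 s hs, hst ▸ e2 t (Set.Ioc_subset_Icc_self ht)⟩
          rw [hr] at this
          have h3 : β t = β 0 := by rw [← hst, c2]; exact this
          have := b2 (Set.Ioc_subset_Icc_self ht) (by simp) h3
          exact ht.1.ne this.symm
        · intro t ht ht'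
          exact ⟨by linarith, by linarith [ht.2]⟩
      · simp [cat, c1]
      · norm_num [cat, d2]
      · intro t ht
        simp only [cat]
        split_ifs with h
        · exact Or.inl (e1 _ ⟨by linarith [ht.1], by linarith⟩)
        · exact Or.inr (e2 _ ⟨by linarith [ht.1], by linarith [ht.2]⟩)
    rintro p (hp | hp) q (hq | hq) hpq
    · obtain ⟨γ, a, b, c, d, e⟩ := h1.path p hp q hq hpq
      exact ⟨γ, a, b, c, d, fun t ht => Or.inl (e t ht)⟩
    · exact key p hp q hq hpq
    · obtain ⟨γ, a, b, c, d, e⟩ := key q hq p hp hpq.symm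
      have hmap : MapsTo (fun t : ℝ => 1 - t) (Set.Icc 0 1) (Set.Icc 0 1) := by
        rintro t ⟨h1, h2⟩; constructor <;> linarith
      refine ⟨fun t => γ (1 - t), a.comp (by fun_prop) hmap, ?_, by simpa using d, by simpa using c,
        fun t ht => e _ (hmap ht)⟩
      intro s hs t ht hst
      have := b (hmap hs) (hmap ht) hst
      linarith
    · obtain ⟨γ, a, b, c, d, e⟩ := h2.path p hp q hq hpq
      exact ⟨γ, a, b, c, d, fun t ht => Or.inr (e t ht)⟩
  uni := by
    have hrT : r ∈ T₁ ∩ T₂ := hr ▸ rfl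
    intro C D hC hD hCc hDc
    have hr' : T₂ ∩ T₁ = {r} := by rw [Set.inter_comm]; exact hr
    have hsw : ∀ {C : Set X}, C ⊆ T₁ ∪ T₂ → C ⊆ T₂ ∪ T₁ := fun h => by rwa [Set.union_comm]
    have p1 := h1.uni _ _ Set.inter_subset_right Set.inter_subset_right
      (wedge_piece h1.closed h2.closed hr hC hCc) (wedge_piece h1.closed h2.closed hr hD hDc)
    have p2 := h2.uni _ _ Set.inter_subset_right Set.inter_subset_right
      (wedge_piece h2.closed h1.closed hr' (hsw hC) hCc) (wedge_piece h2.closed h1.closed hr' (hsw hD) hDc)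
    have heq : C ∩ D = ((C ∩ T₁) ∩ (D ∩ T₁)) ∪ ((C ∩ T₂) ∩ (D ∩ T₂)) := by
      ext y
      constructor
      · rintro ⟨a, b⟩
        rcases hC a with h | h
        · exact Or.inl ⟨⟨a, h⟩, b, h⟩
        · exact Or.inr ⟨⟨a, h⟩, b, h⟩
      · rintro (h | h)
        · exact ⟨h.1.1, h.2.1⟩
        · exact ⟨h.1.1, h.2.1⟩
    have hrmem : ∀ {C : Set X}, C ⊆ T₁ ∪ T₂ → IsPreconnected C → (C ∩ T₁).Nonempty → (C ∩ T₂).Nonempty → r ∈ C := by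
      intro C hC hCc a b
      obtain ⟨z, hz, hz1⟩ := isPreconnected_closed_iff.1 hCc T₁ T₂ h1.closed h2.closed hC a b
      rw [hr] at hz1
      obtain rfl : z = r := hz1
      exact hz
    rw [heq]
    rcases Set.eq_empty_or_nonempty ((C ∩ T₁) ∩ (D ∩ T₁)) with h | h
    · rw [h, Set.empty_union]; exact p2
    rcases Set.eq_empty_or_nonempty ((C ∩ T₂) ∩ (D ∩ T₂)) with h' | h'
    · rw [h', Set.union_empty]; exact p1
    have hrC := hrmem hC hCc (h.mono Set.inter_subset_left) (h'.mono Set.inter_subset_left)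
    have hrD := hrmem hD hDc (h.mono Set.inter_subset_right) (h'.mono Set.inter_subset_right)
    exact p1.union r ⟨⟨hrC, hrT.1⟩, hrD, hrT.1⟩ ⟨⟨hrC, hrT.2⟩, hrD, hrT.2⟩ p2

theorem loop_scc {γ : ℝ → X} (hc : ContinuousOn γ (Set.Icc 0 1)) (hi : Set.InjOn γ (Set.Ico 0 1))
    (h01 : γ 0 = γ 1) : ∃ S : Set X, IsSimpleClosedCurve S := by
  have : Fact ((0:ℝ) < 1) := ⟨one_pos⟩
  let g : AddCircle (1:ℝ) → X := AddCircle.liftIco 1 0 γ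
  have hg : Continuous g := AddCircle.liftIco_continuous (by simpa using h01) (by simpa using hc)
  have hginj : Function.Injective g := by
    intro a b hab
    obtain ⟨s, hs, rfl⟩ : ∃ s ∈ Set.Ico (0:ℝ) (0+1), (s : AddCircle (1:ℝ)) = a := by
      have : a ∈ ((↑) : ℝ → AddCircle (1:ℝ)) '' Set.Ico 0 (0+1) := by
        rw [AddCircle.coe_image_Ico_eq]; trivial
      exact this
    obtain ⟨t, ht, rfl⟩ : ∃ s ∈ Set.Ico (0:ℝ) (0+1), (s : AddCircle (1:ℝ)) = b := by
      have : b ∈ ((↑) : ℝ → AddCircle (1:ℝ)) '' Set.Ico 0 (0+1) := by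
        rw [AddCircle.coe_image_Ico_eq]; trivial
      exact this
    simp only [g] at hab
    rw [AddCircle.liftIco_coe_apply hs, AddCircle.liftIco_coe_apply ht] at hab
    rw [zero_add] at hs ht
    rw [hi hs ht hab]
  have hemb := (hg.isClosedEmbedding hginj).isEmbedding
  have e1 : Set.range g ≃ₜ AddCircle (1:ℝ) := hemb.toHomeomorph.symm
  have e2 : AddCircle (1:ℝ) ≃ₜ Circle := AddCircle.homeomorphCircle one_ne_zero
  have e3 : Circle ≃ₜ Metric.sphere (0:ℂ) 1 :=
    { toFun := fun z => ⟨z, by rw [mem_sphere_zero_iff_norm]; exact Circle.norm_coe z⟩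
      invFun := fun z => ⟨z, z.2⟩
      left_inv := fun z => rfl
      right_inv := fun z => rfl
      continuous_toFun := by fun_prop
      continuous_invFun := by fun_prop }
  exact ⟨Set.range g, ⟨e1.trans (e2.trans e3)⟩⟩

end arcs

section assemble
variable {X : Type*} [MetricSpace X]

theorem finset_delta {α : Type*} (s : Finset α) (P : α → ℝ → Prop)
    (hmono : ∀ a δ δ', 0 < δ' → δ' ≤ δ → P a δ → P a δ') (h : ∀ a ∈ s, ∃ δ > 0, P a δ) :
    ∃ δ > 0, ∀ a ∈ s, P a δ := by
  classical
  induction s using Finset.induction_on with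
  | empty => exact ⟨1, one_pos, by simp⟩
  | insert a s ha ih =>
    obtain ⟨δ, hδ, H⟩ := ih fun b hb => h b (Finset.mem_insert_of_mem hb)
    obtain ⟨δ', hδ', H'⟩ := h a (Finset.mem_insert_self _ _)
    refine ⟨min δ δ', by positivity, fun b hb => ?_⟩
    rcases Finset.mem_insert.1 hb with rfl | hb
    · exact hmono _ _ _ (by positivity) (min_le_right _ _) H'
    · exact hmono _ _ _ (by positivity) (min_le_left _ _) (H b hb)

theorem pair_near {A B : Set X} (hA : IsCompact A) (hB : IsCompact B) {ρ : ℝ} (hρ : 0 < ρ) :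
    ∃ δ > 0, ∀ u ∈ A, ∀ v ∈ B, dist u v < δ → ∃ p ∈ A ∩ B, dist u p < ρ ∧ dist v p < ρ := by
  let Z : Set (X × X) := (A ×ˢ B) ∩ ⋂ p ∈ A ∩ B, {z | ρ ≤ dist z.1 p ∨ ρ ≤ dist z.2 p}
  have hZ : IsCompact Z := by
    apply (hA.prod hB).inter_right
    refine isClosed_biInter fun p _ => ?_
    have c1 : Continuous fun z : X × X => dist z.1 p := by fun_prop
    have c2 : Continuous fun z : X × X => dist z.2 p := by fun_prop
    exact (isClosed_le continuous_const c1).union (isClosed_le continuous_const c2)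
  have hnot : ∀ u ∈ A, ∀ v ∈ B, (u, v) ∉ Z → ∃ p ∈ A ∩ B, dist u p < ρ ∧ dist v p < ρ := by
    intro u hu v hv h
    by_contra hcon
    push Not at hcon
    apply h
    refine ⟨⟨hu, hv⟩, Set.mem_iInter₂.2 fun p hp => ?_⟩
    rcases lt_or_ge (dist u p) ρ with h1 | h1
    · exact Or.inr (hcon p hp h1)
    · exact Or.inl h1
  rcases Set.eq_empty_or_nonempty Z with h | h
  · exact ⟨1, one_pos, fun u hu v hv _ => hnot u hu v hv (by rw [h]; simp)⟩
  · obtain ⟨z, hz, hmin⟩ := hZ.exists_isMinOn h (f := fun z => dist z.1 z.2) (by fun_prop)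
    refine ⟨dist z.1 z.2, ?_, fun u hu v hv hd => hnot u hu v hv fun hmem => ?_⟩
    · rw [gt_iff_lt, dist_pos]
      intro heq
      have h1 := Set.mem_iInter₂.1 hz.2 z.1 ⟨hz.1.1, heq ▸ hz.1.2⟩
      rcases h1 with h1 | h1
      · rw [dist_self] at h1; linarith
      · rw [heq, dist_self] at h1; linarith
    · have := hmin hmem
      simp only [Set.mem_ofPred_eq] at this
      linarith

theorem arc_lc {A : Set X} (h : IsArc A) {ε : ℝ} (hε : 0 < ε) :
    ∃ ρ > 0, ∀ u ∈ A, ∀ v ∈ A, dist u v < ρ →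
    ∃ S : Set X, IsClosed S ∧ IsPreconnected S ∧ u ∈ S ∧ v ∈ S ∧ S ⊆ Metric.closedBall u ε := by
  obtain ⟨e⟩ := h
  have : CompactSpace A := e.symm.compactSpace
  obtain ⟨η, hη, H1⟩ := Metric.uniformContinuous_iff.1
    (CompactSpace.uniformContinuous_of_continuous e.symm.continuous) ε hε
  obtain ⟨ρ, hρ, H2⟩ := Metric.uniformContinuous_iff.1
    (CompactSpace.uniformContinuous_of_continuous e.continuous) η hη
  refine ⟨ρ, hρ, fun u hu v hv huv => ?_⟩
  have hd := H2 (a := ⟨u, hu⟩) (b := ⟨v, hv⟩) huv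
  have hc : Continuous (fun t => (e.symm t : X)) := continuous_subtype_val.comp e.symm.continuous
  refine ⟨(fun t => (e.symm t : X)) '' Set.uIcc (e ⟨u, hu⟩) (e ⟨v, hv⟩), ?_, ?_, ?_, ?_, ?_⟩
  · exact (isClosed_Icc.isCompact.image hc).isClosed
  · exact isPreconnected_uIcc.image _ hc.continuousOn
  · exact ⟨_, Set.left_mem_uIcc, by simp⟩
  · exact ⟨_, Set.right_mem_uIcc, by simp⟩
  · rintro _ ⟨t, ht, rfl⟩
    have h1 : dist t (e ⟨u, hu⟩) < η := by
      refine lt_of_le_of_lt ?_ hd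
      rw [Subtype.dist_eq, Subtype.dist_eq, dist_comm]
      apply Real.dist_left_le_of_mem_uIcc
      rw [Set.mem_uIcc] at ht ⊢
      exact ht
    have h2 := H1 h1
    rw [Homeomorph.symm_apply_apply] at h2
    exact Metric.mem_closedBall.2 h2.le

theorem tree_lc (𝒜 : Finset (Set X)) (hA : ∀ A ∈ 𝒜, IsArc A) (hun : ⋃₀ (𝒜 : Set (Set X)) = Set.univ) :
    ∀ ε > 0, ∃ δ > 0, ∀ u v : X, dist u v < δ →
    ∃ S : Set X, IsClosed S ∧ IsPreconnected S ∧ u ∈ S ∧ v ∈ S ∧ S ⊆ Metric.closedBall u ε := by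
  intro ε hε
  obtain ⟨ρ, hρ, Hρ⟩ := finset_delta 𝒜 (fun A ρ => ∀ u ∈ A, ∀ v ∈ A, dist u v < ρ →
    ∃ S : Set X, IsClosed S ∧ IsPreconnected S ∧ u ∈ S ∧ v ∈ S ∧ S ⊆ Metric.closedBall u (ε/2))
    (fun A δ δ' _ hle H u hu v hv hd => H u hu v hv (hd.trans_le hle)) (fun A hAA => arc_lc (hA A hAA) (by positivity))
  have hcomp : ∀ A ∈ 𝒜, IsCompact A := fun A h => by
    obtain ⟨γ, hγ⟩ := arc_param (hA A h); exact par_compact hγ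
  obtain ⟨δ, hδ, Hδ⟩ := finset_delta (𝒜 ×ˢ 𝒜) (fun z δ => ∀ u ∈ z.1, ∀ v ∈ z.2, dist u v < δ →
    ∃ p ∈ z.1 ∩ z.2, dist u p < min ρ (ε/2) ∧ dist v p < min ρ (ε/2))
    (fun A δ δ' _ hle H u hu v hv hd => H u hu v hv (hd.trans_le hle))
    (fun z hz => pair_near (hcomp _ (Finset.mem_product.1 hz).1) (hcomp _ (Finset.mem_product.1 hz).2) (by positivity))
  refine ⟨δ, hδ, fun u v huv => ?_⟩
  have hex : ∀ w : X, ∃ A ∈ 𝒜, w ∈ A := fun w => by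
    have : w ∈ ⋃₀ (𝒜 : Set (Set X)) := hun ▸ Set.mem_univ w
    obtain ⟨A, hA, hw⟩ := this
    exact ⟨A, hA, hw⟩
  obtain ⟨A, hAA, huA⟩ := hex u
  obtain ⟨B, hBB, hvB⟩ := hex v
  obtain ⟨p, hp, h1, h2⟩ := Hδ (A, B) (Finset.mem_product.2 ⟨hAA, hBB⟩) u huA v hvB huv
  obtain ⟨S, a1, a2, a3, a4, a5⟩ := Hρ A hAA u huA p hp.1 (h1.trans_le (min_le_left _ _))
  obtain ⟨S', b1, b2, b3, b4, b5⟩ := Hρ B hBB p hp.2 v hvB (by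
    rw [dist_comm]; exact h2.trans_le (min_le_left _ _))
  refine ⟨S ∪ S', a1.union b1, a2.union p a4 b3 b2, Or.inl a3, Or.inr b4, ?_⟩
  rintro w (hw | hw)
  · have := a5 hw
    rw [Metric.mem_closedBall] at this ⊢
    linarith
  · have := b5 hw
    rw [Metric.mem_closedBall] at this ⊢
    have h3 := h1.trans_le (min_le_right _ _)
    rw [dist_comm] at h3
    have := dist_triangle w p u
    linarith

theorem tree_good (hconn : ConnectedSpace X) (𝒜 : Finset (Set X)) (hA : ∀ A ∈ 𝒜, IsArc A)
    (hun : ⋃₀ (𝒜 : Set (Set X)) = Set.univ)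
    (hend : ∀ A ∈ 𝒜, ∀ B ∈ 𝒜, A ≠ B → ∀ p ∈ A ∩ B, IsArcEndpoint A p ∧ IsArcEndpoint B p)
    (hscc : ∀ S : Set X, ¬ IsSimpleClosedCurve S) : Good (Set.univ : Set X) := by
  classical
  have hcl : ∀ A ∈ 𝒜, IsClosed A := fun A h => by
    obtain ⟨γ, hγ⟩ := arc_param (hA A h); exact (par_compact hγ).isClosed
  have hex : ∀ w : X, ∃ A ∈ 𝒜, w ∈ A := fun w => by
    have : w ∈ ⋃₀ (𝒜 : Set (Set X)) := hun ▸ Set.mem_univ w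
    obtain ⟨A, hA, hw⟩ := this
    exact ⟨A, hA, hw⟩
  have hne : ∀ A ∈ 𝒜, A.Nonempty := fun A h => by
    obtain ⟨γ, hγ⟩ := arc_param (hA A h)
    rw [← hγ.2.2]; exact ⟨γ 0, 0, by simp, rfl⟩
  have main : ∀ n : ℕ, ∃ ℬ ⊆ 𝒜, ℬ.Nonempty ∧ Good (⋃₀ (ℬ : Set (Set X))) ∧ (n ≤ ℬ.card ∨ ℬ = 𝒜) := by
    intro n
    induction n with
    | zero =>
      obtain ⟨w⟩ := hconn.toNonempty
      obtain ⟨A, hAA, _⟩ := hex w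
      obtain ⟨γ, hγ⟩ := arc_param (hA A hAA)
      exact ⟨{A}, by simpa using hAA, by simp, by simpa using good_arc hγ, Or.inl (by simp)⟩
    | succ n ih =>
      obtain ⟨ℬ, hsub, hBne, hgood, hor⟩ := ih
      by_cases hBA : ℬ = 𝒜
      · exact ⟨ℬ, hsub, hBne, hgood, Or.inr hBA⟩
      have hcard := hor.resolve_right hBA
      have hdne : (𝒜 \ ℬ).Nonempty := by
        rw [Finset.sdiff_nonempty]
        exact fun h => hBA (Finset.Subset.antisymm hsub h)
      set T : Set X := ⋃₀ (ℬ : Set (Set X)) with hT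
      have hT' : IsClosed (⋃₀ ((𝒜 \ ℬ : Finset (Set X)) : Set (Set X))) := by
        rw [Set.sUnion_eq_biUnion]
        refine (Finset.finite_toSet _).isClosed_biUnion ?_
        intro A hAA
        exact hcl A (Finset.mem_sdiff.1 (Finset.mem_coe.1 hAA)).1
      obtain ⟨p, _, hpT, A, hAA, hpA⟩ := isPreconnected_closed_iff.1 (isPreconnected_univ (α := X)) T _ hgood.closed hT'
        (by
          intro w _
          obtain ⟨A, hAA, hw⟩ := hex w
          by_cases hAB : A ∈ ℬ
          · exact Or.inl ⟨A, hAB, hw⟩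
          · exact Or.inr ⟨A, Finset.mem_coe.2 (Finset.mem_sdiff.2 ⟨hAA, hAB⟩), hw⟩)
        (by
          obtain ⟨B, hB⟩ := hBne
          obtain ⟨w, hw⟩ := hne B (hsub hB)
          exact ⟨w, trivial, B, hB, hw⟩)
        (by
          obtain ⟨B, hB⟩ := hdne
          obtain ⟨w, hw⟩ := hne B (Finset.mem_sdiff.1 hB).1
          exact ⟨w, trivial, B, hB, hw⟩)
      obtain ⟨hAA, hAB⟩ := Finset.mem_sdiff.1 (Finset.mem_coe.1 hAA)
      obtain ⟨γ, hγ⟩ := arc_param (hA A hAA)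
      have hTend : ∀ t ∈ Set.Icc (0:ℝ) 1, γ t ∈ T → t = 0 ∨ t = 1 := by
        rintro t ht ⟨B, hB, hmem⟩
        have hne : A ≠ B := by rintro rfl; exact hAB hB
        have hmA : γ t ∈ A := hγ.2.2 ▸ ⟨t, ht, rfl⟩
        exact par_endpoint hγ ht (hend A hAA B (hsub hB) hne _ ⟨hmA, hmem⟩).1
      have hnot : ¬ (γ 0 ∈ T ∧ γ 1 ∈ T) := by
        rintro ⟨h0, h1⟩
        have hne : γ 0 ≠ γ 1 := fun h => by
          have := hγ.2.1 (by simp) (by simp) h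
          norm_num at this
        obtain ⟨α, a, b, c, d, e⟩ := hgood.path _ h0 _ h1 hne
        have hmap : MapsTo (fun t : ℝ => 1 - t) (Set.Icc 0 1) (Set.Icc 0 1) := by
          rintro t ⟨h1, h2⟩; constructor <;> linarith
        have hβc : ContinuousOn (fun t : ℝ => γ (1 - t)) (Set.Icc 0 1) := hγ.1.comp (by fun_prop) hmap
        obtain ⟨S, hS⟩ := loop_scc (γ := cat α (fun t => γ (1 - t)))
          (cat_cont a hβc (by simpa using d))
          (by
            refine cat_inj b (Set.Ioo 0 1) ?_ ?_ _ (fun t ht => ht.1) ?_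
            · intro s hs t ht hst
              have := hγ.2.1 (hmap (Set.Ioo_subset_Icc_self hs)) (hmap (Set.Ioo_subset_Icc_self ht)) hst
              simp only at this
              linarith
            · intro s hs t ht hst
              have h3 : γ (1 - t) ∈ T := by
                have := e s hs
                rw [hst] at this
                exact this
              rcases hTend _ (hmap (Set.Ioo_subset_Icc_self ht)) h3 with h | h
              · simp only at h; linarith [ht.2]
              · simp only at h; linarith [ht.1]
            · intro t ht ht'
              exact ⟨by linarith, by linarith [ht.2]⟩)
          (by norm_num [cat, c])
        exact hscc S hS
      have hTA : T ∩ A = {p} := by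
        rw [← hγ.2.2] at hpA
        obtain ⟨t, ht, rfl⟩ := hpA
        ext q
        constructor
        · rintro ⟨hqT, hqA⟩
          rw [← hγ.2.2] at hqA
          obtain ⟨t', ht', rfl⟩ := hqA
          rcases hTend t ht hpT with h | h <;> rcases hTend t' ht' hqT with h' | h' <;> subst h <;> subst h'
          · rfl
          · exact (hnot ⟨hpT, hqT⟩).elim
          · exact (hnot ⟨hqT, hpT⟩).elim
          · rfl
        · rintro rfl
          exact ⟨hpT, hγ.2.2 ▸ ⟨t, ht, rfl⟩⟩
      refine ⟨insert A ℬ, Finset.insert_subset hAA hsub, by simp, ?_, Or.inl ?_⟩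
      · rw [Finset.coe_insert, Set.sUnion_insert, Set.union_comm]
        exact good_wedge hgood (good_arc hγ) hTA
      · rw [Finset.card_insert_of_notMem hAB]; omega
  obtain ⟨ℬ, hsub, _, hgood, hor⟩ := main (𝒜.card + 1)
  rcases hor with h | h
  · have := Finset.card_le_card hsub
    omega
  · subst h; rwa [hun] at hgood

theorem tree_treelike (hX : IsTree X) : TreeLike X := by
  obtain ⟨h1, h2, ⟨𝒜, hA, hun, hend⟩, hscc⟩ := hX
  have hg := tree_good h2 𝒜 hA hun hend hscc
  exact ⟨h1, inferInstance, tree_lc 𝒜 hA hun, fun C D _ _ hC hD =>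
    hg.uni C D (Set.subset_univ _) (Set.subset_univ _) hC hD⟩

theorem tree_P3 (hX : IsTree X) : ∃ L : ℕ, ∀ K : Set X, K.Nonempty →
    ∀ v : ℕ → X, ∃ i j, i < j ∧ j ≤ L ∧ (v i ∈ dn K (v j) ∨ v j ∈ dn K (v i)) := by
  classical
  have hTL := tree_treelike hX
  obtain ⟨h1, h2, ⟨𝒜, hA, hun, hend⟩, hscc⟩ := hX
  refine ⟨2 * 𝒜.card, fun K hK v => ?_⟩
  have hex : ∀ w : X, ∃ A ∈ 𝒜, w ∈ A := fun w => by
    have : w ∈ ⋃₀ (𝒜 : Set (Set X)) := hun ▸ Set.mem_univ w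
    obtain ⟨A, hA, hw⟩ := this
    exact ⟨A, hA, hw⟩
  choose Af hAf hmem using hex
  obtain ⟨A, hAA, hcard⟩ := Finset.exists_lt_card_fiber_of_mul_lt_card_of_maps_to
    (s := Finset.range (2 * 𝒜.card + 1)) (t := 𝒜) (f := fun i => Af (v i)) (n := 2)
    (fun i _ => hAf _) (by rw [Finset.card_range]; omega)
  obtain ⟨a, ha, b, hb, c, hc, hab, hac, hbc⟩ := Finset.two_lt_card.1 hcard
  obtain ⟨γ, hγ⟩ := arc_param (hA A hAA)
  have hpar : ∀ i ∈ (Finset.range (2 * 𝒜.card + 1)).filter (fun i => Af (v i) = A),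
      i ≤ 2 * 𝒜.card ∧ ∃ t ∈ Set.Icc (0:ℝ) 1, γ t = v i := by
    intro i hi
    rw [Finset.mem_filter, Finset.mem_range] at hi
    refine ⟨by omega, ?_⟩
    have h3 : v i ∈ A := hi.2 ▸ hmem (v i)
    rw [← hγ.2.2] at h3
    exact h3
  have hcomp : ∀ i j, i ≠ j → i ≤ 2 * 𝒜.card → j ≤ 2 * 𝒜.card → v i ∈ dn K (v j) →
      ∃ i j, i < j ∧ j ≤ 2 * 𝒜.card ∧ (v i ∈ dn K (v j) ∨ v j ∈ dn K (v i)) := by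
    intro i j hij hi hj h
    rcases Nat.lt_or_gt_of_ne hij with h' | h'
    · exact ⟨i, j, h', hj, Or.inl h⟩
    · exact ⟨j, i, h', hi, Or.inr h⟩
  obtain ⟨ha, s, hs, hsa⟩ := hpar a ha
  obtain ⟨hb, t, ht, htb⟩ := hpar b hb
  obtain ⟨hc, r, hr, hrc⟩ := hpar c hc
  have key : ∀ i j k : ℕ, ∀ s t r : ℝ, i ≠ j → j ≠ k → i ≤ 2 * 𝒜.card → j ≤ 2 * 𝒜.card → k ≤ 2 * 𝒜.card →
      0 ≤ s → s ≤ t → t ≤ r → r ≤ 1 → γ s = v i → γ t = v j → γ r = v k →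
      ∃ i j, i < j ∧ j ≤ 2 * 𝒜.card ∧ (v i ∈ dn K (v j) ∨ v j ∈ dn K (v i)) := by
    intro i j k s t r hij hjk hi hj hk h0 hst htr hr1 e1 e2 e3
    have hb : v j ∈ dn {v i} (v k) := by
      intro C hC1 hC2 hC3 hC4
      have hCA := hTL.uni C A hC1 (par_compact hγ).isClosed hC2 (par_conn hγ)
      have hm : ∀ q, 0 ≤ q → q ≤ 1 → γ q ∈ A := fun q h1 h2 => hγ.2.2 ▸ ⟨q, ⟨h1, h2⟩, rfl⟩
      have := par_ord hγ Set.inter_subset_right hCA h0 hst htr hr1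
        ⟨by rw [e1]; exact hC3 rfl, hm _ h0 (by linarith)⟩ ⟨by rw [e3]; exact hC4, hm _ (by linarith) hr1⟩
      rw [← e2]; exact this.1
    rcases dn_between hTL hK hb with h | h
    · exact hcomp j i hij.symm hj hi h
    · exact hcomp j k hjk hj hk h
  rcases le_total s t with h3 | h3 <;> rcases le_total t r with h4 | h4 <;> rcases le_total s r with h5 | h5
  · exact key a b c s t r hab hbc ha hb hc hs.1 h3 h4 hr.2 hsa htb hrc
  · exact key a b c s t r hab hbc ha hb hc hs.1 h3 h4 hr.2 hsa htb hrc
  · exact key a c b s r t hac hbc.symm ha hc hb hs.1 h5 h4 ht.2 hsa hrc htb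
  · exact key c a b r s t hac.symm hab hc ha hb hr.1 h5 h3 ht.2 hrc hsa htb
  · exact key b a c t s r hab.symm hac hb ha hc ht.1 h3 h5 hr.2 htb hsa hrc
  · exact key b c a t r s hbc hac.symm hb hc ha ht.1 h4 h5 hs.2 htb hrc hsa
  · exact key c b a r t s hbc.symm hab.symm hc hb ha hr.1 h4 h3 hs.2 hrc htb hsa
  · exact key c b a r t s hbc.symm hab.symm hc hb ha hr.1 h4 h3 hs.2 hrc htb hsa

end assemble

/-- For a zero entropy tree map, a non-periodic chain recurrent point `x`
whose ω-limit set is contained in the orbit of a periodic arc `I` belongs to that orbit. -/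
theorem chainRecurrent_mem_arcOrbit {X : Type*} [MetricSpace X] (hX : IsTree X)
    (f : X → X) (hf : Continuous f) (h0 : topEntropy f = 0)
    {x : X} (hx : x ∈ chainRecurrentSet f) (hxp : x ∉ Function.periodicPts f)
    {I : Set X} {s : ℕ} (hI : IsPeriodicArc f I s)
    (hω : omegaLimitSet f x ⊆ arcOrbit f I s) :
    x ∈ arcOrbit f I s := by
  obtain ⟨L, hL⟩ := tree_P3 hX
  exact main_of_treelike (tree_treelike hX) L hL f hf h0 hx hI hω
end
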